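/- arXiv:1603.00354 — 2 statements merged into one kernel-verified Lean document; each statement's English description precedes it below -/
import Mathlib

section
/- Let p > 1 and let q ≤ 0 be continuous and single-barrier on [0,1]. If λ_n / λ_m = n^p / m^p for two different indices n > m with λ_n > λ_m ≥ -2 min{q(0), q(1)}, then q ≡ 0 on (0,1). -/
/-- λ is a Dirichlet eigenvalue of -((y')^{(p-1)})' = (p-1)(λ - q) y^{(p-1)} on [a,b]. -/
def IsDirichletEigenvalue (p : ℝ) (q : ℝ → ℝ) (a b lam : ℝ) : Prop :=
  ∃ y yd : ℝ → ℝ,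
    (∃ x ∈ Set.Icc a b, y x ≠ 0) ∧
    (∀ x ∈ Set.Icc a b, HasDerivAt y (yd x) x) ∧
    (∀ x ∈ Set.Icc a b, HasDerivAt (fun t => |yd t| ^ (p - 2) * yd t)
      (-(p - 1) * (lam - q x) * (|y x| ^ (p - 2) * y x)) x) ∧
    y a = 0 ∧ y b = 0

/-!
Write `z = λ^{1/p}` and `w = -q ≥ 0`. The Prüfer angle of a solution satisfies
`φ' = z + z^{1-p} w F(φ)`, where `F = |S|^p` has period `P`, half the period of the generalized sine
`S`, and `φ(0) = 0`, `φ(1) = j P` for the `j`-th eigenfunction. Reflecting the part of the interval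
to the right of the barrier top `x₀` turns this into `φ(x₀) + ψ(1 - x₀) = j P`, where `φ` and `ψ`
are started at the two ends, in directions in which `w` decreases.

With `z = e^s`, the rescaled angle `e^{-s} φ_s(x)` has `s`-derivative `-p e^{-ps}` times an integral
of `w (F(φ) - φ f(φ))`, `f = F' / p`, against a positive integrating factor. In the variable
`u = φ(x)` the integrand becomes a weight times `F(u) - u f(u)`, which is negative only where
`u` is shortly past a multiple of `P`. Since `w` decreases and `w ≤ λ`, the weights there are beaten
by those at the points reflected in that multiple, so the integral is nonnegative. Hence
`j / λ_j^{1/p}` decreases in `j`, strictly unless `q` vanishes.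
-/

namespace HalfLinear

open Set Filter Topology MeasureTheory
open scoped NNReal BoundedContinuousFunction

/-! ### Odd powers -/

section OddPow

variable {p r t : ℝ}

/-- The odd power `|t| ^ (p - 2) * t = sign t * |t| ^ (p - 1)`, written `t^{(p-1)}` in the
literature on half-linear equations. -/
noncomputable def oddPow (p t : ℝ) : ℝ := |t| ^ (p - 2) * t

@[simp]
lemma oddPow_zero (p : ℝ) : oddPow p 0 = 0 := by simp [oddPow]

@[simp]
lemma oddPow_neg (p t : ℝ) : oddPow p (-t) = -oddPow p t := by simp [oddPow]

lemma oddPow_mul (p a b : ℝ) : oddPow p (a * b) = oddPow p a * oddPow p b := by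
  simp only [oddPow, abs_mul, Real.mul_rpow (abs_nonneg a) (abs_nonneg b)]
  ring

lemma oddPow_of_pos (ht : 0 < t) : oddPow p t = t ^ (p - 1) := by
  rw [oddPow, abs_of_pos ht, ← Real.rpow_add_one ht.ne']
  ring_nf

lemma oddPow_pos (ht : 0 < t) : 0 < oddPow p t := by
  rw [oddPow_of_pos ht]
  positivity

lemma oddPow_ne_zero (ht : t ≠ 0) : oddPow p t ≠ 0 :=
  mul_ne_zero (Real.rpow_pos_of_pos (abs_pos.2 ht) _).ne' ht

lemma abs_oddPow (hp : 1 < p) (t : ℝ) : |oddPow p t| = |t| ^ (p - 1) := by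
  rcases eq_or_ne t 0 with rfl | ht
  · simp [Real.zero_rpow (sub_pos.2 hp).ne']
  · have h : 0 < |t| := abs_pos.2 ht
    rw [oddPow, abs_mul, abs_of_pos (Real.rpow_pos_of_pos h _), ← Real.rpow_add_one h.ne']
    ring_nf

lemma oddPow_mul_self (hp : p ≠ 0) (t : ℝ) : oddPow p t * t = |t| ^ p := by
  rcases eq_or_ne t 0 with rfl | ht
  · simp [Real.zero_rpow hp]
  · rw [oddPow, mul_assoc, ← abs_mul_abs_self t, ← sq, ← Real.rpow_natCast,
      ← Real.rpow_add (abs_pos.2 ht)]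
    norm_num

lemma oddPow_oddPow (h : p.HolderConjugate r) (t : ℝ) : oddPow r (oddPow p t) = t := by
  rcases eq_or_ne t 0 with rfl | ht
  · simp
  · rw [oddPow, abs_oddPow h.lt, oddPow, ← Real.rpow_mul (abs_nonneg t), ← mul_assoc,
      ← Real.rpow_add (abs_pos.2 ht), show (p - 1) * (r - 2) + (p - 2) = 0 by
        linear_combination h.mul_eq_add, Real.rpow_zero, one_mul]

lemma abs_oddPow_rpow (h : p.HolderConjugate r) (t : ℝ) : |oddPow p t| ^ r = |t| ^ p := by
  rw [abs_oddPow h.lt, ← Real.rpow_mul (abs_nonneg t), h.sub_one_mul_conj]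

lemma strictMono_oddPow (hp : 1 < p) : StrictMono (oddPow p) := by
  refine strictMono_of_odd_strictMonoOn_nonneg (oddPow_neg p) fun a ha b _ hab => ?_
  rcases (mem_Ici.1 ha).eq_or_lt with rfl | ha
  · simpa using oddPow_pos hab
  · rw [oddPow_of_pos ha, oddPow_of_pos (ha.trans hab)]
    exact Real.rpow_lt_rpow ha.le hab (sub_pos.2 hp)

lemma oddPow_nonneg (ht : 0 ≤ t) : 0 ≤ oddPow p t :=
  mul_nonneg (Real.rpow_nonneg (abs_nonneg t) _) ht

lemma hasDerivAt_abs_rpow_oddPow (hp : 1 < p) (t : ℝ) :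
    HasDerivAt (fun x : ℝ => |x| ^ p) (p * oddPow p t) t := by
  simpa [oddPow, mul_assoc] using hasDerivAt_abs_rpow t hp

lemma continuous_oddPow (hp : 1 < p) : Continuous (oddPow p) := by
  have hderiv : deriv (fun x : ℝ => ‖x‖ ^ p) = fun t => p * oddPow p t :=
    funext fun t => (hasDerivAt_abs_rpow_oddPow hp t).deriv
  have hcont := (contDiff_norm_rpow (E := ℝ) hp).continuous_deriv le_rfl
  rw [hderiv] at hcont
  simpa only [inv_mul_cancel_left₀ (zero_lt_one.trans hp).ne'] using hcont.const_mul p⁻¹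

lemma hasDerivAt_oddPow (p : ℝ) (ht : t ≠ 0) :
    HasDerivAt (oddPow p) ((p - 1) * |t| ^ (p - 2)) t := by
  have hpos : ∀ {s : ℝ}, 0 < s → HasDerivAt (oddPow p) ((p - 1) * |s| ^ (p - 2)) s := by
    intro s hs
    have h := Real.hasDerivAt_rpow_const (x := s) (p := p - 1) (Or.inl hs.ne')
    rw [abs_of_pos hs, show p - 2 = p - 1 - 1 by ring]
    refine h.congr_of_eventuallyEq ?_
    filter_upwards [lt_mem_nhds hs] with x hx using oddPow_of_pos hx
  rcases ht.lt_or_gt with ht | ht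
  · have h := ((hpos (neg_pos.2 ht)).scomp t (hasDerivAt_neg t)).neg
    refine (h.congr_deriv (by simp)).congr_of_eventuallyEq (Eventually.of_forall fun x => ?_)
    simp
  · exact hpos ht

end OddPow

/-! ### The generalized sine -/

/-- The generalized sine function of the exponent `p`: the solution `S` of
`-((S')^{(p-1)})' = (p - 1) S^{(p-1)}` with `S 0 = 0` and `S' 0 = 1`, together with its derivative
`C` and its half-period `P`, denoted `π_p` in the literature. -/
structure GenSine (p : ℝ) where
  S : ℝ → ℝ
  C : ℝ → ℝ
  P : ℝ
  one_lt : 1 < p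
  P_pos : 0 < P
  hasDerivAt_S : ∀ x, HasDerivAt S (C x) x
  hasDerivAt_oddPow_C : ∀ x, HasDerivAt (fun t => oddPow p (C t)) (-(p - 1) * oddPow p (S x)) x
  pythagoras : ∀ x, |S x| ^ p + |C x| ^ p = 1
  S_antiperiodic : Function.Antiperiodic S P
  C_antiperiodic : Function.Antiperiodic C P
  S_odd : Function.Odd S
  C_even : Function.Even C
  S_pos : ∀ x, 0 < x → x < P → 0 < S x

/-- The inverse of a primitive of `m`, as a solution of `α' = 1 / m ∘ α`. -/
lemma exists_angle_reparametrization {m : ℝ → ℝ} {c : ℝ} (hc : 0 < c) (hm : Continuous m)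
    (hpos : ∀ x, 0 < m x) (hper : Function.Periodic m c) (heven : Function.Even m) :
    ∃ (α : ℝ → ℝ) (P : ℝ), 0 < P ∧ (∀ x, HasDerivAt α (m (α x))⁻¹ x) ∧ StrictMono α ∧
      Function.Odd α ∧ ∀ x, α (x + P) = α x + c := by
  let h : ℝ → ℝ := fun a => ∫ t in (0 : ℝ)..a, m t
  have hI : ∀ a b, IntervalIntegrable m volume a b := fun a b => hm.intervalIntegrable a b
  have hderiv : ∀ a, HasDerivAt h (m a) a := fun a => (hm.integral_hasStrictDerivAt 0 a).hasDerivAt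
  have hmono : StrictMono h := strictMono_of_deriv_pos fun a => by
    rw [(hderiv a).deriv]
    exact hpos a
  have hodd : ∀ a, h (-a) = -h a := fun a => by
    have := intervalIntegral.integral_comp_neg (a := 0) (b := a) m
    simp only [heven.eq, neg_zero] at this
    simp only [h]
    rw [intervalIntegral.integral_symm, ← this]
  have hadd : ∀ a, h (a + c) = h a + h c := fun a => by
    have := hper.intervalIntegral_add_eq a 0
    rw [zero_add] at this
    simp only [h]
    rw [← this, intervalIntegral.integral_add_adjacent_intervals (hI _ _) (hI _ _)]
  have hsurj : Function.Surjective h := by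
    refine (continuous_iff_continuousAt.2 fun a => (hderiv a).continuousAt).surjective
      (hper.tendsto_atTop_intervalIntegral_of_pos' (hI 0 c) hpos hc)
      (hper.tendsto_atBot_intervalIntegral_of_pos' (hI 0 c) hpos hc)
  let e := hmono.orderIsoOfSurjective h hsurj
  have he : ∀ x, h (e.symm x) = x := e.apply_symm_apply
  refine ⟨e.symm, h c, ?_, fun x => ?_, e.symm.strictMono, fun x => ?_, fun x => ?_⟩
  · simpa [h] using hmono hc
  · exact HasDerivAt.of_local_left_inverse e.symm.continuous.continuousAt (hderiv _) (hpos _).ne'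
      (Eventually.of_forall he)
  · exact hmono.injective (by rw [he, hodd, he])
  · exact hmono.injective (by rw [he, hadd, he])

namespace GenSine

/-! ### Construction of the generalized sine

The curve `|s| ^ p + |d| ^ r = 1`, with `r` the conjugate exponent and `d = (S')^{(p-1)}`, is
parametrized by its polar angle; the generalized sine runs through it with speed `1 / speed`. -/

section Construction

variable {p r : ℝ}

/-- The value of `|s| ^ p + |d| ^ r` at the point of the unit circle at angle `a`. -/
noncomputable def radius (p r a : ℝ) : ℝ := |Real.sin a| ^ p + |Real.cos a| ^ r

/-- The generalized arc length per unit of polar angle. -/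
noncomputable def speed (p r a : ℝ) : ℝ :=
  (radius p r a)⁻¹ * (Real.cos a ^ 2 + (r - 1) * Real.sin a ^ 2)

/-- The sine coordinate of the curve `|s| ^ p + |d| ^ r = 1` at polar angle `a`. -/
noncomputable def curveSin (p r a : ℝ) : ℝ := Real.sin a * radius p r a ^ (-p⁻¹)

/-- The coordinate of the curve `|s| ^ p + |d| ^ r = 1` dual to `curveSin` at polar angle `a`. -/
noncomputable def curveCos (p r a : ℝ) : ℝ := Real.cos a * radius p r a ^ (-r⁻¹)

lemma radius_pos (p r a : ℝ) : 0 < radius p r a := by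
  rcases eq_or_ne (Real.sin a) 0 with hs | hs
  · have hc : Real.cos a ≠ 0 := fun hc => by simpa [hs, hc] using Real.sin_sq_add_cos_sq a
    exact add_pos_of_nonneg_of_pos (by positivity) (Real.rpow_pos_of_pos (abs_pos.2 hc) r)
  · exact add_pos_of_pos_of_nonneg (Real.rpow_pos_of_pos (abs_pos.2 hs) p) (by positivity)

lemma radius_periodic (p r : ℝ) : Function.Periodic (radius p r) Real.pi := fun a => by
  simp [radius]

lemma radius_even (p r : ℝ) : Function.Even (radius p r) := fun a => by simp [radius]

lemma radius_eq (h : p.HolderConjugate r) (a : ℝ) :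
    radius p r a =
      oddPow p (Real.sin a) * Real.sin a + oddPow r (Real.cos a) * Real.cos a := by
  rw [oddPow_mul_self h.ne_zero, oddPow_mul_self h.symm.ne_zero, radius]

lemma hasDerivAt_radius (h : p.HolderConjugate r) (a : ℝ) :
    HasDerivAt (radius p r) (p * oddPow p (Real.sin a) * Real.cos a +
      r * oddPow r (Real.cos a) * (-Real.sin a)) a :=
  ((hasDerivAt_abs_rpow_oddPow h.lt _).comp a (Real.hasDerivAt_sin a)).add
    ((hasDerivAt_abs_rpow_oddPow h.symm.lt _).comp a (Real.hasDerivAt_cos a))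

lemma speed_pos (h : p.HolderConjugate r) (a : ℝ) : 0 < speed p r a := by
  refine mul_pos (inv_pos.2 (radius_pos p r a)) ?_
  have hr := h.symm.sub_one_pos
  rcases eq_or_ne (Real.sin a) 0 with hs | hs
  · have hc : Real.cos a ≠ 0 := fun hc => by simpa [hs, hc] using Real.sin_sq_add_cos_sq a
    positivity
  · positivity

lemma continuous_speed (h : p.HolderConjugate r) : Continuous (speed p r) := by
  have hN : Continuous (radius p r) :=
    continuous_iff_continuousAt.2 fun a => (hasDerivAt_radius h a).continuousAt
  exact (hN.inv₀ fun a => (radius_pos p r a).ne').mul (by fun_prop)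

lemma speed_periodic (p r : ℝ) : Function.Periodic (speed p r) Real.pi := fun a => by
  simp [speed, radius_periodic p r a]

lemma speed_even (p r : ℝ) : Function.Even (speed p r) := fun a => by
  simp [speed, radius_even p r a]

lemma oddPow_curveSin (h : p.HolderConjugate r) (a : ℝ) :
    oddPow p (curveSin p r a) = oddPow p (Real.sin a) * radius p r a ^ (-r⁻¹) := by
  have hN := radius_pos p r a
  rw [curveSin, oddPow_mul, oddPow_of_pos (Real.rpow_pos_of_pos hN _), ← Real.rpow_mul hN.le,
    show -p⁻¹ * (p - 1) = p⁻¹ - 1 by field [h.ne_zero], h.inv_sub_one]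

lemma oddPow_curveCos (h : p.HolderConjugate r) (a : ℝ) :
    oddPow r (curveCos p r a) = oddPow r (Real.cos a) * radius p r a ^ (-p⁻¹) := by
  have hN := radius_pos p r a
  rw [curveCos, oddPow_mul, oddPow_of_pos (Real.rpow_pos_of_pos hN _), ← Real.rpow_mul hN.le,
    show -r⁻¹ * (r - 1) = r⁻¹ - 1 by field [h.symm.ne_zero], h.symm.inv_sub_one]

lemma hasDerivAt_curveSin (h : p.HolderConjugate r) (a : ℝ) :
    HasDerivAt (curveSin p r) (oddPow r (curveCos p r a) * speed p r a) a := by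
  have hN := (radius_pos p r a).ne'
  refine ((Real.hasDerivAt_sin a).mul
    ((hasDerivAt_radius h a).rpow_const (p := -p⁻¹) (Or.inl hN))).congr_deriv ?_
  have hp := h.ne_zero
  rw [oddPow_curveCos h, Real.rpow_sub_one hN, speed]
  field_simp
  linear_combination (radius p r a ^ (-(1 / p)) * Real.cos a * p) * radius_eq h a -
    (radius p r a ^ (-(1 / p)) * Real.sin a ^ 2 * oddPow r (Real.cos a)) * h.symm.sub_one_mul_conj

lemma hasDerivAt_curveCos (h : p.HolderConjugate r) (a : ℝ) :
    HasDerivAt (curveCos p r) (-(p - 1) * oddPow p (curveSin p r a) * speed p r a) a := by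
  have hN := (radius_pos p r a).ne'
  refine ((Real.hasDerivAt_cos a).mul
    ((hasDerivAt_radius h a).rpow_const (p := -r⁻¹) (Or.inl hN))).congr_deriv ?_
  have hr := h.symm.ne_zero
  rw [oddPow_curveSin h, Real.rpow_sub_one hN, speed]
  field_simp
  linear_combination (-radius p r a ^ (-(1 / r)) * Real.sin a * r) * radius_eq h a +
    (radius p r a ^ (-(1 / r)) * oddPow p (Real.sin a)) *
      (Real.cos a ^ 2 * h.sub_one_mul_conj + r * Real.sin a ^ 2 * h.mul_eq_add)

lemma abs_curveSin_rpow_add_abs_curveCos_rpow (h : p.HolderConjugate r) (a : ℝ) :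
    |curveSin p r a| ^ p + |curveCos p r a| ^ r = 1 := by
  have hN := radius_pos p r a
  have hpow : ∀ {s : ℝ} (b : ℝ), s ≠ 0 →
      |b * radius p r a ^ (-s⁻¹)| ^ s = |b| ^ s * (radius p r a)⁻¹ := fun {s} b hs => by
    rw [abs_mul, abs_of_pos (Real.rpow_pos_of_pos hN _),
      Real.mul_rpow (abs_nonneg _) (by positivity), ← Real.rpow_mul hN.le,
      neg_mul, inv_mul_cancel₀ hs, Real.rpow_neg_one]
  rw [curveSin, curveCos, hpow _ h.ne_zero, hpow _ h.symm.ne_zero, ← add_mul]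
  exact mul_inv_cancel₀ hN.ne'

end Construction

protected lemma nonempty {p : ℝ} (hp : 1 < p) : Nonempty (GenSine p) := by
  obtain ⟨r, h⟩ : ∃ r, p.HolderConjugate r := ⟨_, .conjExponent hp⟩
  obtain ⟨α, P, hP, hα, hmono, hodd, hadd⟩ := exists_angle_reparametrization Real.pi_pos
    (continuous_speed h) (speed_pos h) (speed_periodic p r) (speed_even p r)
  have hα0 : α 0 = 0 := hodd.map_zero
  have hαP : α P = Real.pi := by simpa [hα0] using hadd 0
  have hv : ∀ x, speed p r (α x) ≠ 0 := fun x => (speed_pos h (α x)).ne'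
  refine ⟨{
    S := fun x => curveSin p r (α x)
    C := fun x => oddPow r (curveCos p r (α x))
    P := P
    one_lt := hp
    P_pos := hP
    hasDerivAt_S := fun x =>
      ((hasDerivAt_curveSin h (α x)).comp x (hα x)).congr_deriv (mul_inv_cancel_right₀ (hv x) _)
    hasDerivAt_oddPow_C := fun x => ?_
    pythagoras := fun x => ?_
    S_antiperiodic := fun x => by simp [curveSin, hadd, radius_periodic p r (α x)]
    C_antiperiodic := fun x => by simp [curveCos, hadd, radius_periodic p r (α x)]
    S_odd := fun x => by simp [curveSin, hodd x, radius_even p r (α x)]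
    C_even := fun x => by simp [curveCos, hodd x, radius_even p r (α x)]
    S_pos := fun x hx hxP => ?_ }⟩
  · simp only [oddPow_oddPow h.symm]
    exact ((hasDerivAt_curveCos h (α x)).comp x (hα x)).congr_deriv
      (mul_inv_cancel_right₀ (hv x) _)
  · rw [abs_oddPow_rpow h.symm, abs_curveSin_rpow_add_abs_curveCos_rpow h]
  · exact mul_pos (Real.sin_pos_of_pos_of_lt_pi (hα0 ▸ hmono hx) (hαP ▸ hmono hxP))
      (Real.rpow_pos_of_pos (radius_pos p r _) _)

/-! ### Properties of the generalized sine -/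

variable {p : ℝ} (T : GenSine p)

/-- The function `|S| ^ p` driving the Prüfer angle equation. -/
noncomputable def F (x : ℝ) : ℝ := |T.S x| ^ p

/-- The derivative of `F` divided by `p`. -/
noncomputable def f (x : ℝ) : ℝ := oddPow p (T.S x) * T.C x

include T in
lemma pos : 0 < p := zero_lt_one.trans T.one_lt

include T in
lemma sub_one_pos : 0 < p - 1 := sub_pos.2 T.one_lt

lemma continuous_S : Continuous T.S :=
  continuous_iff_continuousAt.2 fun x => (T.hasDerivAt_S x).continuousAt

lemma continuous_C : Continuous T.C := by
  have h := Real.HolderConjugate.conjExponent T.one_lt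
  have hcont : Continuous fun x => oddPow p (T.C x) :=
    continuous_iff_continuousAt.2 fun x => (T.hasDerivAt_oddPow_C x).continuousAt
  simpa only [Function.comp_def, oddPow_oddPow h] using (continuous_oddPow h.symm.lt).comp hcont

lemma continuous_f : Continuous T.f :=
  ((continuous_oddPow T.one_lt).comp T.continuous_S).mul T.continuous_C

lemma hasDerivAt_F (x : ℝ) : HasDerivAt T.F (p * T.f x) x :=
  ((hasDerivAt_abs_rpow_oddPow T.one_lt _).comp x (T.hasDerivAt_S x)).congr_deriv (mul_assoc _ _ _)

lemma continuous_F : Continuous T.F :=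
  continuous_iff_continuousAt.2 fun x => (T.hasDerivAt_F x).continuousAt

lemma S_zero : T.S 0 = 0 := T.S_odd.map_zero

lemma C_half : T.C (T.P / 2) = 0 := by
  have h := T.C_antiperiodic (-(T.P / 2))
  rw [T.C_even, neg_add_eq_sub, sub_half] at h
  linarith

lemma S_nonneg {x : ℝ} (h0 : 0 ≤ x) (hx : x < T.P) : 0 ≤ T.S x := by
  rcases h0.eq_or_lt with rfl | h
  · rw [T.S_zero]
  · exact (T.S_pos x h hx).le

lemma C_strictAntiOn : StrictAntiOn T.C (Icc 0 T.P) := by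
  have hanti : StrictAntiOn (fun x => oddPow p (T.C x)) (Icc 0 T.P) := by
    refine strictAntiOn_of_deriv_neg (convex_Icc _ _)
      ((continuous_oddPow T.one_lt).comp T.continuous_C).continuousOn fun x hx => ?_
    rw [interior_Icc] at hx
    rw [(T.hasDerivAt_oddPow_C x).deriv, neg_mul, neg_lt_zero]
    exact mul_pos T.sub_one_pos (oddPow_pos (T.S_pos x hx.1 hx.2))
  exact fun x hx y hy hxy => (strictMono_oddPow T.one_lt).lt_iff_lt.1 (hanti hx hy hxy)

lemma C_nonneg {x : ℝ} (h0 : 0 ≤ x) (hx : x ≤ T.P / 2) : 0 ≤ T.C x := by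
  have hP := T.P_pos
  rw [← T.C_half]
  exact T.C_strictAntiOn.antitoneOn ⟨h0, by linarith⟩ ⟨by linarith, by linarith⟩ hx

lemma F_nonneg (x : ℝ) : 0 ≤ T.F x := Real.rpow_nonneg (abs_nonneg _) _

lemma F_le_one (x : ℝ) : T.F x ≤ 1 := by
  rw [← T.pythagoras x]
  exact le_add_of_nonneg_right (Real.rpow_nonneg (abs_nonneg _) _)

lemma F_zero : T.F 0 = 0 := by rw [F, T.S_zero, abs_zero, Real.zero_rpow T.pos.ne']

lemma F_half : T.F (T.P / 2) = 1 := by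
  simpa [F, T.C_half, Real.zero_rpow T.pos.ne'] using T.pythagoras (T.P / 2)

lemma F_pos {x : ℝ} (h0 : 0 < x) (hx : x < T.P) : 0 < T.F x :=
  Real.rpow_pos_of_pos (abs_pos.2 (T.S_pos x h0 hx).ne') _

lemma F_periodic : Function.Periodic T.F T.P := fun x => by
  simp only [F, T.S_antiperiodic x, abs_neg]

lemma F_even : Function.Even T.F := fun x => by simp only [F, T.S_odd x, abs_neg]

lemma f_periodic : Function.Periodic T.f T.P := fun x => by
  simp only [f, T.S_antiperiodic x, T.C_antiperiodic x, oddPow_neg, neg_mul_neg]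

lemma f_odd : Function.Odd T.f := fun x => by
  simp only [f, T.S_odd x, T.C_even x, oddPow_neg, neg_mul]

lemma F_add_nat_mul (x : ℝ) (k : ℕ) : T.F (x + k * T.P) = T.F x := T.F_periodic.nat_mul k x

lemma f_add_nat_mul (x : ℝ) (k : ℕ) : T.f (x + k * T.P) = T.f x := T.f_periodic.nat_mul k x

lemma F_nat_mul_sub (x : ℝ) (k : ℕ) : T.F (k * T.P - x) = T.F x := by
  rw [T.F_periodic.nat_mul_sub_eq, T.F_even]

lemma f_nat_mul_sub (x : ℝ) (k : ℕ) : T.f (k * T.P - x) = -T.f x := by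
  rw [T.f_periodic.nat_mul_sub_eq, T.f_odd]

lemma S_eq_zero_iff {x : ℝ} : T.S x = 0 ↔ ∃ k : ℤ, x = k * T.P := by
  constructor
  · intro h
    refine ⟨⌊x / T.P⌋, ?_⟩
    have hlow : (⌊x / T.P⌋ : ℝ) * T.P ≤ x := (le_div_iff₀ T.P_pos).1 (Int.floor_le _)
    have hupp : x < (⌊x / T.P⌋ + 1 : ℝ) * T.P := (div_lt_iff₀ T.P_pos).1 (Int.lt_floor_add_one _)
    by_contra hne
    have hpos : 0 < T.F (x - ⌊x / T.P⌋ * T.P) :=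
      T.F_pos (sub_pos.2 (hlow.lt_of_ne' hne)) (by linarith)
    rw [T.F_periodic.sub_int_mul_eq, F, h, abs_zero, Real.zero_rpow T.pos.ne'] at hpos
    exact hpos.false
  · rintro ⟨k, rfl⟩
    exact T.S_antiperiodic.int_mul_eq_of_eq_zero T.S_zero k

lemma abs_f_le_one (x : ℝ) : |T.f x| ≤ 1 := by
  have hS : |T.S x| ≤ 1 := by
    by_contra! h
    exact (Real.one_lt_rpow h T.pos).not_ge (T.F_le_one x)
  have hC : |T.C x| ≤ 1 := by
    by_contra! h
    linarith [Real.one_lt_rpow h T.pos, T.pythagoras x, Real.rpow_nonneg (abs_nonneg (T.S x)) p]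
  rw [f, abs_mul, abs_oddPow T.one_lt]
  exact mul_le_one₀ (Real.rpow_le_one (abs_nonneg _) hS T.sub_one_pos.le) (abs_nonneg _) hC

lemma f_nonneg {x : ℝ} (h0 : 0 ≤ x) (hx : x ≤ T.P / 2) : 0 ≤ T.f x :=
  mul_nonneg (oddPow_nonneg (T.S_nonneg h0 (by linarith [T.P_pos]))) (T.C_nonneg h0 hx)

lemma mul_f_lt_F {x : ℝ} (h0 : 0 < x) (hx : x ≤ T.P / 2) : x * T.f x < T.F x := by
  have hxP : x < T.P := by linarith [T.P_pos]
  obtain ⟨c, hc, hslope⟩ := exists_hasDerivAt_eq_slope T.S T.C h0 T.continuous_S.continuousOn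
    fun y _ => T.hasDerivAt_S y
  rw [T.S_zero, sub_zero, sub_zero, eq_div_iff h0.ne'] at hslope
  have hC : T.C x < T.C c :=
    T.C_strictAntiOn ⟨hc.1.le, (hc.2.trans hxP).le⟩ ⟨h0.le, hxP.le⟩ hc.2
  calc x * T.f x = oddPow p (T.S x) * (T.C x * x) := by rw [f]; ring
    _ < oddPow p (T.S x) * (T.C c * x) :=
      mul_lt_mul_of_pos_left (mul_lt_mul_of_pos_right hC h0) (oddPow_pos (T.S_pos x h0 hxP))
    _ = T.F x := by rw [hslope, oddPow_mul_self T.pos.ne', F]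

lemma mul_f_le_F {x : ℝ} (h0 : 0 ≤ x) (hx : x ≤ T.P / 2) : x * T.f x ≤ T.F x := by
  rcases h0.eq_or_lt with rfl | h
  · rw [zero_mul]; exact T.F_nonneg _
  · exact (T.mul_f_lt_F h hx).le

end GenSine

/-! ### Tools from calculus -/

section GlobalODE

variable {E : Type*} [NormedAddCommGroup E] [NormedSpace ℝ E]

lemma norm_le_gronwallBound_of_norm_deriv_le {f f' : ℝ → E} {K ε : ℝ}
    (hf : ∀ x, HasDerivAt f (f' x) x) (h0 : f 0 = 0) (bound : ∀ x, ‖f' x‖ ≤ K * ‖f x‖ + ε)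
    (x : ℝ) : ‖f x‖ ≤ gronwallBound 0 K ε |x| := by
  have forward : ∀ {g g' : ℝ → E}, (∀ x, HasDerivAt g (g' x) x) → g 0 = 0 →
      (∀ x, ‖g' x‖ ≤ K * ‖g x‖ + ε) → ∀ x, 0 ≤ x → ‖g x‖ ≤ gronwallBound 0 K ε x := by
    intro g g' hg hg0 hb x hx
    have := norm_le_gronwallBound_of_norm_deriv_right_le (a := 0) (b := x)
      (fun t _ => (hg t).continuousAt.continuousWithinAt) (fun t _ => (hg t).hasDerivWithinAt)
      (by rw [hg0, norm_zero]) (fun t _ => hb t) x ⟨hx, le_rfl⟩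
    rwa [sub_zero] at this
  rcases le_total 0 x with hx | hx
  · rw [abs_of_nonneg hx]
    exact forward hf h0 bound x hx
  · rw [abs_of_nonpos hx]
    have := forward (g := fun t => f (-t)) (g' := fun t => -f' (-t))
      (fun t => ((hf (-t)).scomp t (hasDerivAt_neg t)).congr_deriv (neg_one_smul ℝ _))
      (by simpa using h0)
      (fun t => by simpa using bound (-t)) (-x) (neg_nonneg.2 hx)
    simpa using this

variable [CompleteSpace E] {v : ℝ → E → E} {K : ℝ≥0} {L : ℝ}

lemma exists_forall_mem_Ioo_hasDerivAt_of_lipschitzWith (hlip : ∀ t, LipschitzWith K (v t))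
    (hcont : ∀ x, Continuous fun t => v t x) (hbound : ∀ t x, ‖v t x‖ ≤ L) (x₀ : E) {R : ℝ}
    (hR : 0 < R) : ∃ φ : ℝ → E, φ 0 = x₀ ∧ ∀ t ∈ Ioo (-R) R, HasDerivAt φ (v t (φ t)) t := by
  have hL : 0 ≤ L := (norm_nonneg _).trans (hbound 0 x₀)
  have hpl : IsPicardLindelof v (tmin := -R) (tmax := R) ⟨0, by linarith, hR.le⟩ x₀
      (L * R).toNNReal 0 L.toNNReal K := by
    refine ⟨fun t _ => (hlip t).lipschitzOnWith, fun x _ => (hcont x).continuousOn,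
      fun t _ x _ => ?_, ?_⟩
    · rw [Real.coe_toNNReal _ hL]
      exact hbound t x
    · rw [Real.coe_toNNReal _ hL, Real.coe_toNNReal _ (by positivity)]
      simp
  obtain ⟨φ, h0, hφ⟩ := hpl.exists_eq_forall_mem_Icc_hasDerivWithinAt₀
  exact ⟨φ, h0, fun t ht => (hφ t (Ioo_subset_Icc_self ht)).hasDerivAt (Icc_mem_nhds ht.1 ht.2)⟩

/-- The solutions on `(-n - 1, n + 1)` agree on overlaps and glue to a global one. -/
lemma exists_forall_hasDerivAt_of_lipschitzWith_of_norm_le (hlip : ∀ t, LipschitzWith K (v t))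
    (hcont : ∀ x, Continuous fun t => v t x) (hbound : ∀ t x, ‖v t x‖ ≤ L) (x₀ : E) :
    ∃ φ : ℝ → E, φ 0 = x₀ ∧ ∀ t, HasDerivAt φ (v t (φ t)) t := by
  have hlocal : ∀ n : ℕ, ∃ φ : ℝ → E, φ 0 = x₀ ∧
      ∀ t ∈ Ioo (-(n + 1 : ℝ)) (n + 1), HasDerivAt φ (v t (φ t)) t := fun n =>
    exists_forall_mem_Ioo_hasDerivAt_of_lipschitzWith hlip hcont hbound x₀ (by positivity)
  choose φ h0 hφ using hlocal
  have hagree : ∀ n m : ℕ, n ≤ m → EqOn (φ n) (φ m) (Ioo (-(n + 1 : ℝ)) (n + 1)) := by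
    intro n m hnm
    have : (n : ℝ) ≤ m := Nat.cast_le.2 hnm
    have : (0 : ℝ) ≤ n := n.cast_nonneg
    exact ODE_solution_unique_of_mem_Ioo (s := fun _ => univ) (t₀ := 0)
      (fun t _ => (hlip t).lipschitzOnWith) ⟨by linarith, by linarith⟩
      (fun t ht => ⟨hφ n t ht, trivial⟩)
      (fun t ht => ⟨hφ m t ⟨by linarith [ht.1], by linarith [ht.2]⟩, trivial⟩) (by rw [h0, h0])
  have hmem : ∀ t : ℝ, t ∈ Ioo (-(⌈|t|⌉₊ + 1 : ℝ)) (⌈|t|⌉₊ + 1) := fun t => by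
    have := Nat.le_ceil |t|
    exact ⟨by linarith [neg_abs_le t], by linarith [le_abs_self t]⟩
  refine ⟨fun t => φ ⌈|t|⌉₊ t, h0 _, fun t => (hφ _ t (hmem t)).congr_of_eventuallyEq ?_⟩
  filter_upwards [isOpen_Ioo.mem_nhds (hmem t)] with y hy
  rcases le_total ⌈|t|⌉₊ ⌈|y|⌉₊ with hle | hle
  · exact (hagree _ _ hle hy).symm
  · exact hagree _ _ hle (hmem y)

end GlobalODE

/-- The divided difference `(G v - G u) / (v - u)` of a primitive `G` of `g`, continuously extended
to the diagonal. -/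
noncomputable def divDiff (g : ℝ → ℝ) (u v : ℝ) : ℝ := ∫ t in (0 : ℝ)..1, g (u + t * (v - u))

lemma continuous_divDiff {X : Type*} [TopologicalSpace X] {g : X → ℝ → ℝ} {u v : X → ℝ}
    (hg : Continuous fun z : X × ℝ => g z.1 z.2) (hu : Continuous u) (hv : Continuous v) :
    Continuous fun x => divDiff (g x) (u x) (v x) := by
  unfold divDiff
  refine intervalIntegral.continuous_parametric_intervalIntegral_of_continuous' ?_ 0 1
  unfold Function.uncurry
  fun_prop

lemma divDiff_self (g : ℝ → ℝ) (u : ℝ) : divDiff g u u = g u := by simp [divDiff]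

lemma divDiff_mul {G g : ℝ → ℝ} (hG : ∀ x, HasDerivAt G (g x) x) (hg : Continuous g) (u v : ℝ) :
    divDiff g u v * (v - u) = G v - G u := by
  have hline : ∀ t : ℝ, HasDerivAt (fun t => u + t * (v - u)) (v - u) t := fun t => by
    simpa using ((hasDerivAt_id t).mul_const (v - u)).const_add u
  have hint := intervalIntegral.integral_eq_sub_of_hasDerivAt (a := 0) (b := 1)
    (fun t _ => (hG (u + t * (v - u))).comp t (hline t))
    (Continuous.intervalIntegrable (by fun_prop) _ _)
  rw [intervalIntegral.integral_mul_const] at hint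
  simpa [divDiff] using hint

lemma abs_divDiff_le {g : ℝ → ℝ} {M : ℝ} (hM : ∀ x, |g x| ≤ M) (u v : ℝ) :
    |divDiff g u v| ≤ M := by
  simpa [divDiff] using intervalIntegral.norm_integral_le_of_norm_le_const (a := 0) (b := 1)
    (f := fun t => g (u + t * (v - u))) (C := M) fun t _ => hM _

lemma hasDerivAt_of_sub_eq_mul {f Ψ : ℝ → ℝ} {s : ℝ} (hΨ : ContinuousAt Ψ s)
    (h : ∀ t, f t - f s = (t - s) * Ψ t) : HasDerivAt f (Ψ s) s := by
  rw [hasDerivAt_iff_tendsto_slope]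
  refine (hΨ.tendsto.mono_left nhdsWithin_le_nhds).congr' ?_
  filter_upwards [self_mem_nhdsWithin] with t ht
  rw [slope_def_field, h t, mul_div_cancel_left₀ _ (sub_ne_zero.2 ht)]

/-- Variation of constants for `δ' = α + A δ`. -/
lemma mul_exp_neg_integral_eq {δ α A : ℝ → ℝ} (hα : Continuous α) (hA : Continuous A)
    (h : ∀ x, HasDerivAt δ (α x + A x * δ x) x) (x : ℝ) :
    δ x * Real.exp (-∫ t in (0 : ℝ)..x, A t) =
      δ 0 + ∫ t in (0 : ℝ)..x, α t * Real.exp (-∫ r in (0 : ℝ)..t, A r) := by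
  have hI : ∀ x, HasDerivAt (fun x => ∫ t in (0 : ℝ)..x, A t) (A x) x := fun x =>
    (hA.integral_hasStrictDerivAt 0 x).hasDerivAt
  have : Continuous fun x => ∫ t in (0 : ℝ)..x, A t :=
    continuous_iff_continuousAt.2 fun x => (hI x).continuousAt
  have hderiv : ∀ t, HasDerivAt (fun x => δ x * Real.exp (-∫ t in (0 : ℝ)..x, A t))
      (α t * Real.exp (-∫ r in (0 : ℝ)..t, A r)) t := fun t =>
    ((h t).fun_mul ((hI t).fun_neg.exp)).congr_deriv (by ring)
  have hint := intervalIntegral.integral_eq_sub_of_hasDerivAt (a := 0) (b := x)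
    (fun t _ => hderiv t) (Continuous.intervalIntegrable (by fun_prop) _ _)
  simp only [intervalIntegral.integral_same, neg_zero, Real.exp_zero, mul_one] at hint
  linarith

/-! ### The Prüfer angle equation -/

namespace GenSine

variable {p : ℝ} (T : GenSine p)

/-- The divided difference `(F v - F u) / (v - u)`. -/
noncomputable def slopeF (u v : ℝ) : ℝ := divDiff (fun x => p * T.f x) u v

lemma continuous_slopeF : Continuous fun z : ℝ × ℝ => T.slopeF z.1 z.2 :=
  continuous_divDiff (g := fun _ x => p * T.f x)
    (continuous_const.mul (T.continuous_f.comp continuous_snd)) continuous_fst continuous_snd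

lemma slopeF_mul (u v : ℝ) : T.slopeF u v * (v - u) = T.F v - T.F u :=
  divDiff_mul T.hasDerivAt_F (continuous_const.mul T.continuous_f) u v

lemma abs_F_sub_le (u v : ℝ) : |T.F v - T.F u| ≤ p * |v - u| := by
  rw [← T.slopeF_mul, abs_mul]
  refine mul_le_mul_of_nonneg_right (abs_divDiff_le (fun x => ?_) u v) (abs_nonneg _)
  rw [abs_mul, abs_of_pos T.pos]
  exact mul_le_of_le_one_right T.pos.le (T.abs_f_le_one x)

/-- `φ` solves the Prüfer angle equation `φ' = a + k F(φ)`. -/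
def IsAngle (a : ℝ) (k : ℝ →ᵇ ℝ) (φ : ℝ → ℝ) : Prop :=
  ∀ x, HasDerivAt φ (a + k x * T.F (φ x)) x

lemma lipschitzWith_angle_rhs (a : ℝ) (k : ℝ →ᵇ ℝ) (t : ℝ) :
    LipschitzWith (‖k‖ * p).toNNReal fun x => a + k t * T.F x := by
  refine LipschitzWith.of_dist_le_mul fun x y => ?_
  rw [Real.dist_eq, Real.dist_eq, Real.coe_toNNReal _ (mul_nonneg (norm_nonneg k) T.pos.le),
    add_sub_add_left_eq_sub, ← mul_sub, abs_mul, mul_assoc]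
  exact mul_le_mul (k.norm_coe_le_norm t) (T.abs_F_sub_le y x) (abs_nonneg _) (norm_nonneg k)

lemma exists_isAngle (a : ℝ) (k : ℝ →ᵇ ℝ) : ∃ φ : ℝ → ℝ, φ 0 = 0 ∧ T.IsAngle a k φ := by
  refine exists_forall_hasDerivAt_of_lipschitzWith_of_norm_le (v := fun t x => a + k t * T.F x)
    (L := |a| + ‖k‖) (T.lipschitzWith_angle_rhs a k) (fun x => by fun_prop) (fun t x => ?_) 0
  refine (norm_add_le _ _).trans (add_le_add le_rfl ?_)
  rw [norm_mul, Real.norm_of_nonneg (T.F_nonneg x)]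
  exact mul_le_of_le_one_right (norm_nonneg _) (T.F_le_one x) |>.trans (k.norm_coe_le_norm t)

namespace IsAngle

variable {T} {a a₁ a₂ : ℝ} {k k₁ k₂ : ℝ →ᵇ ℝ} {φ φ₁ φ₂ : ℝ → ℝ}

lemma continuous (h : T.IsAngle a k φ) : Continuous φ :=
  continuous_iff_continuousAt.2 fun x => (h x).continuousAt

lemma sub_mul_exp (h₁ : T.IsAngle a₁ k₁ φ₁) (h₂ : T.IsAngle a₂ k₂ φ₂) (x : ℝ) :
    (φ₂ x - φ₁ x) * Real.exp (-∫ t in (0 : ℝ)..x, k₂ t * T.slopeF (φ₁ t) (φ₂ t)) =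
      (φ₂ 0 - φ₁ 0) + ∫ t in (0 : ℝ)..x, ((a₂ - a₁) + (k₂ t - k₁ t) * T.F (φ₁ t)) *
        Real.exp (-∫ r in (0 : ℝ)..t, k₂ r * T.slopeF (φ₁ r) (φ₂ r)) := by
  have hφ₁ := h₁.continuous
  have hφ₂ := h₂.continuous
  have hF := T.continuous_F
  refine mul_exp_neg_integral_eq (δ := fun x => φ₂ x - φ₁ x)
    (A := fun t => k₂ t * T.slopeF (φ₁ t) (φ₂ t)) (by fun_prop)
    (k₂.continuous.mul (T.continuous_slopeF.comp (hφ₁.prodMk hφ₂))) (fun x => ?_) x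
  refine ((h₂ x).fun_sub (h₁ x)).congr_deriv ?_
  linear_combination -k₂ x * T.slopeF_mul (φ₁ x) (φ₂ x)

lemma eqOn {c : ℝ} (h₁ : T.IsAngle a k₁ φ₁) (h₂ : T.IsAngle a k₂ φ₂) (h0 : φ₁ 0 = φ₂ 0)
    (hk : EqOn k₁ k₂ (Icc 0 c)) : EqOn φ₁ φ₂ (Icc 0 c) := by
  refine ODE_solution_unique_of_mem_Icc_right (v := fun t x => a + k₁ t * T.F x)
    (s := fun _ => univ) (fun t _ => (T.lipschitzWith_angle_rhs a k₁ t).lipschitzOnWith)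
    h₁.continuous.continuousOn (fun t _ => (h₁ t).hasDerivWithinAt) (fun _ _ => mem_univ _)
    h₂.continuous.continuousOn (fun t ht => ?_) (fun _ _ => mem_univ _) h0
  rw [hk (Ico_subset_Icc_self ht)]
  exact (h₂ t).hasDerivWithinAt

lemma lt_of_integral_pos {x : ℝ} (h₁ : T.IsAngle a₁ k₁ φ₁) (h₂ : T.IsAngle a₂ k₂ φ₂)
    (h : 0 < (φ₂ 0 - φ₁ 0) + ∫ t in (0 : ℝ)..x, ((a₂ - a₁) + (k₂ t - k₁ t) * T.F (φ₁ t)) *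
        Real.exp (-∫ r in (0 : ℝ)..t, k₂ r * T.slopeF (φ₁ r) (φ₂ r))) :
    φ₁ x < φ₂ x := by
  rw [← h₁.sub_mul_exp h₂] at h
  exact sub_pos.1 (pos_of_mul_pos_left h (Real.exp_pos _).le)

lemma lt_of_lt {x : ℝ} (h₁ : T.IsAngle a₁ k₁ φ₁) (h₂ : T.IsAngle a₂ k₂ φ₂) (h0 : φ₁ 0 < φ₂ 0)
    (hx : 0 ≤ x) (hle : ∀ t ∈ Icc 0 x, 0 ≤ (a₂ - a₁) + (k₂ t - k₁ t) * T.F (φ₁ t)) :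
    φ₁ x < φ₂ x :=
  h₁.lt_of_integral_pos h₂ <| add_pos_of_pos_of_nonneg (sub_pos.2 h0) <|
    intervalIntegral.integral_nonneg hx fun t ht => mul_nonneg (hle t ht) (Real.exp_pos _).le

lemma lt_of_exists_lt {x : ℝ} (h₁ : T.IsAngle a₁ k₁ φ₁) (h₂ : T.IsAngle a₂ k₂ φ₂)
    (h0 : φ₁ 0 ≤ φ₂ 0) (hx : 0 < x)
    (hle : ∀ t ∈ Icc 0 x, 0 ≤ (a₂ - a₁) + (k₂ t - k₁ t) * T.F (φ₁ t))
    (hlt : ∃ t ∈ Icc 0 x, 0 < (a₂ - a₁) + (k₂ t - k₁ t) * T.F (φ₁ t)) :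
    φ₁ x < φ₂ x := by
  have hφ₁ := h₁.continuous
  have hF := T.continuous_F
  have hA : Continuous fun t => k₂ t * T.slopeF (φ₁ t) (φ₂ t) :=
    k₂.continuous.mul (T.continuous_slopeF.comp (hφ₁.prodMk h₂.continuous))
  have hI : Continuous fun x => ∫ t in (0 : ℝ)..x, k₂ t * T.slopeF (φ₁ t) (φ₂ t) :=
    intervalIntegral.continuous_primitive (fun _ _ => hA.intervalIntegrable _ _) 0
  obtain ⟨t, ht, hpos⟩ := hlt
  refine h₁.lt_of_integral_pos h₂ (add_pos_of_nonneg_of_pos (sub_nonneg.2 h0) ?_)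
  exact intervalIntegral.integral_pos hx (Continuous.continuousOn (by fun_prop))
    (fun t ht => mul_nonneg (hle t (Ioc_subset_Icc_self ht)) (Real.exp_pos _).le)
    ⟨t, ht, mul_pos hpos (Real.exp_pos _)⟩

lemma abs_sub_le_gronwallBound (h₁ : T.IsAngle a₁ k₁ φ₁) (h₂ : T.IsAngle a₂ k₂ φ₂)
    (h0 : φ₁ 0 = φ₂ 0) (x : ℝ) :
    |φ₂ x - φ₁ x| ≤ gronwallBound 0 (‖k₂‖ * p) (|a₂ - a₁| + ‖k₂ - k₁‖) |x| := by
  refine norm_le_gronwallBound_of_norm_deriv_le (f := fun x => φ₂ x - φ₁ x)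
    (fun x => (h₂ x).fun_sub (h₁ x)) (by rw [h0, sub_self]) (fun x => ?_) x
  have hk := mul_le_of_le_one_right (norm_nonneg ((k₂ - k₁) x)) (T.F_le_one (φ₁ x)) |>.trans
    ((k₂ - k₁).norm_coe_le_norm x)
  have hF := mul_le_mul (k₂.norm_coe_le_norm x) (T.abs_F_sub_le (φ₁ x) (φ₂ x)) (abs_nonneg _)
    (norm_nonneg k₂)
  calc ‖a₂ + k₂ x * T.F (φ₂ x) - (a₁ + k₁ x * T.F (φ₁ x))‖
      = ‖k₂ x * (T.F (φ₂ x) - T.F (φ₁ x)) + ((a₂ - a₁) + (k₂ - k₁) x * T.F (φ₁ x))‖ := by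
        rw [BoundedContinuousFunction.sub_apply]
        ring_nf
    _ ≤ ‖k₂ x‖ * |T.F (φ₂ x) - T.F (φ₁ x)| + (|a₂ - a₁| + ‖(k₂ - k₁) x‖ * T.F (φ₁ x)) := by
        refine (norm_add_le _ _).trans (add_le_add (norm_mul_le _ _)
          ((norm_add_le _ _).trans (add_le_add le_rfl ?_)))
        rw [norm_mul, Real.norm_of_nonneg (T.F_nonneg _)]
    _ ≤ ‖k₂‖ * p * ‖φ₂ x - φ₁ x‖ + (|a₂ - a₁| + ‖k₂ - k₁‖) := by
        rw [Real.norm_eq_abs (φ₂ x - φ₁ x), mul_assoc]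
        gcongr

end IsAngle

lemma continuous_isAngle_family {X : Type*} [TopologicalSpace X] {a : X → ℝ} {k : X → ℝ →ᵇ ℝ}
    {φ : X → ℝ → ℝ} (ha : Continuous a) (hk : Continuous k) (h0 : ∀ s, φ s 0 = 0)
    (hφ : ∀ s, T.IsAngle (a s) (k s) (φ s)) : Continuous fun z : X × ℝ => φ z.1 z.2 := by
  rw [continuous_iff_continuousAt]
  rintro ⟨s₀, x₀⟩
  let G : ℝ → ℝ := fun ε => gronwallBound 0 (‖k s₀‖ * p) ε (|x₀| + 1)
  let ε : X → ℝ := fun s => |a s₀ - a s| + ‖k s₀ - k s‖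
  have hlim : Tendsto (fun z : X × ℝ => G (ε z.1) + |φ s₀ z.2 - φ s₀ x₀|) (𝓝 (s₀, x₀)) (𝓝 0) := by
    have hφ₀ := (hφ s₀).continuous
    have hG : Continuous G := gronwallBound_continuous_ε _ _ _
    have hcont : Continuous fun z : X × ℝ => G (ε z.1) + |φ s₀ z.2 - φ s₀ x₀| := by fun_prop
    simpa [G, ε, gronwallBound_ε0] using hcont.tendsto (s₀, x₀)
  rw [ContinuousAt, tendsto_iff_dist_tendsto_zero]
  refine squeeze_zero' (Eventually.of_forall fun _ => dist_nonneg) ?_ hlim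
  have hx : ∀ᶠ z : X × ℝ in 𝓝 (s₀, x₀), |z.2| < |x₀| + 1 :=
    (by fun_prop : Continuous fun z : X × ℝ => |z.2|).continuousAt.eventually_lt
      continuousAt_const (by simp)
  filter_upwards [hx] with z hz
  rw [Real.dist_eq]
  refine (abs_sub_le _ (φ s₀ z.2) _).trans (add_le_add ?_ le_rfl)
  rw [abs_sub_comm]
  exact ((hφ z.1).abs_sub_le_gronwallBound (hφ s₀) (by rw [h0, h0]) z.2).trans
    (gronwallBound_mono le_rfl (by positivity) (mul_nonneg (norm_nonneg _) T.pos.le) hz.le)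

end GenSine

/-! ### Half-linear systems -/

lemma eqOn_zero_of_norm_deriv_le {E : Type*} [NormedAddCommGroup E] [NormedSpace ℝ E]
    {f f' : ℝ → E} {K a b c : ℝ} (hf : ∀ x ∈ Icc a b, HasDerivAt f (f' x) x)
    (bound : ∀ x ∈ Icc a b, ‖f' x‖ ≤ K * ‖f x‖) (hc : c ∈ Icc a b) (h0 : f c = 0) :
    EqOn f 0 (Icc a b) := by
  have forward : ∀ {g g' : ℝ → E} {c d : ℝ}, (∀ x ∈ Icc c d, HasDerivAt g (g' x) x) →
      (∀ x ∈ Icc c d, ‖g' x‖ ≤ K * ‖g x‖) → g c = 0 → ∀ x ∈ Icc c d, g x = 0 :=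
    fun hg hb => (eq_zero_of_abs_deriv_le_mul_abs_self_of_eq_zero_right
      (fun x hx => (hg x hx).continuousAt.continuousWithinAt)
      (fun x hx => (hg x (Ico_subset_Icc_self hx)).hasDerivWithinAt) ·
      fun x hx => hb x (Ico_subset_Icc_self hx))
  intro x hx
  rcases le_total c x with hcx | hxc
  · exact forward (fun t ht => hf t ⟨hc.1.trans ht.1, ht.2⟩)
      (fun t ht => bound t ⟨hc.1.trans ht.1, ht.2⟩) h0 x ⟨hcx, hx.2⟩
  · have hmem : ∀ t ∈ Icc (-c) (-a), -t ∈ Icc a b := fun t ht =>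
      ⟨by linarith [ht.2], by linarith [ht.1, hc.2]⟩
    have := forward (g := fun t => f (-t)) (g' := fun t => -f' (-t)) (c := -c) (d := -a)
      (fun t ht => ((hf (-t) (hmem t ht)).scomp t (hasDerivAt_neg t)).congr_deriv
        (neg_one_smul ℝ _))
      (fun t ht => by simpa using bound (-t) (hmem t ht)) (by simpa using h0) (-x)
      ⟨neg_le_neg hxc, neg_le_neg hx.1⟩
    simpa using this

lemma lipschitzOnWith_abs_rpow {s : ℝ} (hs : 1 < s) (R : ℝ≥0) :
    LipschitzOnWith (s.toNNReal * R ^ (s - 1)) (fun x : ℝ => |x| ^ s) (Icc (-R) R) := by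
  refine (convex_Icc _ _).lipschitzOnWith_of_nnnorm_hasDerivWithin_le
    (fun x _ => (hasDerivAt_abs_rpow_oddPow hs x).hasDerivWithinAt) fun x hx => ?_
  rw [← NNReal.coe_le_coe, coe_nnnorm, norm_mul, Real.norm_eq_abs, Real.norm_eq_abs,
    abs_oddPow hs, NNReal.coe_mul, NNReal.coe_rpow, Real.coe_toNNReal _ (by linarith),
    abs_of_pos (by linarith)]
  exact mul_le_mul_of_nonneg_left
    (Real.rpow_le_rpow (abs_nonneg _) (abs_le.2 hx) (sub_pos.2 hs).le) (by linarith)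

lemma eqOn_of_riccati {s a b : ℝ} (hs : 1 < s) {M : ℝ≥0} {α β f g : ℝ → ℝ}
    (hβ : ∀ t ∈ Icc a b, |β t| ≤ M)
    (hf : ∀ t ∈ Icc a b, HasDerivAt f (α t + β t * |f t| ^ s) t)
    (hg : ∀ t ∈ Icc a b, HasDerivAt g (α t + β t * |g t| ^ s) t) (h : f a = g a) :
    EqOn f g (Icc a b) := by
  have cf : ContinuousOn f (Icc a b) := fun t ht => (hf t ht).continuousAt.continuousWithinAt
  have cg : ContinuousOn g (Icc a b) := fun t ht => (hg t ht).continuousAt.continuousWithinAt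
  obtain ⟨R₁, hR₁⟩ := isCompact_Icc.exists_bound_of_continuousOn cf
  obtain ⟨R₂, hR₂⟩ := isCompact_Icc.exists_bound_of_continuousOn cg
  set R : ℝ≥0 := (max R₁ R₂).toNNReal
  have hR : max R₁ R₂ ≤ R := Real.le_coe_toNNReal _
  have hlip : ∀ t ∈ Ico a b, LipschitzOnWith (M * (s.toNNReal * R ^ (s - 1)))
      (fun x => α t + β t * |x| ^ s) (Icc (-R) R) := by
    refine fun t ht => LipschitzOnWith.of_dist_le_mul fun x hx y hy => ?_
    rw [dist_add_left, Real.dist_eq, ← mul_sub, abs_mul, NNReal.coe_mul, mul_assoc]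
    exact mul_le_mul (hβ t (Ico_subset_Icc_self ht))
      ((lipschitzOnWith_abs_rpow hs R).dist_le_mul x hx y hy) (abs_nonneg _) M.2
  exact ODE_solution_unique_of_mem_Icc_right (v := fun t x => α t + β t * |x| ^ s)
    (s := fun _ => Icc (-R) R) hlip
    cf (fun t ht => (hf t (Ico_subset_Icc_self ht)).hasDerivWithinAt)
    (fun t ht => abs_le.1 ((hR₁ t (Ico_subset_Icc_self ht)).trans ((le_max_left _ _).trans hR)))
    cg (fun t ht => (hg t (Ico_subset_Icc_self ht)).hasDerivWithinAt)
    (fun t ht => abs_le.1 ((hR₂ t (Ico_subset_Icc_self ht)).trans ((le_max_right _ _).trans hR)))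
    h

lemma abs_oddPow_mul_oddPow_le {p r : ℝ} (hpr : p.HolderConjugate r) (a b : ℝ) :
    |oddPow p a * oddPow r b| ≤ |a| ^ p + |b| ^ r := by
  have young := Real.young_inequality_of_nonneg (abs_nonneg (oddPow p a))
    (abs_nonneg (oddPow r b)) hpr.symm
  rw [abs_oddPow_rpow hpr, abs_oddPow_rpow hpr.symm] at young
  rw [abs_mul]
  exact young.trans (add_le_add
    (div_le_self (Real.rpow_nonneg (abs_nonneg _) _) hpr.symm.lt.le)
    (div_le_self (Real.rpow_nonneg (abs_nonneg _) _) hpr.lt.le))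

lemma abs_rpow_add_abs_rpow_eq_zero_iff {p r : ℝ} (hpr : p.HolderConjugate r) {a b : ℝ} :
    |a| ^ p + |b| ^ r = 0 ↔ a = 0 ∧ b = 0 := by
  rw [add_eq_zero_iff_of_nonneg (Real.rpow_nonneg (abs_nonneg _) _)
    (Real.rpow_nonneg (abs_nonneg _) _), Real.rpow_eq_zero (abs_nonneg _) hpr.ne_zero,
    Real.rpow_eq_zero (abs_nonneg _) hpr.symm.ne_zero, abs_eq_zero, abs_eq_zero]

/-- `(y, v)` solves the system `y' = α v^{(r-1)}`, `v' = β y^{(p-1)}` at the points of `s`. With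
conjugate exponents, `α = 1` and `v = (y')^{(p-1)}` this is the half-linear equation
`((y')^{(p-1)})' = β y^{(p-1)}`; the form of the system is invariant under exchanging `y` and `v`.
-/
def IsSolution (p r : ℝ) (α β : ℝ → ℝ) (s : Set ℝ) (y v : ℝ → ℝ) : Prop :=
  ∀ x ∈ s, HasDerivAt y (α x * oddPow r (v x)) x ∧ HasDerivAt v (β x * oddPow p (y x)) x

namespace IsSolution

variable {p r a b M : ℝ} {α β y v u w : ℝ → ℝ} {s t : Set ℝ}

lemma mono (h : IsSolution p r α β s y v) (hst : t ⊆ s) : IsSolution p r α β t y v :=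
  fun x hx => h x (hst hx)

lemma swap (h : IsSolution p r α β s y v) : IsSolution r p β α s v y := fun x hx => (h x hx).symm

lemma hasDerivAt_energy (hpr : p.HolderConjugate r) (h : IsSolution p r α β s y v) {x : ℝ}
    (hx : x ∈ s) : HasDerivAt (fun t => |y t| ^ p + |v t| ^ r)
      ((p * α x + r * β x) * (oddPow p (y x) * oddPow r (v x))) x :=
  (((hasDerivAt_abs_rpow_oddPow hpr.lt (y x)).comp x (h x hx).1).add
    ((hasDerivAt_abs_rpow_oddPow hpr.symm.lt (v x)).comp x (h x hx).2)).congr_deriv (by ring)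

lemma eq_zero_of_eq_zero (hpr : p.HolderConjugate r) (h : IsSolution p r α β (Icc a b) y v)
    (hα : ∀ x ∈ Icc a b, |α x| ≤ M) (hβ : ∀ x ∈ Icc a b, |β x| ≤ M) {c : ℝ} (hc : c ∈ Icc a b)
    (h0 : y c = 0 ∧ v c = 0) {x : ℝ} (hx : x ∈ Icc a b) : y x = 0 ∧ v x = 0 := by
  have henergy := eqOn_zero_of_norm_deriv_le (K := (p + r) * M)
    (fun x hx => h.hasDerivAt_energy hpr hx) (fun x hx => ?_) hc
    ((abs_rpow_add_abs_rpow_eq_zero_iff hpr).2 h0) hx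
  · exact (abs_rpow_add_abs_rpow_eq_zero_iff hpr).1 henergy
  · rw [norm_mul]
    refine mul_le_mul ?_ ((abs_oddPow_mul_oddPow_le hpr _ _).trans (le_abs_self _)) (norm_nonneg _)
      (mul_nonneg (add_pos hpr.pos hpr.symm.pos).le ((abs_nonneg _).trans (hα x hx)))
    rw [add_mul]
    refine (norm_add_le _ _).trans (add_le_add ?_ ?_) <;> rw [norm_mul, Real.norm_eq_abs]
    · rw [abs_of_pos hpr.pos]
      exact mul_le_mul_of_nonneg_left (hα x hx) hpr.nonneg
    · rw [abs_of_pos hpr.symm.pos]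
      exact mul_le_mul_of_nonneg_left (hβ x hx) hpr.symm.nonneg

lemma hasDerivAt_div (hpr : p.HolderConjugate r) (h : IsSolution p r α β s y v) {x : ℝ}
    (hx : x ∈ s) (hne : v x ≠ 0) : HasDerivAt (fun t => y t / oddPow r (v t))
      (α x + -(r - 1) * β x * |y x / oddPow r (v x)| ^ p) x := by
  have hv := oddPow_ne_zero (p := r) hne
  have habs : 0 < |v x| := abs_pos.2 hne
  have hpow : |v x| ^ (r - 2) * |v x| ^ r = oddPow r (v x) ^ 2 := by
    rw [← sq_abs, abs_oddPow hpr.symm.lt, ← Real.rpow_natCast, ← Real.rpow_mul habs.le,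
      ← Real.rpow_add habs]
    congr 1
    push_cast
    ring
  refine ((h x hx).1.div ((hasDerivAt_oddPow r hne).comp x (h x hx).2) hv).congr_deriv ?_
  rw [abs_div, Real.div_rpow (abs_nonneg _) (abs_nonneg _), abs_oddPow_rpow hpr.symm,
    ← oddPow_mul_self hpr.ne_zero (y x), Function.comp_apply]
  have := Real.rpow_pos_of_pos habs r
  field_simp
  linear_combination -(r - 1) * β x * oddPow p (y x) * y x * hpow

lemma eventually_cross_eq (hpr : p.HolderConjugate r) (h : IsSolution p r α β (Icc a b) y v)
    (h' : IsSolution p r α β (Icc a b) u w) (hβ : ∀ x ∈ Icc a b, |β x| ≤ M) {x : ℝ}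
    (hx : x ∈ Ico a b) (hv : v x ≠ 0) (hw : w x ≠ 0)
    (hcross : y x * oddPow r (w x) = u x * oddPow r (v x)) :
    ∀ᶠ t in 𝓝[>] x, y t * oddPow r (w t) = u t * oddPow r (v t) := by
  have hne := ((h x (Ico_subset_Icc_self hx)).2.continuousAt.eventually_ne hv).and
    ((h' x (Ico_subset_Icc_self hx)).2.continuousAt.eventually_ne hw)
  obtain ⟨d, hd, hsub⟩ := mem_nhdsGE_iff_exists_Icc_subset.1
    (inter_mem (mem_nhdsWithin_of_mem_nhds hne) (Icc_mem_nhdsGE_of_mem hx))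
  have hquot := eqOn_of_riccati hpr.lt (M := ((r - 1) * M).toNNReal)
    (f := fun t => y t / oddPow r (v t)) (g := fun t => u t / oddPow r (w t))
    (fun t ht => ?_) (fun t ht => h.hasDerivAt_div hpr (hsub ht).2 (hsub ht).1.1)
    (fun t ht => h'.hasDerivAt_div hpr (hsub ht).2 (hsub ht).1.2)
    ((div_eq_div_iff (oddPow_ne_zero hv) (oddPow_ne_zero hw)).2 hcross)
  · filter_upwards [Icc_mem_nhdsGT hd] with t ht
    exact (div_eq_div_iff (oddPow_ne_zero (hsub ht).1.1) (oddPow_ne_zero (hsub ht).1.2)).1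
      (hquot ht)
  · rw [abs_mul, abs_neg, abs_of_pos hpr.symm.sub_one_pos]
    exact (mul_le_mul_of_nonneg_left (hβ t (hsub ht).2) hpr.symm.sub_one_pos.le).trans
      (Real.le_coe_toNNReal _)

lemma cross_eq_iff_swap (hpr : p.HolderConjugate r) {a b c d : ℝ} :
    a * oddPow r d = c * oddPow r b ↔ b * oddPow p c = d * oddPow p a := by
  rw [← (strictMono_oddPow hpr.lt).injective.eq_iff, oddPow_mul, oddPow_mul,
    oddPow_oddPow hpr.symm, oddPow_oddPow hpr.symm, mul_comm, eq_comm, mul_comm b]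

lemma eq_zero_of_cross_eq {a b c d : ℝ} (h : a * oddPow r d = c * oddPow r b)
    (hab : ¬(a = 0 ∧ b = 0)) (hb : b = 0) : d = 0 := by
  rw [hb, oddPow_zero, mul_zero] at h
  by_contra hd
  exact oddPow_ne_zero hd ((mul_eq_zero.1 h).resolve_left fun ha => hab ⟨ha, hb⟩)

/-- Where `v ≠ 0` the quotients `y / v^{(r-1)}` satisfy a Riccati equation, where `y ≠ 0` the
quotients `v / y^{(p-1)}` do. -/
lemma cross_eq (hpr : p.HolderConjugate r) (h : IsSolution p r α β (Icc a b) y v)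
    (h' : IsSolution p r α β (Icc a b) u w) (hα : ∀ x ∈ Icc a b, |α x| ≤ M)
    (hβ : ∀ x ∈ Icc a b, |β x| ≤ M) (hy : ∀ x ∈ Icc a b, ¬(y x = 0 ∧ v x = 0))
    (hu : ∀ x ∈ Icc a b, ¬(u x = 0 ∧ w x = 0))
    (ha : y a * oddPow r (w a) = u a * oddPow r (v a)) :
    ∀ x ∈ Icc a b, y x * oddPow r (w x) = u x * oddPow r (v x) := by
  have hcont : ∀ {y v : ℝ → ℝ}, IsSolution p r α β (Icc a b) y v →
      ContinuousOn y (Icc a b) ∧ ContinuousOn (fun x => oddPow r (v x)) (Icc a b) := fun h =>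
    ⟨fun x hx => (h x hx).1.continuousAt.continuousWithinAt, fun x hx =>
      ((continuous_oddPow hpr.symm.lt).continuousAt.comp
        (h x hx).2.continuousAt).continuousWithinAt⟩
  have hclosed : IsClosed ({x | y x * oddPow r (w x) - u x * oddPow r (v x) = 0} ∩ Icc a b) := by
    rw [inter_comm]
    exact (((hcont h).1.mul (hcont h').2).sub ((hcont h').1.mul
      (hcont h).2)).preimage_isClosed_of_isClosed isClosed_Icc isClosed_singleton
  refine fun x hx => sub_eq_zero.1 (hclosed.Icc_subset_of_forall_mem_nhdsWithin (sub_eq_zero.2 ha)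
    (fun t ht => ?_) hx)
  have hcross := sub_eq_zero.1 ht.1
  simp only [sub_eq_zero]
  have htI := Ico_subset_Icc_self ht.2
  by_cases hv : v t = 0
  · have hyt : y t ≠ 0 := fun h0 => hy t htI ⟨h0, hv⟩
    have hwt : w t = 0 := eq_zero_of_cross_eq hcross (hy t htI) hv
    have hut : u t ≠ 0 := fun h0 => hu t htI ⟨h0, hwt⟩
    filter_upwards [h.swap.eventually_cross_eq hpr.symm h'.swap hα ht.2 hyt hut
      ((cross_eq_iff_swap hpr).1 hcross)] with s hs
    exact (cross_eq_iff_swap hpr).2 hs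
  · have hwt : w t ≠ 0 := mt (eq_zero_of_cross_eq hcross.symm (hu t htI)) hv
    exact h.eventually_cross_eq hpr h' hβ ht.2 hv hwt hcross

lemma eq_zero_right_of_eq_zero (hpr : p.HolderConjugate r)
    (h : IsSolution p r α β (Icc a b) y v) (h' : IsSolution p r α β (Icc a b) u w)
    (hα : ∀ x ∈ Icc a b, |α x| ≤ M) (hβ : ∀ x ∈ Icc a b, |β x| ≤ M)
    (hy : ∃ x ∈ Icc a b, y x ≠ 0) (hu : ∃ x ∈ Icc a b, u x ≠ 0) (hya : y a = 0) (hua : u a = 0)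
    (hyb : y b = 0) : u b = 0 := by
  have hnontrivial : ∀ {y v : ℝ → ℝ}, IsSolution p r α β (Icc a b) y v →
      (∃ x ∈ Icc a b, y x ≠ 0) → ∀ x ∈ Icc a b, ¬(y x = 0 ∧ v x = 0) :=
    fun h ⟨_, ht, hne⟩ _ hx h0 => hne (h.eq_zero_of_eq_zero hpr hα hβ hx h0 ht).1
  have hb : b ∈ Icc a b := hy.elim fun _ hx => right_mem_Icc.2 (hx.1.1.trans hx.1.2)
  have hcross := h.cross_eq hpr h' hα hβ (hnontrivial h hy) (hnontrivial h' hu)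
    (by rw [hya, hua, zero_mul, zero_mul]) b hb
  exact eq_zero_of_cross_eq ((cross_eq_iff_swap hpr).1 hcross)
    (fun h0 => hnontrivial h hy b hb h0.symm) hyb

end IsSolution

/-! ### Eigenvalues and the Prüfer angle -/

lemma isDirichletEigenvalue_iff_isSolution {p r : ℝ} (hpr : p.HolderConjugate r) {q w : ℝ → ℝ}
    {a b lam : ℝ} (hw : ∀ x ∈ Icc a b, w x = lam - q x) :
    IsDirichletEigenvalue p q a b lam ↔ ∃ y v : ℝ → ℝ,
      (∃ x ∈ Icc a b, y x ≠ 0) ∧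
      IsSolution p r (fun _ => 1) (fun x => -(p - 1) * w x) (Icc a b) y v ∧
      y a = 0 ∧ y b = 0 := by
  constructor
  · rintro ⟨y, yd, hne, hy, hyd, h0, h1⟩
    refine ⟨y, fun x => oddPow p (yd x), hne, fun x hx => ⟨?_, ?_⟩, h0, h1⟩
    · rw [one_mul, oddPow_oddPow hpr]
      exact hy x hx
    · simp only [hw x hx]
      exact hyd x hx
  · rintro ⟨y, v, hne, h, h0, h1⟩
    refine ⟨y, fun x => oddPow r (v x), hne, fun x hx => by simpa using (h x hx).1,
      fun x hx => ?_, h0, h1⟩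
    have hv : (fun t => |oddPow r (v t)| ^ (p - 2) * oddPow r (v t)) = v :=
      funext fun t => oddPow_oddPow hpr.symm (v t)
    rw [hv, ← hw x hx]
    exact (h x hx).2

/-- The coefficient `k` of the Prüfer angle equation `φ' = z + k F(φ)` for
`((y')^{(p-1)})' = -(p-1) w y^{(p-1)}` in polar coordinates `y = ρ S(φ)`, `y' = z ρ C(φ)`. -/
noncomputable def prueferCoeff (p z : ℝ) (w : ℝ →ᵇ ℝ) : ℝ →ᵇ ℝ :=
  z ^ (1 - p) • w - BoundedContinuousFunction.const ℝ z

lemma prueferCoeff_apply (p z : ℝ) (w : ℝ →ᵇ ℝ) (x : ℝ) :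
    prueferCoeff p z w x = z ^ (1 - p) * w x - z := rfl

namespace GenSine

variable {p : ℝ} {T : GenSine p}

lemma IsAngle.pos {a : ℝ} {k : ℝ →ᵇ ℝ} {φ : ℝ → ℝ} (h : T.IsAngle a k φ) (ha : 0 < a)
    (h0 : φ 0 = 0) {x : ℝ} (hx : 0 < x) : 0 < φ x := by
  have hzero : T.IsAngle 0 0 (fun _ => 0) := fun x => by simpa using hasDerivAt_const x (0 : ℝ)
  have hdiff : ∀ t, 0 < (a - 0) + (k t - (0 : ℝ →ᵇ ℝ) t) * T.F 0 := fun t => by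
    simpa [T.F_zero] using ha
  exact hzero.lt_of_exists_lt h h0.ge hx (fun t _ => (hdiff t).le)
    ⟨0, left_mem_Icc.2 hx.le, hdiff 0⟩

lemma IsAngle.exists_F_pos {a : ℝ} {k : ℝ →ᵇ ℝ} {φ : ℝ → ℝ} (h : T.IsAngle a k φ) (ha : 0 < a)
    (h0 : φ 0 = 0) {x : ℝ} (hx : 0 < x) : ∃ t ∈ Icc 0 x, 0 < T.F (φ t) := by
  have hP := T.P_pos
  obtain ⟨t, ht, hφt⟩ := intermediate_value_Icc hx.le h.continuous.continuousOn
    (show min (φ x) (T.P / 2) ∈ Icc (φ 0) (φ x) from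
      ⟨h0.trans_le (le_min (h.pos ha h0 hx).le (by positivity)), min_le_left _ _⟩)
  refine ⟨t, ht, hφt ▸ T.F_pos (lt_min (h.pos ha h0 hx) (by positivity)) ?_⟩
  linarith [min_le_right (φ x) (T.P / 2)]

lemma IsAngle.exists_isSolution {r z : ℝ} (hpr : p.HolderConjugate r) (hz : 0 < z) {w : ℝ →ᵇ ℝ}
    {φ : ℝ → ℝ} (hφ : T.IsAngle z (prueferCoeff p z w) φ) :
    ∃ ρ : ℝ → ℝ, (∀ x, 0 < ρ x) ∧ IsSolution p r (fun _ => 1) (fun x => -(p - 1) * w x) univ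
      (fun x => ρ x * T.S (φ x)) (fun x => oddPow p (z * ρ x * T.C (φ x))) := by
  set k := prueferCoeff p z w
  let J : ℝ → ℝ := fun x => ∫ t in (0 : ℝ)..x, -k t * T.f (φ t)
  have hJ : ∀ x, HasDerivAt J (-k x * T.f (φ x)) x := fun x =>
    ((k.continuous.neg.mul (T.continuous_f.comp hφ.continuous)).integral_hasStrictDerivAt
      0 x).hasDerivAt
  refine ⟨fun x => Real.exp (J x), fun x => Real.exp_pos _, fun x _ => ⟨?_, ?_⟩⟩
  · refine ((hJ x).exp.fun_mul ((T.hasDerivAt_S (φ x)).comp x (hφ x))).congr_deriv ?_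
    have hF : oddPow p (T.S (φ x)) * T.S (φ x) = T.F (φ x) := oddPow_mul_self T.pos.ne' _
    rw [oddPow_oddPow hpr, f, Function.comp_apply]
    linear_combination -Real.exp (J x) * k x * T.C (φ x) * hF
  · have hexp : ∀ t, oddPow p (z * Real.exp (J t)) = z ^ (p - 1) * Real.exp ((p - 1) * J t) :=
      fun t => by
        rw [oddPow_mul, oddPow_of_pos hz, oddPow_of_pos (Real.exp_pos _), ← Real.exp_mul,
          mul_comm (J t)]
    simp only [oddPow_mul _ (z * _) (T.C _), hexp]
    refine ((((hJ x).const_mul (p - 1)).exp.const_mul (z ^ (p - 1))).fun_mul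
      ((T.hasDerivAt_oddPow_C (φ x)).comp x (hφ x))).congr_deriv ?_
    have hC : oddPow p (T.C (φ x)) * T.C (φ x) = 1 - T.F (φ x) := by
      rw [oddPow_mul_self T.pos.ne', F, ← T.pythagoras (φ x), add_sub_cancel_left]
    have hk : z ^ (p - 1) * (k x + z) = w x := by
      rw [prueferCoeff_apply, sub_add_cancel, ← mul_assoc, ← Real.rpow_add hz]
      simp
    have hexp' : oddPow p (Real.exp (J x)) = Real.exp ((p - 1) * J x) := by
      rw [oddPow_of_pos (Real.exp_pos _), ← Real.exp_mul, mul_comm]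
    rw [oddPow_mul, hexp', f, Function.comp_apply]
    linear_combination -(z ^ (p - 1) * Real.exp ((p - 1) * J x) * (p - 1) * k x *
      oddPow p (T.S (φ x))) * hC - (p - 1) * Real.exp ((p - 1) * J x) * oddPow p (T.S (φ x)) * hk

lemma IsAngle.isDirichletEigenvalue_iff {z lam : ℝ} {q φ : ℝ → ℝ} {w : ℝ →ᵇ ℝ} (hz : 0 < z)
    (hw : ∀ x ∈ Icc 0 1, w x = lam - q x) (hφ : T.IsAngle z (prueferCoeff p z w) φ)
    (h0 : φ 0 = 0) : IsDirichletEigenvalue p q 0 1 lam ↔ T.S (φ 1) = 0 := by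
  have hpr := Real.HolderConjugate.conjExponent T.one_lt
  obtain ⟨ρ, hρ, hpolar⟩ := hφ.exists_isSolution hpr hz
  replace hpolar := hpolar.mono (subset_univ (Icc 0 1))
  obtain ⟨t, ht, hF⟩ := hφ.exists_F_pos hz h0 one_pos
  have hpolar_ne : ∃ x ∈ Icc (0 : ℝ) 1, ρ x * T.S (φ x) ≠ 0 :=
    ⟨t, ht, mul_ne_zero (hρ t).ne' fun hS => hF.ne' (by
      rw [F, hS, abs_zero, Real.zero_rpow T.pos.ne'])⟩
  have hpolar_zero : ρ 0 * T.S (φ 0) = 0 := by rw [h0, T.S_zero, mul_zero]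
  rw [isDirichletEigenvalue_iff_isSolution hpr hw]
  constructor
  · rintro ⟨y, v, hy, hsol, hy0, hy1⟩
    have hbound : ∀ x ∈ Icc (0 : ℝ) 1, |-(p - 1) * w x| ≤ max 1 ((p - 1) * ‖w‖) := fun x _ => by
      rw [abs_mul, abs_neg, abs_of_pos T.sub_one_pos]
      exact le_max_of_le_right
        (mul_le_mul_of_nonneg_left (w.norm_coe_le_norm x) T.sub_one_pos.le)
    have hend : ρ 1 * T.S (φ 1) = 0 := hsol.eq_zero_right_of_eq_zero
      (u := fun x => ρ x * T.S (φ x)) hpr hpolar (by simp) hbound hy hpolar_ne hy0 hpolar_zero hy1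
    exact (mul_eq_zero.1 hend).resolve_left (hρ 1).ne'
  · exact fun h1 => ⟨_, _, hpolar_ne, hpolar, hpolar_zero, by rw [h1, mul_zero]⟩

lemma S_eq_zero_iff_of_pos {x : ℝ} (hx : 0 < x) :
    T.S x = 0 ↔ ∃ k : ℕ, x = (k + 1) * T.P := by
  rw [T.S_eq_zero_iff]
  constructor
  · rintro ⟨k, rfl⟩
    have hk : 0 < k := by exact_mod_cast pos_of_mul_pos_left hx T.P_pos.le
    lift k to ℕ using hk.le
    exact ⟨k - 1, by rw [← Nat.cast_add_one, Nat.sub_add_cancel (by exact_mod_cast hk)]; rfl⟩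
  · rintro ⟨k, rfl⟩
    exact ⟨k + 1, by push_cast; rfl⟩

end GenSine

/-- The indices `a i` with `θ (Λ i) = (a i + 1) P` form a strictly increasing surjection of `ℕ`. -/
lemma eq_mul_of_strictMono_enumeration {θ : ℝ → ℝ} (hθ : Continuous θ) (hmono : StrictMono θ)
    {P c : ℝ} (hP : 0 < P) (hc : θ c < P) {Λ : ℕ → ℝ} (hΛ : StrictMono Λ)
    (hrange : ∀ μ, (∃ k : ℕ, θ μ = (k + 1) * P) ↔ μ ∈ range Λ) (i : ℕ) :
    θ (Λ i) = (i + 1) * P := by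
  choose a ha using fun i => (hrange (Λ i)).2 ⟨i, rfl⟩
  have ha_mono : StrictMono a := fun i j hij => by
    have := hmono (hΛ hij)
    rw [ha, ha, mul_lt_mul_iff_left₀ hP, add_lt_add_iff_right] at this
    exact_mod_cast this
  have ha_surj : Function.Surjective a := fun k => by
    have hle : (k + 1) * P ≤ θ (Λ k) := by
      rw [ha]
      gcongr
      exact ha_mono.le_apply
    have hPk : P ≤ (k + 1) * P := le_mul_of_one_le_left hP.le (by simp)
    obtain ⟨μ, hμ⟩ := mem_range_of_exists_le_of_exists_ge hθ ⟨c, (hc.le.trans hPk)⟩ ⟨_, hle⟩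
    obtain ⟨i, rfl⟩ := (hrange μ).1 ⟨k, hμ⟩
    refine ⟨i, ?_⟩
    rw [ha, mul_left_inj' hP.ne', add_left_inj] at hμ
    exact_mod_cast hμ
  have hid : a i = i := DFunLike.congr_fun
    (Subsingleton.elim (ha_mono.orderIsoOfSurjective a ha_surj) (OrderIso.refl ℕ)) i
  rw [ha, hid]

namespace GenSine

variable {p : ℝ} {T : GenSine p}

lemma continuous_apply_of_isAngle_prueferCoeff {z : ℝ} {g : ℝ →ᵇ ℝ} {φ : ℝ → ℝ → ℝ}
    (h0 : ∀ lam, φ lam 0 = 0)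
    (hφ : ∀ lam, T.IsAngle z (prueferCoeff p z (.const ℝ lam + g)) (φ lam)) (x : ℝ) :
    Continuous fun lam => φ lam x := by
  have hcoeff : Continuous fun lam : ℝ => z ^ (1 - p) • (lam • (1 : ℝ →ᵇ ℝ) + g) - .const ℝ z := by
    fun_prop
  replace hcoeff : Continuous fun lam : ℝ => prueferCoeff p z (.const ℝ lam + g) :=
    hcoeff.congr fun lam => by
      ext x
      simp [prueferCoeff_apply, mul_add]
  exact (T.continuous_isAngle_family continuous_const hcoeff h0 hφ).comp
    (Continuous.prodMk_left x)

lemma strictMono_apply_of_isAngle_prueferCoeff {z : ℝ} (hz : 0 < z) {g : ℝ →ᵇ ℝ}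
    {φ : ℝ → ℝ → ℝ} (h0 : ∀ lam, φ lam 0 = 0)
    (hφ : ∀ lam, T.IsAngle z (prueferCoeff p z (.const ℝ lam + g)) (φ lam)) {x : ℝ}
    (hx : 0 < x) : StrictMono fun lam => φ lam x := by
  intro s t hst
  have hpos : 0 < z ^ (1 - p) * (t - s) := mul_pos (Real.rpow_pos_of_pos hz _) (sub_pos.2 hst)
  have hdiff : ∀ y, (z - z) + (prueferCoeff p z (.const ℝ t + g) y -
      prueferCoeff p z (.const ℝ s + g) y) * T.F (φ s y) =
      z ^ (1 - p) * (t - s) * T.F (φ s y) := fun y => by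
    simp only [prueferCoeff_apply, BoundedContinuousFunction.add_apply,
      BoundedContinuousFunction.const_apply]
    ring
  obtain ⟨y, hy, hF⟩ := (hφ s).exists_F_pos hz (h0 s) hx
  refine (hφ s).lt_of_exists_lt (hφ t) (by rw [h0, h0]) hx (fun y _ => ?_) ⟨y, hy, ?_⟩
  · exact (mul_nonneg hpos.le (T.F_nonneg _)).trans_eq (hdiff y).symm
  · exact (mul_pos hpos hF).trans_eq (hdiff y).symm

lemma IsAngle.lt_P_of_nonpos {z : ℝ} (hz : 0 < z) {w : ℝ →ᵇ ℝ} (hw : ∀ x, w x ≤ 0)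
    {φ : ℝ → ℝ} (hφ : T.IsAngle z (prueferCoeff p z w) φ) (h0 : φ 0 = 0) {x : ℝ} (hx : 0 ≤ x) :
    φ x < T.P := by
  have hhalf : T.IsAngle z (.const ℝ (-z)) fun _ => T.P / 2 := fun x => by
    simpa [T.F_half] using hasDerivAt_const x (T.P / 2)
  refine (hφ.lt_of_lt hhalf ?_ hx fun t _ => ?_).trans (half_lt_self T.P_pos)
  · rw [h0]
    exact half_pos T.P_pos
  · have hnonpos : z ^ (1 - p) * w t ≤ 0 :=
      mul_nonpos_of_nonneg_of_nonpos (Real.rpow_nonneg hz.le _) (hw t)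
    have hdiff : 0 ≤ -z - (z ^ (1 - p) * w t - z) := by linarith
    rw [sub_self, zero_add]
    exact mul_nonneg hdiff (T.F_nonneg _)

lemma IsAngle.apply_one_eq_mul {z : ℝ} (hz : 0 < z) {q : ℝ → ℝ} {g : ℝ →ᵇ ℝ}
    (hg : EqOn g (-q) (Icc 0 1)) {Λ : ℕ → ℝ} (hΛ : StrictMono Λ)
    (hEig : ∀ μ, IsDirichletEigenvalue p q 0 1 μ ↔ μ ∈ range Λ) (i : ℕ) {φ : ℝ → ℝ}
    (h0 : φ 0 = 0) (hφ : T.IsAngle z (prueferCoeff p z (.const ℝ (Λ i) + g)) φ) :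
    φ 1 = (i + 1) * T.P := by
  choose θ hθ0 hθ using fun lam => T.exists_isAngle z (prueferCoeff p z (.const ℝ lam + g))
  have hlow : θ (-‖g‖) 1 < T.P := (hθ _).lt_P_of_nonpos hz (fun x => by
    simpa using (le_abs_self _).trans (g.norm_coe_le_norm x)) (hθ0 _) zero_le_one
  have hcount := eq_mul_of_strictMono_enumeration
    (continuous_apply_of_isAngle_prueferCoeff hθ0 hθ 1)
    (strictMono_apply_of_isAngle_prueferCoeff hz hθ0 hθ one_pos) T.P_pos hlow hΛ (fun μ => ?_) i
  · rw [← hcount]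
    exact hφ.eqOn (hθ _) (h0.trans (hθ0 _).symm) (fun _ _ => rfl) (right_mem_Icc.2 zero_le_one)
  · rw [← hEig, (hθ μ).isDirichletEigenvalue_iff hz (fun x hx => ?_) (hθ0 μ),
      T.S_eq_zero_iff_of_pos ((hθ μ).pos hz (hθ0 μ) one_pos)]
    simp [hg hx, sub_eq_add_neg]

end GenSine

/-! ### The scaling density in the angle variable -/

lemma le_of_hasDerivAt_nonneg {G G' : ℝ → ℝ} {a b : ℝ} (hab : a ≤ b)
    (hG : ∀ x, HasDerivAt G (G' x) x) (h : ∀ x ∈ Icc a b, 0 ≤ G' x) : G a ≤ G b :=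
  monotoneOn_of_hasDerivWithinAt_nonneg (convex_Icc a b)
    (fun x _ => (hG x).continuousAt.continuousWithinAt) (fun x _ => (hG x).hasDerivWithinAt)
    (fun x hx => h x (interior_subset hx)) (left_mem_Icc.2 hab) (right_mem_Icc.2 hab) hab

namespace GenSine

variable {p : ℝ} (T : GenSine p) (W : ℝ → ℝ)

/-- The logarithm of the integrating factor `exp ∫ k p f(φ)` of the linearised angle equation
`φ' = a + k F(φ)`, as a function of the angle `u = φ(x)`, when `k = a W(φ)`. -/
noncomputable def logWeight (u : ℝ) : ℝ :=
  ∫ t in (0 : ℝ)..u, W t * (p * T.f t) / (1 + W t * T.F t)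

/-- The density of `k exp(-∫ k p f(φ)) dx` with respect to the angle `u = φ(x)`, for an angle with
`φ' = a + k F(φ)` and `k = a W(φ)`. -/
noncomputable def phaseWeight (u : ℝ) : ℝ :=
  Real.exp (-T.logWeight W u) * (W u / (1 + W u * T.F u))

/-- The density, in the angle variable `u`, of the integral whose sign decides how the rescaled
angle `exp(-s) φ_s` varies with the scale `s`. -/
noncomputable def scaleDensity (u : ℝ) : ℝ := T.phaseWeight W u * (T.F u - u * T.f u)

variable {W}

lemma one_add_mul_F_pos {w : ℝ} (hw : 0 ≤ w) (u : ℝ) : 0 < 1 + w * T.F u :=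
  add_pos_of_pos_of_nonneg one_pos (mul_nonneg hw (T.F_nonneg u))

lemma continuous_logWeight_integrand (hW : Continuous W) (h0 : ∀ u, 0 ≤ W u) :
    Continuous fun u => W u * (p * T.f u) / (1 + W u * T.F u) := by
  have hf := T.continuous_f
  have hF := T.continuous_F
  exact Continuous.div (by fun_prop) (by fun_prop) fun u => (T.one_add_mul_F_pos (h0 u) u).ne'

lemma hasDerivAt_logWeight (hW : Continuous W) (h0 : ∀ u, 0 ≤ W u) (u : ℝ) :
    HasDerivAt (T.logWeight W) (W u * (p * T.f u) / (1 + W u * T.F u)) u :=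
  ((T.continuous_logWeight_integrand hW h0).integral_hasStrictDerivAt 0 u).hasDerivAt

lemma continuous_phaseWeight (hW : Continuous W) (h0 : ∀ u, 0 ≤ W u) :
    Continuous (T.phaseWeight W) := by
  have hF := T.continuous_F
  have hL : Continuous (T.logWeight W) :=
    continuous_iff_continuousAt.2 fun u => (T.hasDerivAt_logWeight hW h0 u).continuousAt
  exact hL.neg.rexp.mul (hW.div (by fun_prop) fun u => (T.one_add_mul_F_pos (h0 u) u).ne')

lemma continuous_scaleDensity (hW : Continuous W) (h0 : ∀ u, 0 ≤ W u) :
    Continuous (T.scaleDensity W) :=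
  (T.continuous_phaseWeight hW h0).mul
    (T.continuous_F.sub (continuous_id.mul T.continuous_f))

lemma phaseWeight_nonneg (h0 : ∀ u, 0 ≤ W u) (u : ℝ) : 0 ≤ T.phaseWeight W u :=
  mul_nonneg (Real.exp_pos _).le (div_nonneg (h0 u) (T.one_add_mul_F_pos (h0 u) u).le)

lemma F_nat_mul (k : ℕ) : T.F (k * T.P) = 0 := by
  simpa [T.F_zero] using T.F_add_nat_mul 0 k

lemma f_nonneg_of_nat_mul_le {k : ℕ} {u : ℝ} (hu : u ∈ Icc (k * T.P) (k * T.P + T.P / 2)) :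
    0 ≤ T.f u := by
  rw [← sub_add_cancel u (k * T.P), T.f_add_nat_mul]
  exact T.f_nonneg (by linarith [hu.1]) (by linarith [hu.2])

lemma f_nonpos_of_le_nat_mul {k : ℕ} {u : ℝ} (hu : u ∈ Icc (k * T.P - T.P / 2) (k * T.P)) :
    T.f u ≤ 0 := by
  rw [← sub_sub_cancel (k * T.P) u, T.f_nat_mul_sub, neg_nonpos]
  exact T.f_nonneg (by linarith [hu.2]) (by linarith [hu.1])

lemma hasDerivAt_neg_exp_neg_logWeight_mul (hW : Continuous W) (h0 : ∀ u, 0 ≤ W u) (c u : ℝ) :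
    HasDerivAt (fun u => -(Real.exp (-T.logWeight W u) * (1 + c * T.F u)))
      (Real.exp (-T.logWeight W u) * (p * ((W u - c) * T.f u) / (1 + W u * T.F u))) u := by
  have hden := (T.one_add_mul_F_pos (h0 u) u).ne'
  refine (((T.hasDerivAt_logWeight hW h0 u).fun_neg.exp).fun_mul
    (((T.hasDerivAt_F u).const_mul c).const_add 1)).fun_neg.congr_deriv ?_
  field_simp
  ring

lemma exp_neg_logWeight_add_mul_le (hW : Continuous W) (h0 : ∀ u, 0 ≤ W u) (hanti : Antitone W)
    (k : ℕ) {τ : ℝ} (hτ : τ ∈ Icc 0 (T.P / 2)) :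
    Real.exp (-T.logWeight W (k * T.P + τ)) * (1 + W (k * T.P + τ) * T.F τ) ≤
      Real.exp (-T.logWeight W (k * T.P)) := by
  have hle := le_of_hasDerivAt_nonneg (le_add_of_nonneg_right hτ.1)
    (T.hasDerivAt_neg_exp_neg_logWeight_mul hW h0 (W (k * T.P + τ))) fun u hu =>
      mul_nonneg (Real.exp_pos _).le <| div_nonneg (mul_nonneg T.pos.le <|
        mul_nonneg (sub_nonneg.2 (hanti hu.2))
          (T.f_nonneg_of_nat_mul_le (k := k) ⟨hu.1, hu.2.trans (add_le_add le_rfl hτ.2)⟩))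
        (T.one_add_mul_F_pos (h0 u) u).le
  rw [neg_le_neg_iff, T.F_nat_mul, add_comm (k * T.P : ℝ) τ, T.F_add_nat_mul] at hle
  simpa [add_comm] using hle

lemma le_exp_neg_logWeight_sub_mul (hW : Continuous W) (h0 : ∀ u, 0 ≤ W u) (hanti : Antitone W)
    (k : ℕ) {τ : ℝ} (hτ : τ ∈ Icc 0 (T.P / 2)) :
    Real.exp (-T.logWeight W (k * T.P)) ≤
      Real.exp (-T.logWeight W (k * T.P - τ)) * (1 + W (k * T.P - τ) * T.F τ) := by
  have hle := le_of_hasDerivAt_nonneg (sub_le_self _ hτ.1)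
    (T.hasDerivAt_neg_exp_neg_logWeight_mul hW h0 (W (k * T.P - τ))) fun u hu =>
      mul_nonneg (Real.exp_pos _).le <| div_nonneg (mul_nonneg T.pos.le <|
        mul_nonneg_of_nonpos_of_nonpos (sub_nonpos.2 (hanti hu.1))
          (T.f_nonpos_of_le_nat_mul (k := k) ⟨(sub_le_sub_left hτ.2 _).trans hu.1, hu.2⟩))
        (T.one_add_mul_F_pos (h0 u) u).le
  rw [neg_le_neg_iff, T.F_nat_mul, T.F_nat_mul_sub] at hle
  simpa using hle

lemma div_sq_le_div_sq {F a b : ℝ} (ha : 0 ≤ a) (hab : a ≤ b) (hb : b ≤ 1) (hF : 0 ≤ F)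
    (hF1 : F ≤ 1) : a / (1 + a * F) ^ 2 ≤ b / (1 + b * F) ^ 2 := by
  have hb0 := ha.trans hab
  have haF : a * F ≤ 1 := mul_le_one₀ (hab.trans hb) hF hF1
  have hbF : b * F ≤ 1 := mul_le_one₀ hb hF hF1
  have hprod : (a * F) * (b * F) ≤ 1 := mul_le_one₀ haF (mul_nonneg hb0 hF) hbF
  rw [div_le_div_iff₀ (pow_pos (by positivity) 2) (pow_pos (by positivity) 2)]
  linear_combination mul_nonneg (sub_nonneg.2 hab) (sub_nonneg.2 hprod)

lemma phaseWeight_add_le_sub (hW : Continuous W) (h0 : ∀ u, 0 ≤ W u) (h1 : ∀ u, W u ≤ 1)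
    (hanti : Antitone W) (k : ℕ) {τ : ℝ} (hτ : τ ∈ Icc 0 (T.P / 2)) :
    T.phaseWeight W (k * T.P + τ) ≤ T.phaseWeight W (k * T.P - τ) := by
  have hsplit : ∀ u, T.F u = T.F τ → T.phaseWeight W u =
      Real.exp (-T.logWeight W u) * (1 + W u * T.F τ) * (W u / (1 + W u * T.F τ) ^ 2) :=
    fun u hu => by
      have hden := T.one_add_mul_F_pos (h0 u) τ
      rw [phaseWeight, hu]
      field_simp
  rw [hsplit _ (by rw [add_comm, T.F_add_nat_mul]), hsplit _ (T.F_nat_mul_sub τ k)]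
  refine mul_le_mul ((T.exp_neg_logWeight_add_mul_le hW h0 hanti k hτ).trans
    (T.le_exp_neg_logWeight_sub_mul hW h0 hanti k hτ))
    (div_sq_le_div_sq (h0 _) (hanti ?_) (h1 _) (T.F_nonneg τ) (T.F_le_one τ))
    (div_nonneg (h0 _) (sq_nonneg _))
    (mul_nonneg (Real.exp_pos _).le (T.one_add_mul_F_pos (h0 _) τ).le)
  linarith [hτ.1]

lemma scaleDensity_nonneg (h0 : ∀ u, 0 ≤ W u) {u : ℝ} (hu : u ∈ Icc 0 (T.P / 2)) :
    0 ≤ T.scaleDensity W u :=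
  mul_nonneg (T.phaseWeight_nonneg h0 u) (sub_nonneg.2 (T.mul_f_le_F hu.1 hu.2))

lemma scaleDensity_nonneg_of_le_nat_mul (h0 : ∀ u, 0 ≤ W u) {k : ℕ} (hk : 1 ≤ k) {u : ℝ}
    (hu : u ∈ Icc (k * T.P - T.P / 2) (k * T.P)) : 0 ≤ T.scaleDensity W u := by
  have hPk : T.P ≤ k * T.P := le_mul_of_one_le_left T.P_pos.le (by exact_mod_cast hk)
  have hu0 : 0 ≤ u := by linarith [hu.1, T.P_pos]
  exact mul_nonneg (T.phaseWeight_nonneg h0 u) (sub_nonneg.2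
    ((mul_nonpos_of_nonneg_of_nonpos hu0 (T.f_nonpos_of_le_nat_mul hu)).trans (T.F_nonneg u)))

lemma scaleDensity_add_sub_nonneg (hW : Continuous W) (h0 : ∀ u, 0 ≤ W u) (h1 : ∀ u, W u ≤ 1)
    (hanti : Antitone W) {k : ℕ} (hk : 1 ≤ k) {τ : ℝ} (hτ : τ ∈ Icc 0 (T.P / 2)) :
    0 ≤ T.scaleDensity W (k * T.P + τ) + T.scaleDensity W (k * T.P - τ) := by
  have hPk : T.P ≤ k * T.P := le_mul_of_one_le_left T.P_pos.le (by exact_mod_cast hk)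
  have hfactor : 0 ≤ T.F τ + (k * T.P - τ) * T.f τ :=
    add_nonneg (T.F_nonneg τ) (mul_nonneg (by linarith [hτ.2, T.P_pos]) (T.f_nonneg hτ.1 hτ.2))
  rw [scaleDensity, scaleDensity, T.F_nat_mul_sub, T.f_nat_mul_sub, add_comm (k * T.P : ℝ) τ,
    T.F_add_nat_mul, T.f_add_nat_mul, add_comm τ]
  linear_combination
    mul_nonneg (sub_nonneg.2 (T.phaseWeight_add_le_sub hW h0 h1 hanti k hτ)) hfactor +
    2 * mul_nonneg (T.phaseWeight_nonneg h0 (k * T.P + τ))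
      (sub_nonneg.2 (T.mul_f_le_F hτ.1 hτ.2))

lemma hasDerivAt_integral_scaleDensity (hW : Continuous W) (h0 : ∀ u, 0 ≤ W u) (x : ℝ) :
    HasDerivAt (fun x => ∫ u in (0 : ℝ)..x, T.scaleDensity W u) (T.scaleDensity W x) x :=
  ((T.continuous_scaleDensity hW h0).integral_hasStrictDerivAt 0 x).hasDerivAt

/-- On `[kP - P/2, kP]` the density is nonnegative, and beyond `kP` it is compensated by its values
at the points symmetric about `kP`. -/
lemma integral_scaleDensity_le_of_mem (hW : Continuous W) (h0 : ∀ u, 0 ≤ W u)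
    (h1 : ∀ u, W u ≤ 1) (hanti : Antitone W) {k : ℕ} (hk : 1 ≤ k) {y : ℝ}
    (hy : y ∈ Icc (k * T.P - T.P / 2) (k * T.P + T.P / 2)) :
    ∫ u in (0 : ℝ)..(k * T.P - T.P / 2), T.scaleDensity W u ≤
      ∫ u in (0 : ℝ)..y, T.scaleDensity W u := by
  have hJ := T.hasDerivAt_integral_scaleDensity hW h0
  have hleft : ∀ y ∈ Icc (k * T.P - T.P / 2) (k * T.P),
      ∫ u in (0 : ℝ)..(k * T.P - T.P / 2), T.scaleDensity W u ≤
        ∫ u in (0 : ℝ)..y, T.scaleDensity W u := fun y hy =>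
    le_of_hasDerivAt_nonneg hy.1 hJ fun u hu =>
      T.scaleDensity_nonneg_of_le_nat_mul h0 hk ⟨hu.1, hu.2.trans hy.2⟩
  rcases le_total y (k * T.P) with h | h
  · exact hleft y ⟨hy.1, h⟩
  · refine (hleft (k * T.P - (y - k * T.P)) ⟨by linarith [hy.2], by linarith⟩).trans ?_
    have hreflect := le_of_hasDerivAt_nonneg (sub_nonneg.2 h)
      (fun t => ((hJ (k * T.P + t)).comp_const_add (k * T.P : ℝ) t).fun_sub
        ((hJ (k * T.P - t)).comp_const_sub (k * T.P : ℝ) t)) fun t ht => by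
          rw [sub_neg_eq_add]
          exact T.scaleDensity_add_sub_nonneg hW h0 h1 hanti hk
            ⟨ht.1, ht.2.trans (by linarith [hy.2])⟩
    simpa using hreflect

lemma integral_scaleDensity_min_le (hW : Continuous W) (h0 : ∀ u, 0 ≤ W u)
    (h1 : ∀ u, W u ≤ 1) (hanti : Antitone W) (x : ℝ) :
    ∫ u in (0 : ℝ)..(min x (T.P / 2)), T.scaleDensity W u ≤
      ∫ u in (0 : ℝ)..x, T.scaleDensity W u := by
  have hP := T.P_pos
  rcases le_total x (T.P / 2) with hx | hx
  · rw [min_eq_left hx]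
  have hhalf : ∀ k : ℕ, 1 ≤ k → ∫ u in (0 : ℝ)..(T.P / 2), T.scaleDensity W u ≤
      ∫ u in (0 : ℝ)..(k * T.P - T.P / 2), T.scaleDensity W u := fun k hk => by
    induction k, hk using Nat.le_induction with
    | base => rw [Nat.cast_one, one_mul, sub_half]
    | succ k hk ih =>
      refine ih.trans (T.integral_scaleDensity_le_of_mem hW h0 h1 hanti hk ?_)
      constructor <;> push_cast <;> linarith
  have hquot : 1 ≤ (x + T.P / 2) / T.P := (one_le_div hP).2 (by linarith)
  have hle := (le_div_iff₀ hP).1 (Nat.floor_le (zero_le_one.trans hquot))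
  have hlt := (div_lt_iff₀ hP).1 (Nat.lt_floor_add_one ((x + T.P / 2) / T.P))
  have hfloor : 1 ≤ ⌊(x + T.P / 2) / T.P⌋₊ := Nat.le_floor (by exact_mod_cast hquot)
  rw [min_eq_right hx]
  exact (hhalf _ hfloor).trans (T.integral_scaleDensity_le_of_mem hW h0 h1 hanti hfloor
    ⟨by linarith, by linarith⟩)

lemma integral_scaleDensity_nonneg (hW : Continuous W) (h0 : ∀ u, 0 ≤ W u)
    (h1 : ∀ u, W u ≤ 1) (hanti : Antitone W) {x : ℝ} (hx : 0 ≤ x) :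
    0 ≤ ∫ u in (0 : ℝ)..x, T.scaleDensity W u :=
  le_trans (intervalIntegral.integral_nonneg (le_min hx (half_pos T.P_pos).le) fun _ hu =>
    T.scaleDensity_nonneg h0 ⟨hu.1, hu.2.trans (min_le_right _ _)⟩)
    (T.integral_scaleDensity_min_le hW h0 h1 hanti x)

lemma integral_scaleDensity_pos (hW : Continuous W) (h0 : ∀ u, 0 ≤ W u)
    (h1 : ∀ u, W u ≤ 1) (hanti : Antitone W) (hW0 : 0 < W 0) {x : ℝ} (hx : 0 < x) :
    0 < ∫ u in (0 : ℝ)..x, T.scaleDensity W u := by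
  have hy : 0 < min x (T.P / 2) := lt_min hx (half_pos T.P_pos)
  have hWpos : ∀ᶠ u in 𝓝[>] (0 : ℝ), 0 < W u :=
    (hW.continuousAt.eventually (lt_mem_nhds hW0)).filter_mono nhdsWithin_le_nhds
  obtain ⟨u, hWu, hu0, huy⟩ := (hWpos.and (Ioo_mem_nhdsGT hy)).exists
  have hdensity : 0 < T.scaleDensity W u :=
    mul_pos (mul_pos (Real.exp_pos _) (div_pos hWu (T.one_add_mul_F_pos hWu.le u)))
      (sub_pos.2 (T.mul_f_lt_F hu0 (huy.le.trans (min_le_right _ _))))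
  exact (intervalIntegral.integral_pos hy (T.continuous_scaleDensity hW h0).continuousOn
    (fun t ht => T.scaleDensity_nonneg h0 ⟨ht.1.le, ht.2.trans (min_le_right _ _)⟩)
    ⟨u, ⟨hu0.le, huy.le⟩, hdensity⟩).trans_le (T.integral_scaleDensity_min_le hW h0 h1 hanti x)

/-! ### Change of variables from position to angle -/

namespace IsAngle

variable {T} {a : ℝ} {k : ℝ →ᵇ ℝ} {φ : ℝ → ℝ}

lemma strictMono (h : T.IsAngle a k φ) (ha : 0 < a) (hk : ∀ x, 0 ≤ k x) : StrictMono φ :=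
  strictMono_of_hasDerivAt_pos h fun x =>
    add_pos_of_pos_of_nonneg ha (mul_nonneg (hk x) (T.F_nonneg _))

lemma surjective (h : T.IsAngle a k φ) (ha : 0 < a) (hk : ∀ x, 0 ≤ k x) :
    Function.Surjective φ := by
  have hmono : Monotone fun x => φ x - a * x :=
    monotone_of_hasDerivAt_nonneg (fun x => (h x).fun_sub ((hasDerivAt_id x).const_mul a))
      fun x => by simpa using mul_nonneg (hk x) (T.F_nonneg _)
  refine h.continuous.surjective
    (tendsto_atTop_mono' _ ?_ (tendsto_atTop_add_const_right _ (φ 0)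
      (tendsto_id.const_mul_atTop ha)))
    (tendsto_atBot_mono' _ ?_ (tendsto_atBot_add_const_right _ (φ 0)
      (tendsto_id.const_mul_atBot ha)))
  · filter_upwards [eventually_ge_atTop 0] with x hx
    have := hmono hx
    simp only [mul_zero, sub_zero, id] at this ⊢
    linarith
  · filter_upwards [eventually_le_atBot 0] with x hx
    have := hmono hx
    simp only [mul_zero, sub_zero, id] at this ⊢
    linarith

lemma exists_profile (h : T.IsAngle a k φ) (ha : 0 < a) (hk : ∀ x, 0 ≤ k x) (hka : ∀ x, k x ≤ a)
    (hanti : Antitone k) : ∃ W : ℝ → ℝ, Continuous W ∧ (∀ u, 0 ≤ W u) ∧ (∀ u, W u ≤ 1) ∧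
      Antitone W ∧ ∀ x, k x = a * W (φ x) := by
  let e := (h.strictMono ha hk).orderIsoOfSurjective φ (h.surjective ha hk)
  have he : Continuous e.symm := e.symm.continuous
  refine ⟨fun u => k (e.symm u) / a, by fun_prop, fun u => div_nonneg (hk _) ha.le,
    fun u => (div_le_one ha).2 (hka _),
    fun u v huv => div_le_div_of_nonneg_right (hanti (e.symm.monotone huv)) ha.le, fun x => ?_⟩
  rw [mul_div_cancel₀ _ ha.ne', show e.symm (φ x) = x from e.symm_apply_apply x]

variable {W : ℝ → ℝ}

lemma logWeight_apply (h : T.IsAngle a k φ) (ha : 0 < a) (h0 : φ 0 = 0) (hW : Continuous W)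
    (hW0 : ∀ u, 0 ≤ W u) (hk : ∀ x, k x = a * W (φ x)) (x : ℝ) :
    T.logWeight W (φ x) = ∫ t in (0 : ℝ)..x, k t * (p * T.f (φ t)) := by
  have hφ := h.continuous
  have hF := T.continuous_F
  have hsubst := intervalIntegral.integral_comp_mul_deriv (a := 0) (b := x) (fun t _ => h t)
    (Continuous.continuousOn (by fun_prop)) (T.continuous_logWeight_integrand hW hW0)
  rw [h0] at hsubst
  rw [logWeight, ← hsubst]
  refine intervalIntegral.integral_congr fun t _ => ?_
  have hden := (T.one_add_mul_F_pos (hW0 (φ t)) (φ t)).ne'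
  simp only [Function.comp_apply, hk t]
  field_simp

lemma integral_scaleDensity_apply (h : T.IsAngle a k φ) (ha : 0 < a) (h0 : φ 0 = 0)
    (hW : Continuous W) (hW0 : ∀ u, 0 ≤ W u) (hk : ∀ x, k x = a * W (φ x)) (x : ℝ) :
    ∫ u in (0 : ℝ)..(φ x), T.scaleDensity W u =
      ∫ t in (0 : ℝ)..x, k t * (T.F (φ t) - φ t * T.f (φ t)) *
        Real.exp (-∫ r in (0 : ℝ)..t, k r * (p * T.f (φ r))) := by
  have hφ := h.continuous
  have hF := T.continuous_F
  have hsubst := intervalIntegral.integral_comp_mul_deriv (a := 0) (b := x) (fun t _ => h t)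
    (Continuous.continuousOn (by fun_prop)) (T.continuous_scaleDensity hW hW0)
  rw [h0] at hsubst
  rw [← hsubst]
  refine intervalIntegral.integral_congr fun t _ => ?_
  have hden := (T.one_add_mul_F_pos (hW0 (φ t)) (φ t)).ne'
  simp only [Function.comp_apply, scaleDensity, phaseWeight, h.logWeight_apply ha h0 hW hW0 hk]
  generalize Real.exp (-∫ r in (0 : ℝ)..t, k r * (p * T.f (φ r))) = E
  rw [hk t]
  field_simp

lemma integral_scale_nonneg (h : T.IsAngle a k φ) (ha : 0 < a) (hk : ∀ x, 0 ≤ k x)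
    (hka : ∀ x, k x ≤ a) (hanti : Antitone k) (h0 : φ 0 = 0) {x : ℝ} (hx : 0 ≤ x) :
    0 ≤ ∫ t in (0 : ℝ)..x, k t * (T.F (φ t) - φ t * T.f (φ t)) *
      Real.exp (-∫ r in (0 : ℝ)..t, k r * (p * T.f (φ r))) := by
  obtain ⟨W, hW, hW0, hW1, hWanti, hkW⟩ := h.exists_profile ha hk hka hanti
  rw [← h.integral_scaleDensity_apply ha h0 hW hW0 hkW]
  exact T.integral_scaleDensity_nonneg hW hW0 hW1 hWanti
    (h0.ge.trans ((h.strictMono ha hk).monotone hx))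

lemma integral_scale_pos (h : T.IsAngle a k φ) (ha : 0 < a) (hk : ∀ x, 0 ≤ k x)
    (hka : ∀ x, k x ≤ a) (hanti : Antitone k) (h0 : φ 0 = 0) (hk0 : 0 < k 0) {x : ℝ}
    (hx : 0 < x) : 0 < ∫ t in (0 : ℝ)..x, k t * (T.F (φ t) - φ t * T.f (φ t)) *
      Real.exp (-∫ r in (0 : ℝ)..t, k r * (p * T.f (φ r))) := by
  obtain ⟨W, hW, hW0, hW1, hWanti, hkW⟩ := h.exists_profile ha hk hka hanti
  rw [← h.integral_scaleDensity_apply ha h0 hW hW0 hkW]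
  refine T.integral_scaleDensity_pos hW hW0 hW1 hWanti ?_
    (h0.symm.trans_lt (h.strictMono ha hk hx))
  rw [hkW, h0] at hk0
  exact pos_of_mul_pos_right hk0 ha.le

end IsAngle

end GenSine

/-! ### Dependence on the scale -/

/-- The difference `δ = χ t - χ s` solves the linear equation `δ' = (t - s) α + A δ`, where `α` and
`A` are divided differences of the right-hand side `V`; variation of constants gives `δ`. -/
lemma hasDerivAt_param_of_hasDerivAt {V V₁ V₃ : ℝ → ℝ → ℝ → ℝ} {χ : ℝ → ℝ → ℝ}
    (hV₁ : ∀ s x u, HasDerivAt (fun s => V s x u) (V₁ s x u) s)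
    (hV₃ : ∀ s x u, HasDerivAt (V s x) (V₃ s x u) u)
    (hV₁_cont : Continuous fun z : ℝ × ℝ × ℝ => V₁ z.1 z.2.1 z.2.2)
    (hV₃_cont : Continuous fun z : ℝ × ℝ × ℝ => V₃ z.1 z.2.1 z.2.2)
    (hχ_cont : Continuous fun z : ℝ × ℝ => χ z.1 z.2) (h0 : ∀ s t, χ s 0 = χ t 0)
    (hχ : ∀ s x, HasDerivAt (χ s) (V s x (χ s x)) x) (s x : ℝ) :
    HasDerivAt (fun s => χ s x) (Real.exp (∫ t in (0 : ℝ)..x, V₃ s t (χ s t)) *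
      ∫ t in (0 : ℝ)..x, V₁ s t (χ s t) * Real.exp (-∫ r in (0 : ℝ)..t, V₃ s r (χ s r))) s := by
  let A : ℝ → ℝ → ℝ := fun t y => divDiff (V₃ t y) (χ s y) (χ t y)
  let α : ℝ → ℝ → ℝ := fun t y => divDiff (fun r => V₁ r y (χ s y)) s t
  have hχ' : ∀ {X : Type} [TopologicalSpace X] {t y : X → ℝ}, Continuous t → Continuous y →
      Continuous fun z => χ (t z) (y z) := fun ht hy => hχ_cont.comp (ht.prodMk hy)
  have hA : Continuous fun z : ℝ × ℝ => A z.1 z.2 :=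
    continuous_divDiff (g := fun z : ℝ × ℝ => V₃ z.1 z.2)
      (hV₃_cont.comp (by fun_prop : Continuous fun w : (ℝ × ℝ) × ℝ => (w.1.1, w.1.2, w.2)))
      (hχ' continuous_const continuous_snd) hχ_cont
  have hα : Continuous fun z : ℝ × ℝ => α z.1 z.2 :=
    continuous_divDiff (g := fun (z : ℝ × ℝ) r => V₁ r z.2 (χ s z.2))
      (hV₁_cont.comp (continuous_snd.prodMk ((by fun_prop :
        Continuous fun w : (ℝ × ℝ) × ℝ => w.1.2).prodMk (hχ' continuous_const (by fun_prop)))))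
      continuous_const continuous_fst
  have hI : Continuous fun z : ℝ × ℝ => ∫ r in (0 : ℝ)..z.2, A z.1 r :=
    intervalIntegral.continuous_parametric_primitive_of_continuous hA
  have hslope : Continuous fun t => Real.exp (∫ r in (0 : ℝ)..x, A t r) *
      ∫ y in (0 : ℝ)..x, α t y * Real.exp (-∫ r in (0 : ℝ)..y, A t r) :=
    (hI.comp (continuous_id.prodMk continuous_const)).rexp.mul
      (intervalIntegral.continuous_parametric_intervalIntegral_of_continuous'
        (hα.mul hI.neg.rexp) 0 x)
  refine (hasDerivAt_of_sub_eq_mul hslope.continuousAt fun t => ?_).congr_deriv (by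
    simp only [A, α, divDiff_self])
  have hvar := mul_exp_neg_integral_eq (δ := fun y => χ t y - χ s y)
    (α := fun y => (t - s) * α t y) (A := A t) (by fun_prop) (by fun_prop) (fun y => by
      refine ((hχ t y).fun_sub (hχ s y)).congr_deriv ?_
      have hu := divDiff_mul (hV₃ t y) (by fun_prop) (χ s y) (χ t y)
      have hs := divDiff_mul (fun r => hV₁ r y (χ s y)) (by fun_prop) s t
      simp only [A, α]
      linear_combination -hu - hs) x
  simp only [h0 t s, sub_self, zero_add, mul_assoc, intervalIntegral.integral_const_mul] at hvar
  rw [mul_left_comm, ← hvar, mul_left_comm, ← Real.exp_add, add_neg_cancel, Real.exp_zero, mul_one]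

namespace GenSine

variable {p : ℝ} (T : GenSine p)

/-- The Prüfer angles `φ_s` with `φ_s(0) = 0` for the spectral parameter `exp(p s)`, when the
equation `φ' = z + z^(1-p) h F(φ)` with `z = exp s` is driven by `h`. -/
def IsScaledFamily (h : ℝ →ᵇ ℝ) (φ : ℝ → ℝ → ℝ) : Prop :=
  ∀ s, φ s 0 = 0 ∧ T.IsAngle (Real.exp s) (Real.exp ((1 - p) * s) • h) (φ s)

lemma exists_isScaledFamily (h : ℝ →ᵇ ℝ) : ∃ φ, T.IsScaledFamily h φ := by
  choose φ hφ using fun s => T.exists_isAngle (Real.exp s) (Real.exp ((1 - p) * s) • h)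
  exact ⟨φ, hφ⟩

lemma hasDerivAt_exp_mul_F_exp_mul (u s : ℝ) :
    HasDerivAt (fun s => Real.exp (-(p * s)) * T.F (Real.exp s * u))
      (-(p * Real.exp (-(p * s)) *
        (T.F (Real.exp s * u) - Real.exp s * u * T.f (Real.exp s * u)))) s := by
  have hexp : HasDerivAt (fun s => Real.exp (-(p * s))) (Real.exp (-(p * s)) * -(p * 1)) s :=
    ((hasDerivAt_id s).const_mul p).fun_neg.exp
  refine (hexp.fun_mul ((T.hasDerivAt_F _).comp s
    ((Real.hasDerivAt_exp s).mul_const u))).congr_deriv ?_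
  simp only [Function.comp_apply]
  ring

lemma hasDerivAt_mul_F_exp_mul (s u : ℝ) :
    HasDerivAt (fun u => Real.exp (-(p * s)) * T.F (Real.exp s * u))
      (Real.exp ((1 - p) * s) * (p * T.f (Real.exp s * u))) u := by
  refine (((T.hasDerivAt_F _).comp u (hasDerivAt_const_mul (Real.exp s))).const_mul
    (Real.exp (-(p * s)))).congr_deriv ?_
  rw [show (1 - p) * s = -(p * s) + s by ring, Real.exp_add]
  ring

variable {T} {h : ℝ →ᵇ ℝ} {φ : ℝ → ℝ → ℝ}

namespace IsScaledFamily

lemma continuous (hφ : T.IsScaledFamily h φ) : Continuous fun z : ℝ × ℝ => φ z.1 z.2 :=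
  T.continuous_isAngle_family (by fun_prop) (by fun_prop) (fun s => (hφ s).1) fun s => (hφ s).2

lemma hasDerivAt_exp_neg_mul (hφ : T.IsScaledFamily h φ) (s x : ℝ) :
    HasDerivAt (fun x => Real.exp (-s) * φ s x)
      (1 + h x * (Real.exp (-(p * s)) * T.F (Real.exp s * (Real.exp (-s) * φ s x)))) x := by
  refine (((hφ s).2 x).const_mul (Real.exp (-s))).congr_deriv ?_
  rw [← mul_assoc (Real.exp s), ← Real.exp_add, add_neg_cancel, Real.exp_zero, one_mul,
    BoundedContinuousFunction.smul_apply, smul_eq_mul, mul_add, ← Real.exp_add, neg_add_cancel,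
    Real.exp_zero, ← mul_assoc, ← mul_assoc, ← Real.exp_add]
  ring_nf

lemma hasDerivAt_scale (hφ : T.IsScaledFamily h φ) (s x : ℝ) :
    ∃ c : ℝ, 0 < c ∧ HasDerivAt (fun s => Real.exp (-s) * φ s x)
      (-(c * ∫ t in (0 : ℝ)..x, (Real.exp ((1 - p) * s) • h) t *
        (T.F (φ s t) - φ s t * T.f (φ s t)) *
        Real.exp (-∫ r in (0 : ℝ)..t, (Real.exp ((1 - p) * s) • h) r * (p * T.f (φ s r))))) s := by
  have hF := T.continuous_F
  have hf := T.continuous_f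
  have hφ_cont := hφ.continuous
  have hu : ∀ t, Real.exp s * (Real.exp (-s) * φ s t) = φ s t := fun t => by
    rw [← mul_assoc, ← Real.exp_add, add_neg_cancel, Real.exp_zero, one_mul]
  have hderiv := hasDerivAt_param_of_hasDerivAt
    (V := fun s x u => 1 + h x * (Real.exp (-(p * s)) * T.F (Real.exp s * u)))
    (fun s x u => ((T.hasDerivAt_exp_mul_F_exp_mul u s).const_mul (h x)).const_add 1)
    (fun s x u => ((T.hasDerivAt_mul_F_exp_mul s u).const_mul (h x)).const_add 1)
    (by fun_prop) (by fun_prop) (χ := fun s x => Real.exp (-s) * φ s x) (by fun_prop)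
    (fun s t => by rw [(hφ s).1, (hφ t).1, mul_zero, mul_zero]) hφ.hasDerivAt_exp_neg_mul s x
  have hexp : Real.exp (-(p * s)) = Real.exp (-s) * Real.exp ((1 - p) * s) := by
    rw [← Real.exp_add]
    ring_nf
  refine ⟨Real.exp (∫ t in (0 : ℝ)..x, h t * (Real.exp ((1 - p) * s) * (p * T.f (φ s t)))) *
    (p * Real.exp (-s)), mul_pos (Real.exp_pos _) (mul_pos T.pos (Real.exp_pos _)),
    hderiv.congr_deriv ?_⟩
  simp only [hu, hexp]
  rw [← neg_mul, ← intervalIntegral.integral_const_mul, ← intervalIntegral.integral_const_mul]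
  refine intervalIntegral.integral_congr fun t _ => ?_
  simp only [BoundedContinuousFunction.smul_apply, smul_eq_mul, mul_assoc,
    mul_left_comm (h _)]
  ring

variable {s₀ x : ℝ}

lemma smul_le_exp (hM : ∀ x, h x ≤ Real.exp (p * s₀)) {s : ℝ} (hs : s₀ ≤ s) (hp : 0 ≤ p) (x : ℝ) :
    (Real.exp ((1 - p) * s) • h) x ≤ Real.exp s := by
  calc Real.exp ((1 - p) * s) * h x ≤ Real.exp ((1 - p) * s) * Real.exp (p * s) := by
        gcongr
        exact (hM x).trans (Real.exp_le_exp.2 (mul_le_mul_of_nonneg_left hs hp))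
    _ = Real.exp s := by rw [← Real.exp_add]; ring_nf

lemma antitone_smul (hanti : Antitone h) (s : ℝ) : Antitone (Real.exp ((1 - p) * s) • h) :=
  fun _ _ hxy => mul_le_mul_of_nonneg_left (hanti hxy) (Real.exp_pos _).le

lemma antitoneOn_exp_neg_mul (hφ : T.IsScaledFamily h φ) (h0 : ∀ x, 0 ≤ h x) (hanti : Antitone h)
    (hM : ∀ x, h x ≤ Real.exp (p * s₀)) (hx : 0 ≤ x) :
    AntitoneOn (fun s => Real.exp (-s) * φ s x) (Ici s₀) := by
  choose c hc hderiv using fun s => hφ.hasDerivAt_scale s x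
  refine antitoneOn_of_hasDerivWithinAt_nonpos (convex_Ici s₀)
    (fun s _ => (hderiv s).continuousAt.continuousWithinAt) (fun s _ => (hderiv s).hasDerivWithinAt)
    fun s hs => neg_nonpos.2 (mul_nonneg (hc s).le ?_)
  exact (hφ s).2.integral_scale_nonneg (Real.exp_pos s)
    (fun x => mul_nonneg (Real.exp_pos _).le (h0 x))
    (smul_le_exp hM (interior_subset hs) T.pos.le) (antitone_smul hanti s) (hφ s).1 hx

lemma strictAntiOn_exp_neg_mul (hφ : T.IsScaledFamily h φ) (h0 : ∀ x, 0 ≤ h x)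
    (hanti : Antitone h) (hM : ∀ x, h x ≤ Real.exp (p * s₀)) (hpos : 0 < h 0) (hx : 0 < x) :
    StrictAntiOn (fun s => Real.exp (-s) * φ s x) (Ici s₀) := by
  choose c hc hderiv using fun s => hφ.hasDerivAt_scale s x
  refine strictAntiOn_of_hasDerivWithinAt_neg (convex_Ici s₀)
    (fun s _ => (hderiv s).continuousAt.continuousWithinAt) (fun s _ => (hderiv s).hasDerivWithinAt)
    fun s hs => neg_lt_zero.2 (mul_pos (hc s) ?_)
  exact (hφ s).2.integral_scale_pos (Real.exp_pos s)
    (fun x => mul_nonneg (Real.exp_pos _).le (h0 x))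
    (smul_le_exp hM (interior_subset hs) T.pos.le) (antitone_smul hanti s) (hφ s).1
    (mul_pos (Real.exp_pos _) hpos) hx

end IsScaledFamily

end GenSine

/-! ### Single barriers -/

lemma exists_boundedContinuousFunction_eq_projIcc {f : ℝ → ℝ} {a b : ℝ} (hab : a ≤ b)
    (hf : ContinuousOn f (Icc a b)) : ∃ g : ℝ →ᵇ ℝ, ∀ x, g x = f (projIcc a b hab x) :=
  ⟨(BoundedContinuousFunction.mkOfCompact ⟨(Icc a b).domRestrict f, hf.domRestrict⟩).compContinuous
    ⟨projIcc a b hab, continuous_projIcc⟩, fun _ => rfl⟩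

lemma prueferCoeff_exp (p s : ℝ) (g : ℝ →ᵇ ℝ) :
    prueferCoeff p (Real.exp s) (.const ℝ (Real.exp (p * s)) + g) =
      Real.exp ((1 - p) * s) • g := by
  ext x
  have hexp : Real.exp ((1 - p) * s) * Real.exp (p * s) = Real.exp s := by
    rw [← Real.exp_add]
    ring_nf
  rw [prueferCoeff_apply, ← Real.exp_mul, mul_comm s, BoundedContinuousFunction.add_apply,
    BoundedContinuousFunction.const_apply, mul_add, hexp, add_sub_cancel_left,
    BoundedContinuousFunction.smul_apply, smul_eq_mul]

namespace GenSine

variable {p : ℝ} {T : GenSine p}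

lemma IsAngle.reflect {a : ℝ} {k l : ℝ →ᵇ ℝ} {φ : ℝ → ℝ} (h : T.IsAngle a k φ)
    (hl : ∀ x, l x = k (1 - x)) (n : ℕ) : T.IsAngle a l fun x => n * T.P - φ (1 - x) := fun x => by
  refine (((h (1 - x)).comp_const_sub 1 x).const_sub (n * T.P : ℝ)).congr_deriv ?_
  rw [neg_neg, T.F_nat_mul_sub, hl]

lemma IsAngle.apply_add_apply_eq {a x₀ : ℝ} {k k₁ k₂ : ℝ →ᵇ ℝ} {φ φ₁ φ₂ : ℝ → ℝ}
    (h : T.IsAngle a k φ) (h₁ : T.IsAngle a k₁ φ₁) (h₂ : T.IsAngle a k₂ φ₂) {n : ℕ}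
    (h0 : φ 0 = 0) (h1 : φ 1 = n * T.P) (h₁0 : φ₁ 0 = 0) (h₂0 : φ₂ 0 = 0) (hx₀ : x₀ ∈ Icc 0 1)
    (hk₁ : EqOn k₁ k (Icc 0 x₀)) (hk₂ : EqOn k₂ (fun x => k (1 - x)) (Icc 0 (1 - x₀))) :
    φ₁ x₀ + φ₂ (1 - x₀) = n * T.P := by
  have hreflect := h.reflect
    (l := k.compContinuous ⟨fun x => 1 - x, continuous_const.sub continuous_id⟩) (fun _ => rfl) n
  have hleft := h₁.eqOn h (h₁0.trans h0.symm) hk₁ (right_mem_Icc.2 hx₀.1)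
  have hright := h₂.eqOn hreflect (by rw [h₂0, sub_zero, h1, sub_self]) hk₂
    (right_mem_Icc.2 (sub_nonneg.2 hx₀.2))
  rw [hleft, hright]
  simp only [sub_sub_cancel, add_sub_cancel]

lemma IsScaledFamily.apply_add_apply_eq {q : ℝ → ℝ} {x₀ : ℝ} (hq : ContinuousOn q (Icc 0 1))
    (hx₀ : x₀ ∈ Icc 0 1) {Λ : ℕ → ℝ} (hΛ : StrictMono Λ)
    (hEig : ∀ μ, IsDirichletEigenvalue p q 0 1 μ ↔ μ ∈ range Λ) {h₁ h₂ : ℝ →ᵇ ℝ}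
    {φ₁ φ₂ : ℝ → ℝ → ℝ} (hφ₁ : T.IsScaledFamily h₁ φ₁) (hφ₂ : T.IsScaledFamily h₂ φ₂)
    (hh₁ : EqOn h₁ (-q) (Icc 0 x₀)) (hh₂ : EqOn h₂ (fun x => -q (1 - x)) (Icc 0 (1 - x₀)))
    {s : ℝ} {i : ℕ} (hs : Real.exp (p * s) = Λ i) :
    φ₁ s x₀ + φ₂ s (1 - x₀) = (i + 1) * T.P := by
  obtain ⟨g, hg⟩ := exists_boundedContinuousFunction_eq_projIcc zero_le_one hq.neg
  replace hg : EqOn g (-q) (Icc 0 1) := fun x hx => by rw [hg, projIcc_of_mem _ hx]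
  obtain ⟨φ, h0, hφ⟩ := T.exists_isAngle (Real.exp s) (Real.exp ((1 - p) * s) • g)
  have h1 : φ 1 = (i + 1 : ℕ) * T.P := by
    rw [Nat.cast_succ]
    refine IsAngle.apply_one_eq_mul (Real.exp_pos s) hg hΛ hEig i h0 ?_
    rwa [← hs, prueferCoeff_exp]
  rw [← Nat.cast_succ]
  refine hφ.apply_add_apply_eq (hφ₁ s).2 (hφ₂ s).2 h0 h1 (hφ₁ s).1 (hφ₂ s).1 hx₀
    (fun x hx => ?_) fun x hx => ?_
  · exact congrArg _ ((hh₁ hx).trans (hg ⟨hx.1, hx.2.trans hx₀.2⟩).symm)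
  · exact congrArg _ ((hh₂ hx).trans
      (hg ⟨by linarith [hx.2, hx₀.1], by linarith [hx.1]⟩).symm)

variable (T) in
lemma exists_isScaledFamily_antitoneOn {f : ℝ → ℝ} {c s₀ : ℝ} (hc : 0 ≤ c)
    (hf : ContinuousOn f (Icc 0 c)) (hanti : AntitoneOn f (Icc 0 c))
    (hnonneg : ∀ x ∈ Icc 0 c, 0 ≤ f x) (hf0 : f 0 ≤ Real.exp (p * s₀)) :
    ∃ (h : ℝ →ᵇ ℝ) (φ : ℝ → ℝ → ℝ), EqOn h f (Icc 0 c) ∧ T.IsScaledFamily h φ ∧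
      AntitoneOn (fun s => Real.exp (-s) * φ s c) (Ici s₀) ∧
      (0 < c → 0 < f 0 → StrictAntiOn (fun s => Real.exp (-s) * φ s c) (Ici s₀)) := by
  obtain ⟨h, hh⟩ := exists_boundedContinuousFunction_eq_projIcc hc hf
  obtain ⟨φ, hφ⟩ := T.exists_isScaledFamily h
  have hmem : ∀ x, (projIcc 0 c hc x : ℝ) ∈ Icc 0 c := fun x => (projIcc 0 c hc x).2
  have heq : EqOn h f (Icc 0 c) := fun x hx => by rw [hh, projIcc_of_mem hc hx]
  have hh_nonneg : ∀ x, 0 ≤ h x := fun x => (hnonneg _ (hmem x)).trans_eq (hh x).symm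
  have hh_le : ∀ x, h x ≤ Real.exp (p * s₀) := fun x =>
    (hh x).trans_le ((hanti (left_mem_Icc.2 hc) (hmem x) (hmem x).1).trans hf0)
  have hh_anti : Antitone h := fun x y hxy => by
    rw [hh, hh]
    exact hanti (hmem x) (hmem y) (monotone_projIcc hc hxy)
  exact ⟨h, φ, heq, hφ, hφ.antitoneOn_exp_neg_mul hh_nonneg hh_anti hh_le hc, fun hc0 hpos =>
    hφ.strictAntiOn_exp_neg_mul hh_nonneg hh_anti hh_le
      (hpos.trans_eq (heq (left_mem_Icc.2 hc)).symm) hc0⟩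

end GenSine

/-- The function `s ↦ exp(-s) (φ_s(x₀) + ψ_s(1 - x₀))`, where `φ` and `ψ` are the Prüfer angles
started from the two endpoints. -/
lemma exists_strictAntiOn_of_single_barrier {p : ℝ} (hp : 1 < p) {q : ℝ → ℝ}
    (hq : ContinuousOn q (Icc 0 1)) (hq_nonpos : ∀ x ∈ Icc (0 : ℝ) 1, q x ≤ 0) {x₀ : ℝ}
    (hx₀ : x₀ ∈ Icc (0 : ℝ) 1) (hmono : MonotoneOn q (Icc 0 x₀)) (hanti : AntitoneOn q (Icc x₀ 1))
    {Λ : ℕ → ℝ} (hΛ : StrictMono Λ) (hEig : ∀ μ, IsDirichletEigenvalue p q 0 1 μ ↔ μ ∈ range Λ)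
    {s₀ : ℝ} (hs₀ : -min (q 0) (q 1) ≤ Real.exp (p * s₀)) (hneg : ∃ x ∈ Ioo (0 : ℝ) 1, q x < 0) :
    ∃ (P : ℝ) (G : ℝ → ℝ), 0 < P ∧ StrictAntiOn G (Ici s₀) ∧
      ∀ s i, Real.exp (p * s) = Λ i → G s = Real.exp (-s) * ((i + 1) * P) := by
  obtain ⟨T⟩ := GenSine.nonempty hp
  have hmem : ∀ x ∈ Icc 0 (1 - x₀), 1 - x ∈ Icc x₀ 1 := fun x hx =>
    ⟨by linarith [hx.2], by linarith [hx.1]⟩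
  obtain ⟨h₁, φ₁, hh₁, hφ₁, hanti₁, hstrict₁⟩ := T.exists_isScaledFamily_antitoneOn (f := -q)
    (s₀ := s₀) hx₀.1 (hq.mono (Icc_subset_Icc_right hx₀.2)).neg hmono.neg
    (fun x hx => neg_nonneg.2 (hq_nonpos x ⟨hx.1, hx.2.trans hx₀.2⟩))
    ((neg_le_neg (min_le_left _ _)).trans hs₀)
  obtain ⟨h₂, φ₂, hh₂, hφ₂, hanti₂, hstrict₂⟩ := T.exists_isScaledFamily_antitoneOn
    (f := fun x => -q (1 - x)) (s₀ := s₀) (sub_nonneg.2 hx₀.2)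
    ((hq.mono (Icc_subset_Icc_left hx₀.1)).comp (by fun_prop) hmem).neg
    (fun x hx y hy hxy => neg_le_neg (hanti (hmem y hy) (hmem x hx) (sub_le_sub_left hxy 1)))
    (fun x hx => neg_nonneg.2 (hq_nonpos _ (Icc_subset_Icc_left hx₀.1 (hmem x hx))))
    (by rw [sub_zero]; exact (neg_le_neg (min_le_right _ _)).trans hs₀)
  refine ⟨T.P, fun s => Real.exp (-s) * φ₁ s x₀ + Real.exp (-s) * φ₂ s (1 - x₀), T.P_pos, ?_,
    fun s i hs => (mul_add _ _ _).symm.trans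
      (congrArg _ (hφ₁.apply_add_apply_eq hq hx₀ hΛ hEig hφ₂ hh₁ hh₂ hs))⟩
  obtain ⟨x, hx, hqx⟩ := hneg
  rcases le_total x x₀ with h | h
  · have hq0 := hmono (left_mem_Icc.2 hx₀.1) ⟨hx.1.le, h⟩ hx.1.le
    exact (hstrict₁ (hx.1.trans_le h) (neg_pos.2 (hq0.trans_lt hqx))).add_antitone hanti₂
  · have hq1 := hanti ⟨h, hx.2.le⟩ (right_mem_Icc.2 hx₀.2) hx.2.le
    exact hanti₁.add_strictAnti
      (hstrict₂ (sub_pos.2 (h.trans_lt hx.2)) (by simpa using hq1.trans_lt hqx))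

lemma exists_exp_mul_eq {p y : ℝ} (hp : p ≠ 0) (hy : 0 < y) : ∃ s, Real.exp (p * s) = y :=
  ⟨Real.log y / p, by rw [mul_div_cancel₀ _ hp, Real.exp_log hy]⟩

lemma min_le_of_monotoneOn_of_antitoneOn {α β : Type*} [LinearOrder α] [LinearOrder β]
    {q : α → β} {a b c : α} (hmono : MonotoneOn q (Icc a c)) (hanti : AntitoneOn q (Icc c b))
    {x : α} (hx : x ∈ Icc a b) : min (q a) (q b) ≤ q x := by
  rcases le_total x c with h | h
  · exact min_le_of_left_le (hmono ⟨le_rfl, hx.1.trans h⟩ ⟨hx.1, h⟩ hx.1)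
  · exact min_le_of_right_le (hanti ⟨h, hx.2⟩ ⟨h.trans hx.2, le_rfl⟩ hx.2)

lemma isDirichletEigenvalue_iff_mem_range {p : ℝ} {q : ℝ → ℝ} {Λ : ℕ → ℝ}
    (hEig : ∀ n : ℕ, 1 ≤ n → IsDirichletEigenvalue p q 0 1 (Λ n))
    (hAll : ∀ μ : ℝ, IsDirichletEigenvalue p q 0 1 μ → ∃ n : ℕ, 1 ≤ n ∧ μ = Λ n) (μ : ℝ) :
    IsDirichletEigenvalue p q 0 1 μ ↔ μ ∈ range fun k => Λ (k + 1) := by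
  refine ⟨fun h => ?_, ?_⟩
  · obtain ⟨n, hn, rfl⟩ := hAll μ h
    exact ⟨n - 1, by simp only [Nat.sub_add_cancel hn]⟩
  · rintro ⟨k, rfl⟩
    exact hEig _ (Nat.le_add_left 1 k)

lemma exp_neg_mul_le_exp_neg_mul {p a b m n : ℝ} (hp : 0 < p) (hm : 0 < m) (hn : 0 ≤ n)
    (h : Real.exp (p * b) / Real.exp (p * a) ≤ n ^ p / m ^ p) :
    Real.exp (-a) * m ≤ Real.exp (-b) * n := by
  rw [← Real.exp_sub, ← mul_sub, mul_comm, Real.exp_mul, ← Real.div_rpow hn hm.le,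
    Real.rpow_le_rpow_iff (Real.exp_pos _).le (by positivity) hp, le_div_iff₀ hm] at h
  calc Real.exp (-a) * m = Real.exp (-b) * (Real.exp (b - a) * m) := by
        rw [← mul_assoc, ← Real.exp_add]
        ring_nf
    _ ≤ Real.exp (-b) * n := mul_le_mul_of_nonneg_left h (Real.exp_pos _).le

end HalfLinear

open HalfLinear Set in
theorem eigenvalue_ratio_equality_rigidity_general
    (p : ℝ) (hp : 1 < p)
    (q : ℝ → ℝ) (hqc : ContinuousOn q (Set.Icc 0 1))
    (hqneg : ∀ x ∈ Set.Icc (0 : ℝ) 1, q x ≤ 0)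
    (x0 : ℝ) (hx0 : x0 ∈ Set.Icc (0 : ℝ) 1)
    (hmono : MonotoneOn q (Set.Icc 0 x0)) (hanti : AntitoneOn q (Set.Icc x0 1))
    (Λ : ℕ → ℝ) (hΛmono : StrictMonoOn Λ {n | 1 ≤ n})
    (hEig : ∀ n : ℕ, 1 ≤ n → IsDirichletEigenvalue p q 0 1 (Λ n))
    (hAll : ∀ μ : ℝ, IsDirichletEigenvalue p q 0 1 μ → ∃ n : ℕ, 1 ≤ n ∧ μ = Λ n)
    (m n : ℕ) (hm : 1 ≤ m) (hmn : m < n) (hbound : -min (q 0) (q 1) ≤ Λ m)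
    (hratio : Λ n / Λ m ≤ (n : ℝ) ^ p / (m : ℝ) ^ p) :
    ∀ x ∈ Set.Ioo (0 : ℝ) 1, q x = 0 := by
  obtain ⟨i, rfl⟩ := Nat.exists_eq_add_of_le' hm
  obtain ⟨j, rfl⟩ := Nat.exists_eq_add_of_le' (hm.trans hmn.le)
  have hΛ : StrictMono fun k => Λ (k + 1) := fun k l hkl =>
    hΛmono (Nat.le_add_left 1 k) (Nat.le_add_left 1 l) (Nat.succ_lt_succ hkl)
  have hlt := hΛ (Nat.succ_lt_succ_iff.1 hmn)
  have hp0 : 0 < p := zero_lt_one.trans hp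
  by_contra! ⟨x, hx, hqx⟩
  have hx' := Ioo_subset_Icc_self hx
  have hneg : q x < 0 := (hqneg x hx').lt_of_ne hqx
  have hpos : 0 < Λ (i + 1) := hbound.trans_lt' <|
    neg_pos.2 ((min_le_of_monotoneOn_of_antitoneOn hmono hanti hx').trans_lt hneg)
  obtain ⟨a, ha⟩ := exists_exp_mul_eq hp0.ne' hpos
  obtain ⟨b, hb⟩ := exists_exp_mul_eq hp0.ne' (hpos.trans hlt)
  obtain ⟨P, G, hP, hG, hGΛ⟩ := exists_strictAntiOn_of_single_barrier hp hqc hqneg hx0 hmono hanti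
    hΛ (isDirichletEigenvalue_iff_mem_range hEig hAll) (hbound.trans_eq ha.symm) ⟨x, hx, hneg⟩
  have hab : a < b := lt_of_mul_lt_mul_left (Real.exp_lt_exp.1 (by rwa [ha, hb])) hp0.le
  have hGlt := hG self_mem_Ici hab.le hab
  rw [hGΛ a i ha, hGΛ b j hb, ← mul_assoc, ← mul_assoc, mul_lt_mul_iff_left₀ hP] at hGlt
  refine hGlt.not_ge (exp_neg_mul_le_exp_neg_mul hp0 (by positivity) (by positivity) ?_)
  rw [ha, hb]
  exact_mod_cast hratio

/-- equality λ_n/λ_m = n^p/m^p (with λ_n > λ_m ≥ -2q*) forces q ≡ 0 on (0,1). -/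
theorem eigenvalue_ratio_equality_rigidity
    (p : ℝ) (hp : 1 < p)
    (q : ℝ → ℝ) (hqc : ContinuousOn q (Set.Icc 0 1))
    (hqneg : ∀ x ∈ Set.Icc (0:ℝ) 1, q x ≤ 0)
    (x0 : ℝ) (hx0 : x0 ∈ Set.Icc (0:ℝ) 1)
    (hmono : MonotoneOn q (Set.Icc 0 x0)) (hanti : AntitoneOn q (Set.Icc x0 1))
    (Λ : ℕ → ℝ) (hΛmono : StrictMonoOn Λ {n | 1 ≤ n})
    (hEig : ∀ n : ℕ, 1 ≤ n → IsDirichletEigenvalue p q 0 1 (Λ n))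
    (hAll : ∀ μ : ℝ, IsDirichletEigenvalue p q 0 1 μ → ∃ n : ℕ, 1 ≤ n ∧ μ = Λ n) :
    ∀ m n : ℕ, 1 ≤ m → m < n →
      -2 * min (q 0) (q 1) ≤ Λ m → Λ m < Λ n →
      Λ n / Λ m = (n : ℝ) ^ p / (m : ℝ) ^ p →
      ∀ x ∈ Set.Ioo (0:ℝ) 1, q x = 0 := fun m n hm hmn hbound _ hratio =>
  have hmin : min (q 0) (q 1) ≤ 0 := min_le_of_left_le (hqneg 0 (Set.left_mem_Icc.2 zero_le_one))
  eigenvalue_ratio_equality_rigidity_general p hp q hqc hqneg x0 hx0 hmono hanti Λ hΛmono hEig hAll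
    m n hm hmn (by linarith) hratio.le
end

section
/- Let p > 1 and q ≡ 0. The Dirichlet eigenvalues of -((y')^{(p-1)})' = (p-1) λ y^{(p-1)} on [0,1] with y(0)=y(1)=0 are exactly λ_n = (n π_p)^p for n ≥ 1, where π_p = 2π/(p sin(π/p)); in particular λ_n / λ_m = n^p/m^p for all n, m ≥ 1. -/
/-- The generalized half-period π_p = 2π / (p sin(π/p)). -/
noncomputable def pip (p : ℝ) : ℝ := 2 * Real.pi / (p * Real.sin (Real.pi / p))

/-!
A solution conserves `|y'|^p + μ |y|^p`. For `μ = 1` and energy `1` it therefore runs on the curve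
`|u|^p + |v|^p = 1`, and the angle `(π / π_p) ∫₀ᵘ (1 - |t|^p)^(-1/p) dt` turns this motion into a
rotation of the unit circle at the uniform speed `π / π_p`. The normalization is right because a
beta integral gives `∫₀¹ (1 - t^p)^(-1/p) dt = π_p / 2`. So the zeros of such a solution are spaced
by `π_p`, and scaling the variable by `μ^(1/p)` settles every `μ > 0`. When `μ ≤ 0` the product
`(y')^{(p-1)} y` is monotone and vanishes at both ends, which forces `y = 0`. Conversely, inverting
the angle gives the generalized sine `S_p`, whose rescalings are the eigenfunctions.
-/

namespace GeneralizedSine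

open Set Filter Topology MeasureTheory ProbabilityTheory
open scoped Real

section Calculus

lemma inv_abs_mul_self {r : ℝ} (hr : r ≠ 0) : |r|⁻¹ * r = SignType.sign r := by
  rw [inv_mul_eq_iff_eq_mul₀ (abs_ne_zero.2 hr), abs_mul_sign]

lemma sign_mul_sign_self {r : ℝ} (hr : r ≠ 0) :
    (SignType.sign r : ℝ) * SignType.sign r = 1 := by
  rcases lt_or_gt_of_ne hr with h | h <;> simp [h]

lemma eventually_sign_eq {f : ℝ → ℝ} {x : ℝ} (hf : ContinuousAt f x) (hx : f x ≠ 0) :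
    ∀ᶠ t in 𝓝 x, SignType.sign (f t) = SignType.sign (f x) := by
  have h : Tendsto (fun t => SignType.sign (f t)) (𝓝 x) (𝓝 (SignType.sign (f x))) :=
    (continuousAt_sign_of_ne_zero hx).comp hf
  rwa [nhds_discrete SignType, tendsto_pure] at h

lemma continuousAt_sign_mul {f g : ℝ → ℝ} {x : ℝ} (hf : ContinuousAt f x)
    (hg : ContinuousAt g x) (hfg : f x = 0 → g x = 0) :
    ContinuousAt (fun t => SignType.sign (f t) * g t) x := by
  by_cases hx : f x = 0
  · have hg0 : Tendsto g (𝓝 x) (𝓝 0) := hfg hx ▸ hg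
    rw [ContinuousAt, hfg hx, mul_zero]
    refine squeeze_zero_norm (fun t => ?_) (by simpa using hg0.norm)
    rw [norm_mul]
    refine mul_le_of_le_one_left (norm_nonneg _) ?_
    cases SignType.sign (f t) <;> simp
  · refine (continuousAt_const.mul hg).congr (f := fun t => SignType.sign (f x) * g t) ?_
    filter_upwards [eventually_sign_eq hf hx] with t ht
    rw [ht]

variable {E : Type*} [NormedAddCommGroup E] [NormedSpace ℝ E] {f g : ℝ → E} {x : ℝ}

lemma hasDerivWithinAt_Ici_of_eventually_gt (h : ∀ᶠ t in 𝓝[>] x, HasDerivAt f (g t) t)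
    (hf : ContinuousAt f x) (hg : ContinuousAt g x) : HasDerivWithinAt f (g x) (Ici x) x :=
  hasDerivWithinAt_Ici_of_tendsto_deriv (s := {t | HasDerivAt f (g t) t})
    (fun _ ht => ht.differentiableAt.differentiableWithinAt) hf.continuousWithinAt h
    ((tendsto_inf_left hg).congr' (h.mono fun _ ht => ht.deriv.symm))

lemma hasDerivWithinAt_Iic_of_eventually_lt (h : ∀ᶠ t in 𝓝[<] x, HasDerivAt f (g t) t)
    (hf : ContinuousAt f x) (hg : ContinuousAt g x) : HasDerivWithinAt f (g x) (Iic x) x :=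
  hasDerivWithinAt_Iic_of_tendsto_deriv (s := {t | HasDerivAt f (g t) t})
    (fun _ ht => ht.differentiableAt.differentiableWithinAt) hf.continuousWithinAt h
    ((tendsto_inf_left hg).congr' (h.mono fun _ ht => ht.deriv.symm))

lemma hasDerivAt_of_eventually_ne (h : ∀ᶠ t in 𝓝[≠] x, HasDerivAt f (g t) t)
    (hf : ContinuousAt f x) (hg : ContinuousAt g x) : HasDerivAt f (g x) x := by
  have hright := hasDerivWithinAt_Ici_of_eventually_gt (h.filter_mono (nhdsGT_le_nhdsNE x)) hf hg
  have hleft := hasDerivWithinAt_Iic_of_eventually_lt (h.filter_mono (nhdsLT_le_nhdsNE x)) hf hg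
  simpa using hleft.union hright

lemma hasDerivAt_arcsin_sin (hx : Real.cos x ≠ 0) :
    HasDerivAt (fun t => Real.arcsin (Real.sin t)) (SignType.sign (Real.cos x)) x := by
  have hlt : |Real.sin x| < 1 := by
    rw [← sq_lt_one_iff_abs_lt_one, Real.sin_sq]
    linarith [sq_pos_of_ne_zero hx]
  obtain ⟨h₁, h₂⟩ := abs_lt.1 hlt
  refine ((Real.hasDerivAt_arcsin h₁.ne' h₂.ne).comp x (Real.hasDerivAt_sin x)).congr_deriv ?_
  rw [← Real.abs_cos_eq_sqrt_one_sub_sin_sq, one_div, inv_abs_mul_self hx]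

lemma eq_exp_mul_of_hasDerivWithinAt {f : ℝ → ℂ} {c : ℂ} {a b : ℝ}
    (hf : ContinuousOn f (Icc a b))
    (hf' : ∀ x ∈ Ico a b, HasDerivWithinAt f (c * f x) (Ici x) x) :
    ∀ x ∈ Icc a b, f x = Complex.exp (c * (x - a)) * f a := by
  have hexp (x : ℝ) : HasDerivAt (fun t : ℝ => Complex.exp (-(c * (t - a))))
      (Complex.exp (-(c * (x - a))) * -c) x := by
    have h := (((hasDerivAt_id x).ofReal_comp.sub_const (a : ℂ)).const_mul c).fun_neg
    simpa only [id_eq, Complex.ofReal_one, mul_one] using h.cexp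
  intro x hx
  have hconst := constant_of_has_deriv_right_zero
    (f := fun t : ℝ => Complex.exp (-(c * (t - a))) * f t)
    (fun t ht => (hexp t).continuousAt.continuousWithinAt.mul (hf t ht))
    (fun t ht => ((hexp t).hasDerivWithinAt.mul (hf' t ht)).congr_deriv (by ring)) x hx
  simp only [sub_self, mul_zero, neg_zero, Complex.exp_zero, one_mul] at hconst
  rw [← hconst, ← mul_assoc, ← Complex.exp_add, add_neg_cancel, Complex.exp_zero, one_mul]

end Calculus

section SignedPow

/-- The power `s^{(p-1)} = |s|^{p-2} s` of the equation. -/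
noncomputable def signedPow (p s : ℝ) : ℝ := |s| ^ (p - 2) * s

variable {p q s : ℝ}

lemma signedPow_eq_zero_iff : signedPow p s = 0 ↔ s = 0 := by
  refine ⟨fun h => ?_, fun h => by rw [signedPow, h, mul_zero]⟩
  by_contra hs
  exact mul_ne_zero (Real.rpow_pos_of_pos (abs_pos.2 hs) _).ne' hs h

lemma signedPow_mul (p r s : ℝ) : signedPow p (r * s) = signedPow p r * signedPow p s := by
  simp only [signedPow, abs_mul, Real.mul_rpow (abs_nonneg r) (abs_nonneg s)]
  ring

lemma signedPow_of_pos (hs : 0 < s) : signedPow p s = s ^ (p - 1) := by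
  rw [signedPow, abs_of_pos hs, ← Real.rpow_add_one hs.ne']
  ring_nf

lemma signedPow_sign (p s : ℝ) : signedPow p (SignType.sign s : ℝ) = SignType.sign s := by
  cases SignType.sign s <;> simp [signedPow]

lemma abs_signedPow (hs : s ≠ 0) : |signedPow p s| = |s| ^ (p - 1) := by
  rw [← signedPow_of_pos (abs_pos.2 hs), signedPow, signedPow, abs_mul, abs_abs,
    Real.abs_rpow_of_nonneg (abs_nonneg s), abs_abs]

lemma signedPow_mul_self (hp : p ≠ 0) (s : ℝ) : signedPow p s * s = |s| ^ p := by
  rcases eq_or_ne s 0 with rfl | hs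
  · rw [mul_zero, abs_zero, Real.zero_rpow hp]
  · rw [signedPow, mul_assoc, ← abs_mul_abs_self s, ← sq, ← Real.rpow_two,
      ← Real.rpow_add (abs_pos.2 hs), sub_add_cancel]

lemma abs_signedPow_rpow (h : p.HolderConjugate q) (s : ℝ) : |signedPow p s| ^ q = |s| ^ p := by
  rcases eq_or_ne s 0 with rfl | hs
  · rw [signedPow_eq_zero_iff.2 rfl, abs_zero, Real.zero_rpow h.ne_zero,
      Real.zero_rpow h.symm.ne_zero]
  · rw [abs_signedPow hs, ← Real.rpow_mul (abs_nonneg s), h.sub_one_mul_conj]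

lemma signedPow_signedPow (h : p.HolderConjugate q) (s : ℝ) :
    signedPow q (signedPow p s) = s := by
  rcases eq_or_ne s 0 with rfl | hs
  · simp only [signedPow_eq_zero_iff]
  · refine mul_right_cancel₀ (b := signedPow p s) (signedPow_eq_zero_iff.not.2 hs) ?_
    rw [signedPow_mul_self h.symm.ne_zero, abs_signedPow_rpow h, mul_comm,
      signedPow_mul_self h.ne_zero]

lemma hasDerivAt_abs_rpow_comp {f : ℝ → ℝ} {f' x : ℝ} (hp : 1 < p) (hf : HasDerivAt f f' x) :
    HasDerivAt (fun t => |f t| ^ p) (p * signedPow p (f x) * f') x :=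
  ((hasDerivAt_abs_rpow (f x) hp).comp x hf).congr_deriv (by rw [signedPow, mul_assoc p])

lemma continuous_signedPow (hp : 1 < p) : Continuous (signedPow p) := by
  have hp0 : p ≠ 0 := by positivity
  have hderiv : deriv (fun x : ℝ => ‖x‖ ^ p) = fun x => p * signedPow p x := by
    funext x
    simpa using (hasDerivAt_abs_rpow_comp hp (hasDerivAt_id x)).deriv
  have h := (contDiff_norm_rpow (E := ℝ) hp).continuous_deriv le_rfl
  rw [hderiv] at h
  simpa [hp0] using h.const_mul p⁻¹

lemma continuousAt_of_signedPow {v : ℝ → ℝ} {x : ℝ} (hp : 1 < p)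
    (h : ContinuousAt (fun t => signedPow p (v t)) x) : ContinuousAt v x := by
  have hpq := Real.HolderConjugate.conjExponent hp
  have := (continuous_signedPow hpq.symm.lt).continuousAt.comp h
  simpa only [Function.comp_def, signedPow_signedPow hpq] using this

end SignedPow

section HalfPeriod

variable {α β p : ℝ}

lemma pip_pos (hp : 1 < p) : 0 < pip p := by
  have hsin : 0 < Real.sin (π / p) :=
    Real.sin_pos_of_pos_of_lt_pi (by positivity) (div_lt_self Real.pi_pos hp)
  unfold pip
  positivity

lemma beta_inv_one_sub_inv (hp : p ≠ 0) : beta p⁻¹ (1 - p⁻¹) / p = pip p / 2 := by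
  rw [beta, pip, Real.Gamma_mul_Gamma_one_sub, add_sub_cancel, Real.Gamma_one, ← div_eq_mul_inv]
  field_simp

lemma betaPDFReal_nonneg (hα : 0 < α) (hβ : 0 < β) (x : ℝ) : 0 ≤ betaPDFReal α β x := by
  by_cases h : 0 < x ∧ x < 1
  · exact (betaPDFReal_pos h.1 h.2 hα hβ).le
  · rw [betaPDFReal, if_neg h]

lemma integrable_betaPDFReal (hα : 0 < α) (hβ : 0 < β) : Integrable (betaPDFReal α β) := by
  refine ⟨(measurable_betaPDFReal α β).aestronglyMeasurable, ?_⟩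
  rw [hasFiniteIntegral_iff_ofReal (ae_of_all _ (betaPDFReal_nonneg hα hβ))]
  exact (lintegral_betaPDF_eq_one hα hβ).trans_lt ENNReal.one_lt_top

lemma setIntegral_Ioi_betaPDFReal (hα : 0 < α) (hβ : 0 < β) :
    ∫ x in Ioi 0, betaPDFReal α β x = 1 := by
  have hzero (x : ℝ) (hx : x ∉ Ioi 0) : betaPDFReal α β x = 0 := if_neg fun h => hx h.1
  rw [setIntegral_eq_integral_of_forall_compl_eq_zero hzero,
    integral_eq_lintegral_of_nonneg_ae (ae_of_all _ (betaPDFReal_nonneg hα hβ))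
      (measurable_betaPDFReal α β).aestronglyMeasurable]
  exact congrArg ENNReal.toReal (lintegral_betaPDF_eq_one hα hβ)

lemma indicator_one_sub_rpow_eq (hp : 0 < p) (hβ : 0 < β) {x : ℝ} (hx : 0 < x) :
    (Ioo 0 1).indicator (fun t => (1 - t ^ p) ^ (β - 1)) x =
      beta p⁻¹ β / p * ((p * x ^ (p - 1)) • betaPDFReal p⁻¹ β (x ^ p)) := by
  by_cases hx1 : x < 1
  · have hxp : 0 < x ^ p ∧ x ^ p < 1 :=
      ⟨Real.rpow_pos_of_pos hx p, Real.rpow_lt_one hx.le hx1 hp⟩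
    have hjac : x ^ (p - 1) * (x ^ p) ^ (p⁻¹ - 1) = 1 := by
      rw [← Real.rpow_mul hx.le, ← Real.rpow_add hx, mul_sub, mul_inv_cancel₀ hp.ne', mul_one,
        sub_add_sub_cancel, sub_self, Real.rpow_zero]
    have hbeta := (beta_pos (inv_pos.2 hp) hβ).ne'
    have hcancel : beta p⁻¹ β / p * p * (1 / beta p⁻¹ β) = 1 := by
      rw [div_mul_cancel₀ _ hp.ne', mul_one_div_cancel hbeta]
    rw [indicator_of_mem (show x ∈ Ioo 0 1 from ⟨hx, hx1⟩), betaPDFReal, if_pos hxp, smul_eq_mul]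
    linear_combination -(1 - x ^ p) ^ (β - 1) * hjac -
      x ^ (p - 1) * (x ^ p) ^ (p⁻¹ - 1) * (1 - x ^ p) ^ (β - 1) * hcancel
  · have hxp : ¬(0 < x ^ p ∧ x ^ p < 1) := fun h =>
      (Real.one_le_rpow (not_lt.1 hx1) hp.le).not_gt h.2
    rw [indicator_of_notMem fun h => hx1 h.2, betaPDFReal, if_neg hxp, smul_zero, mul_zero]

lemma integrableOn_one_sub_rpow (hp : 0 < p) (hβ : 0 < β) :
    IntegrableOn (fun t : ℝ => (1 - t ^ p) ^ (β - 1)) (Ioo 0 1) := by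
  have hsubst := (integrableOn_Ioi_comp_rpow_iff _ hp.ne').2
    (integrable_betaPDFReal (inv_pos.2 hp) hβ).integrableOn
  rw [abs_of_pos hp] at hsubst
  have h : IntegrableOn ((Ioo 0 1).indicator fun t : ℝ => (1 - t ^ p) ^ (β - 1)) (Ioi 0) :=
    IntegrableOn.congr_fun (hsubst.const_mul (beta p⁻¹ β / p))
      (fun x hx => (indicator_one_sub_rpow_eq hp hβ hx).symm) measurableSet_Ioi
  rwa [IntegrableOn, integrable_indicator_iff measurableSet_Ioo, IntegrableOn,
    Measure.restrict_restrict measurableSet_Ioo, inter_eq_left.2 Ioo_subset_Ioi_self] at h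

lemma setIntegral_one_sub_rpow (hp : 0 < p) (hβ : 0 < β) :
    ∫ t in Ioo 0 1, (1 - t ^ p) ^ (β - 1) = beta p⁻¹ β / p := by
  have hsubst := integral_comp_rpow_Ioi_of_pos (g := betaPDFReal p⁻¹ β) hp
  calc ∫ t in Ioo 0 1, (1 - t ^ p) ^ (β - 1)
      = ∫ t in Ioi 0, (Ioo 0 1).indicator (fun t => (1 - t ^ p) ^ (β - 1)) t := by
        rw [setIntegral_indicator measurableSet_Ioo, inter_eq_right.2 Ioo_subset_Ioi_self]
    _ = ∫ x in Ioi 0, beta p⁻¹ β / p * ((p * x ^ (p - 1)) • betaPDFReal p⁻¹ β (x ^ p)) :=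
        setIntegral_congr_fun measurableSet_Ioi fun x hx => indicator_one_sub_rpow_eq hp hβ hx
    _ = beta p⁻¹ β / p := by
        rw [integral_const_mul, hsubst, setIntegral_Ioi_betaPDFReal (inv_pos.2 hp) hβ, mul_one]

end HalfPeriod

section Angle

/-- The derivative `(1 - |t|^p)^{-1/p}` of the inverse of `S_p` on `(-1, 1)`. The value `1`
elsewhere makes the primitive an order isomorphism of the whole line. -/
noncomputable def angleDensity (p t : ℝ) : ℝ :=
  if |t| < 1 then (1 - |t| ^ p) ^ (-p⁻¹) else 1

/-- The inverse of `S_p` on `[-1, 1]`, rescaled by `π / π_p` so as to take the values `±π / 2`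
at `±1`, and extended to the line. It is the angle, up to the sign of the cosine, which
corresponds to a point of the curve `|u|^p + |v|^p = 1` with first coordinate `u`. -/
noncomputable def angle (p u : ℝ) : ℝ := π / pip p * ∫ t in (0 : ℝ)..u, angleDensity p t

variable {p u : ℝ}

lemma one_sub_abs_rpow_pos (hp : 0 < p) (hu : |u| < 1) : 0 < 1 - |u| ^ p :=
  sub_pos.2 (Real.rpow_lt_one (abs_nonneg u) hu hp)

lemma one_le_angleDensity (hp : 0 < p) (t : ℝ) : 1 ≤ angleDensity p t := by
  unfold angleDensity
  split_ifs with ht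
  · exact Real.one_le_rpow_of_pos_of_le_one_of_nonpos (one_sub_abs_rpow_pos hp ht)
      (sub_le_self _ (Real.rpow_nonneg (abs_nonneg t) p)) (neg_nonpos.2 (inv_nonneg.2 hp.le))
  · exact le_rfl

lemma angleDensity_neg (p t : ℝ) : angleDensity p (-t) = angleDensity p t := by
  rw [angleDensity, angleDensity, abs_neg]

lemma measurable_angleDensity (p : ℝ) : Measurable (angleDensity p) :=
  Measurable.ite (measurableSet_lt (by fun_prop) (by fun_prop)) (by fun_prop) (by fun_prop)

lemma angleDensity_eqOn_Ioo (p : ℝ) :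
    EqOn (angleDensity p) (fun t => (1 - t ^ p) ^ ((1 - p⁻¹) - 1)) (Ioo 0 1) := fun t ht => by
  simp only [angleDensity, abs_of_pos ht.1, if_pos ht.2]
  ring_nf

lemma intervalIntegrable_angleDensity (hp : 1 < p) (a b : ℝ) :
    IntervalIntegrable (angleDensity p) volume a b := by
  refine intervalIntegrable_of_even (fun t => (angleDensity_neg p t).symm) fun x hx => ?_
  have h01 : IntervalIntegrable (angleDensity p) volume 0 1 := by
    rw [intervalIntegrable_iff_integrableOn_Ioo_of_le zero_le_one,
      integrableOn_congr_fun (angleDensity_eqOn_Ioo p) measurableSet_Ioo]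
    exact integrableOn_one_sub_rpow (by positivity) (sub_pos.2 (inv_lt_one_of_one_lt₀ hp))
  have h1 : IntervalIntegrable (angleDensity p) volume 1 (max 1 x) := by
    refine (intervalIntegrable_const (c := (1 : ℝ))).congr fun t ht => ?_
    rw [uIoc_of_le (le_max_left _ _)] at ht
    rw [angleDensity, if_neg (ht.1.le.trans (le_abs_self t)).not_gt]
  refine (h01.trans h1).mono_set ?_
  rw [uIcc_of_le hx.le, uIcc_of_le (zero_le_one.trans (le_max_left _ _))]
  exact Icc_subset_Icc_right (le_max_right _ _)

lemma integral_angleDensity (hp : 1 < p) : ∫ t in (0 : ℝ)..1, angleDensity p t = pip p / 2 := by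
  have hp0 : 0 < p := by positivity
  rw [intervalIntegral.integral_of_le zero_le_one, integral_Ioc_eq_integral_Ioo,
    setIntegral_congr_fun measurableSet_Ioo (angleDensity_eqOn_Ioo p),
    setIntegral_one_sub_rpow hp0 (sub_pos.2 (inv_lt_one_of_one_lt₀ hp)),
    beta_inv_one_sub_inv hp0.ne']

lemma angle_zero (p : ℝ) : angle p 0 = 0 := by
  rw [angle, intervalIntegral.integral_same, mul_zero]

lemma angle_one (hp : 1 < p) : angle p 1 = π / 2 := by
  have := pip_pos hp
  rw [angle, integral_angleDensity hp]
  field_simp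

lemma angle_neg (p u : ℝ) : angle p (-u) = -angle p u := by
  have h := intervalIntegral.integral_comp_neg (a := 0) (b := u) (angleDensity p)
  simp only [angleDensity_neg, neg_zero] at h
  rw [angle, angle, h, intervalIntegral.integral_symm, mul_neg]

lemma continuous_angle (hp : 1 < p) : Continuous (angle p) :=
  continuous_const.mul
    (intervalIntegral.continuous_primitive (intervalIntegrable_angleDensity hp) 0)

lemma mul_sub_le_angle_sub (hp : 1 < p) {a b : ℝ} (hab : a ≤ b) :
    π / pip p * (b - a) ≤ angle p b - angle p a := by
  have hint := intervalIntegrable_angleDensity hp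
  have h := intervalIntegral.integral_mono_on hab (intervalIntegrable_const (c := (1 : ℝ)))
    (hint a b) fun t _ => one_le_angleDensity (by positivity) t
  rw [intervalIntegral.integral_const, smul_eq_mul, mul_one] at h
  rw [angle, angle, ← mul_sub, intervalIntegral.integral_interval_sub_left (hint _ _) (hint _ _)]
  exact mul_le_mul_of_nonneg_left h (div_pos Real.pi_pos (pip_pos hp)).le

lemma strictMono_angle (hp : 1 < p) : StrictMono (angle p) := fun a b hab => by
  have hpos := mul_pos (div_pos Real.pi_pos (pip_pos hp)) (sub_pos.2 hab)
  linarith [mul_sub_le_angle_sub hp hab.le]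

lemma surjective_angle (hp : 1 < p) : Function.Surjective (angle p) := by
  have hc : 0 < π / pip p := div_pos Real.pi_pos (pip_pos hp)
  refine (continuous_angle hp).surjective ?_ ?_
  · refine tendsto_atTop_mono' _ ?_ (tendsto_id.const_mul_atTop hc)
    filter_upwards [eventually_ge_atTop 0] with b hb
    simpa [angle_zero] using mul_sub_le_angle_sub hp hb
  · refine tendsto_atBot_mono' _ ?_ (tendsto_id.const_mul_atBot hc)
    filter_upwards [eventually_le_atBot 0] with b hb
    simpa [angle_zero] using mul_sub_le_angle_sub hp hb

lemma abs_angle (hp : 1 < p) (u : ℝ) : |angle p u| = angle p |u| := by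
  have hmono := (strictMono_angle hp).monotone
  rcases le_total 0 u with hu | hu
  · rw [abs_of_nonneg hu, abs_of_nonneg (angle_zero p ▸ hmono hu)]
  · rw [abs_of_nonpos hu, abs_of_nonpos (angle_zero p ▸ hmono hu), angle_neg]

lemma abs_angle_lt_pi_div_two_iff (hp : 1 < p) : |angle p u| < π / 2 ↔ |u| < 1 := by
  rw [abs_angle hp, ← angle_one hp, (strictMono_angle hp).lt_iff_lt]

lemma abs_angle_eq_pi_div_two_iff (hp : 1 < p) : |angle p u| = π / 2 ↔ |u| = 1 := by
  rw [abs_angle hp, ← angle_one hp, (strictMono_angle hp).injective.eq_iff]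

lemma cos_angle_of_abs_eq_one (hp : 1 < p) (hu : |u| = 1) : Real.cos (angle p u) = 0 := by
  rw [← Real.cos_abs, (abs_angle_eq_pi_div_two_iff hp).2 hu, Real.cos_pi_div_two]

lemma hasDerivAt_angle (hp : 1 < p) (hu : |u| < 1) :
    HasDerivAt (angle p) (π / pip p * (1 - |u| ^ p) ^ (-p⁻¹)) u := by
  have hloc : angleDensity p =ᶠ[𝓝 u] fun t => (1 - |t| ^ p) ^ (-p⁻¹) := by
    filter_upwards [continuous_abs.continuousAt.eventually_lt continuousAt_const hu] with t ht
    rw [angleDensity, if_pos ht]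
  have hpow : ContinuousAt (fun t : ℝ => |t| ^ p) u :=
    continuous_abs.continuousAt.rpow_const (Or.inr (by positivity))
  have hcont : ContinuousAt (angleDensity p) u :=
    ((continuousAt_const.sub hpow).rpow_const
      (Or.inl (one_sub_abs_rpow_pos (by positivity) hu).ne')).congr hloc.symm
  have hint := intervalIntegral.integral_hasDerivAt_right
    (intervalIntegrable_angleDensity hp 0 u)
    (measurable_angleDensity p).stronglyMeasurable.stronglyMeasurableAtFilter hcont
  exact (hint.const_mul _).congr_deriv (congrArg _ hloc.self_of_nhds)

end Angle

section Sine

variable {p x : ℝ}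

/-- The map `angle p` as an order isomorphism of the line. -/
noncomputable def angleIso (hp : 1 < p) : ℝ ≃o ℝ :=
  (strictMono_angle hp).orderIsoOfSurjective _ (surjective_angle hp)

/-- The generalized sine `S_p`, of period `2 * pip p`. Reducing the phase modulo `2π` by
`arcsin ∘ sin` takes care of the reflections and translations that extend it from
`[0, π_p / 2]` to the line. -/
noncomputable def sinP (hp : 1 < p) (x : ℝ) : ℝ :=
  (angleIso hp).symm (Real.arcsin (Real.sin (π / pip p * x)))

/-- The derivative of the generalized sine, given by `|S_p|^p + |S_p'|^p = 1`. -/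
noncomputable def cosP (hp : 1 < p) (x : ℝ) : ℝ :=
  SignType.sign (Real.cos (π / pip p * x)) * (1 - |sinP hp x| ^ p) ^ p⁻¹

lemma angle_sinP (hp : 1 < p) (x : ℝ) :
    angle p (sinP hp x) = Real.arcsin (Real.sin (π / pip p * x)) :=
  (angleIso hp).apply_symm_apply _

lemma sinP_eq_zero_iff (hp : 1 < p) : sinP hp x = 0 ↔ Real.sin (π / pip p * x) = 0 := by
  rw [← (strictMono_angle hp).injective.eq_iff, angle_sinP, angle_zero, Real.arcsin_eq_zero_iff]

lemma abs_sinP_lt_one (hp : 1 < p) (hx : Real.cos (π / pip p * x) ≠ 0) : |sinP hp x| < 1 := by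
  obtain ⟨hne_one, hne_neg_one⟩ := not_or.1 (Real.cos_eq_zero_iff_sin_eq.not.1 hx)
  rw [← abs_angle_lt_pi_div_two_iff hp, angle_sinP, abs_lt, Real.neg_pi_div_two_lt_arcsin,
    Real.arcsin_lt_pi_div_two]
  exact ⟨(Real.neg_one_le_sin _).lt_of_ne' hne_neg_one, (Real.sin_le_one _).lt_of_ne hne_one⟩

lemma abs_sinP_eq_one (hp : 1 < p) (hx : Real.cos (π / pip p * x) = 0) : |sinP hp x| = 1 := by
  rw [← abs_angle_eq_pi_div_two_iff hp, angle_sinP]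
  rcases Real.cos_eq_zero_iff_sin_eq.1 hx with h | h <;>
    simp [h, abs_of_pos Real.pi_div_two_pos]

lemma continuous_sinP (hp : 1 < p) : Continuous (sinP hp) :=
  (angleIso hp).symm.continuous.comp (Real.continuous_arcsin.comp (by fun_prop))

lemma continuous_cosP (hp : 1 < p) : Continuous (cosP hp) := by
  have hp0 : 0 < p := by positivity
  have hradius : Continuous fun x => (1 - |sinP hp x| ^ p) ^ p⁻¹ :=
    (continuous_const.sub ((continuous_sinP hp).abs.rpow_const fun _ => Or.inr hp0.le)).rpow_const
      fun _ => Or.inr (inv_nonneg.2 hp0.le)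
  refine continuous_iff_continuousAt.2 fun x => continuousAt_sign_mul (by fun_prop)
    hradius.continuousAt fun hx => ?_
  rw [abs_sinP_eq_one hp hx, Real.one_rpow, sub_self, Real.zero_rpow (inv_ne_zero hp0.ne')]

lemma eventually_cos_mul_ne_zero {c : ℝ} (hc : c ≠ 0) (x : ℝ) :
    ∀ᶠ t in 𝓝[≠] x, Real.cos (c * t) ≠ 0 := by
  by_cases hx : Real.cos (c * x) = 0
  · have hderiv : HasDerivAt (fun t => Real.cos (c * t)) (-Real.sin (c * x) * (c * 1)) x :=
      ((hasDerivAt_id x).const_mul c).cos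
    refine hderiv.eventually_ne (mul_ne_zero (neg_ne_zero.2 fun hsin => ?_) (by simpa using hc))
    simpa [hx, hsin] using Real.sin_sq_add_cos_sq (c * x)
  · have hcont : Continuous fun t => Real.cos (c * t) := by fun_prop
    exact (hcont.continuousAt.eventually_ne hx).filter_mono nhdsWithin_le_nhds

lemma hasDerivAt_sinP_of_cos_ne_zero (hp : 1 < p) (hx : Real.cos (π / pip p * x) ≠ 0) :
    HasDerivAt (sinP hp) (cosP hp x) x := by
  have hlt := abs_sinP_lt_one hp hx
  have hpos := one_sub_abs_rpow_pos (zero_lt_one.trans hp) hlt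
  have hpip := pip_pos hp
  have hspeed : 0 < π / pip p := by positivity
  have hinv : HasDerivAt (angleIso hp).symm (π / pip p * (1 - |sinP hp x| ^ p) ^ (-p⁻¹))⁻¹
      (Real.arcsin (Real.sin (π / pip p * x))) :=
    HasDerivAt.of_local_left_inverse (f := angle p) (angleIso hp).symm.continuous.continuousAt
      (hasDerivAt_angle hp hlt) (mul_pos hspeed (Real.rpow_pos_of_pos hpos _)).ne'
      (Eventually.of_forall (angleIso hp).apply_symm_apply)
  have hphase := (hasDerivAt_arcsin_sin hx).comp x ((hasDerivAt_id x).const_mul (π / pip p))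
  refine (hinv.comp x hphase).congr_deriv ?_
  rw [cosP, Real.rpow_neg hpos.le, mul_inv, inv_inv]
  field_simp

lemma signedPow_cosP (hp : 1 < p) (hx : Real.cos (π / pip p * x) ≠ 0) :
    signedPow p (cosP hp x) =
      SignType.sign (Real.cos (π / pip p * x)) * (1 - |sinP hp x| ^ p) ^ (1 - p⁻¹) := by
  have hp0 : 0 < p := by positivity
  have hpos := one_sub_abs_rpow_pos hp0 (abs_sinP_lt_one hp hx)
  rw [cosP, signedPow_mul, signedPow_sign, signedPow_of_pos (Real.rpow_pos_of_pos hpos _),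
    ← Real.rpow_mul hpos.le, mul_sub_one, inv_mul_cancel₀ hp0.ne']

lemma hasDerivAt_signedPow_cosP_of_cos_ne_zero (hp : 1 < p)
    (hx : Real.cos (π / pip p * x) ≠ 0) :
    HasDerivAt (fun t => signedPow p (cosP hp t)) (-(p - 1) * signedPow p (sinP hp x)) x := by
  have hp0 : 0 < p := by positivity
  have hpos := one_sub_abs_rpow_pos hp0 (abs_sinP_lt_one hp hx)
  have hcont : Continuous fun t => Real.cos (π / pip p * t) := by fun_prop
  have hloc : (fun t => signedPow p (cosP hp t)) =ᶠ[𝓝 x] fun t =>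
      SignType.sign (Real.cos (π / pip p * x)) * (1 - |sinP hp t| ^ p) ^ (1 - p⁻¹) := by
    filter_upwards [hcont.continuousAt.eventually_ne hx,
      eventually_sign_eq hcont.continuousAt hx] with t ht hsign
    rw [signedPow_cosP hp ht, hsign]
  have hpow := ((hasDerivAt_abs_rpow_comp hp
    (hasDerivAt_sinP_of_cos_ne_zero hp hx)).const_sub 1).rpow_const (p := 1 - p⁻¹)
      (Or.inl hpos.ne')
  have hcancel : (1 - |sinP hp x| ^ p) ^ p⁻¹ * (1 - |sinP hp x| ^ p) ^ (1 - p⁻¹ - 1) = 1 := by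
    rw [← Real.rpow_add hpos, add_sub_assoc', add_sub_cancel, sub_self, Real.rpow_zero]
  refine ((hpow.const_mul _).congr_of_eventuallyEq hloc).congr_deriv ?_
  rw [cosP]
  calc _ = -(p * (1 - p⁻¹)) * signedPow p (sinP hp x) *
        ((SignType.sign (Real.cos (π / pip p * x)) : ℝ) *
          SignType.sign (Real.cos (π / pip p * x))) *
        ((1 - |sinP hp x| ^ p) ^ p⁻¹ * (1 - |sinP hp x| ^ p) ^ (1 - p⁻¹ - 1)) := by ring
    _ = -(p - 1) * signedPow p (sinP hp x) := by
      rw [sign_mul_sign_self hx, hcancel, mul_one_sub, mul_inv_cancel₀ hp0.ne', mul_one, mul_one]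

lemma hasDerivAt_sinP (hp : 1 < p) (x : ℝ) : HasDerivAt (sinP hp) (cosP hp x) x :=
  hasDerivAt_of_eventually_ne
    ((eventually_cos_mul_ne_zero (div_pos Real.pi_pos (pip_pos hp)).ne' x).mono fun _ ht =>
      hasDerivAt_sinP_of_cos_ne_zero hp ht)
    (continuous_sinP hp).continuousAt (continuous_cosP hp).continuousAt

lemma hasDerivAt_signedPow_cosP (hp : 1 < p) (x : ℝ) :
    HasDerivAt (fun t => signedPow p (cosP hp t)) (-(p - 1) * signedPow p (sinP hp x)) x :=
  hasDerivAt_of_eventually_ne (g := fun t => -(p - 1) * signedPow p (sinP hp t))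
    ((eventually_cos_mul_ne_zero (div_pos Real.pi_pos (pip_pos hp)).ne' x).mono fun _ ht =>
      hasDerivAt_signedPow_cosP_of_cos_ne_zero hp ht)
    ((continuous_signedPow hp).comp (continuous_cosP hp)).continuousAt
    (continuous_const.mul ((continuous_signedPow hp).comp (continuous_sinP hp))).continuousAt

end Sine

section FreeSolution

/-- `y` solves `-((y')^{(p-1)})' = (p-1) μ y^{(p-1)}` at every point of `s`. The derivative `yd`
is kept as an argument because the equation differentiates its power once more. -/
structure IsFreeSolution (p μ : ℝ) (s : Set ℝ) (y yd : ℝ → ℝ) : Prop where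
  hasDerivAt : ∀ x ∈ s, HasDerivAt y (yd x) x
  hasDerivAt_signedPow : ∀ x ∈ s,
    HasDerivAt (fun t => signedPow p (yd t)) (-(p - 1) * μ * signedPow p (y x)) x

lemma isFreeSolution_sinP {p : ℝ} (hp : 1 < p) (s : Set ℝ) :
    IsFreeSolution p 1 s (sinP hp) (cosP hp) where
  hasDerivAt x _ := hasDerivAt_sinP hp x
  hasDerivAt_signedPow x _ := by simpa only [mul_one] using hasDerivAt_signedPow_cosP hp x

namespace IsFreeSolution

variable {p μ a b x : ℝ} {s : Set ℝ} {y yd : ℝ → ℝ}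

lemma mono (h : IsFreeSolution p μ s y yd) {t : Set ℝ} (hts : t ⊆ s) :
    IsFreeSolution p μ t y yd :=
  ⟨fun x hx => h.hasDerivAt x (hts hx), fun x hx => h.hasDerivAt_signedPow x (hts hx)⟩

lemma const_mul (h : IsFreeSolution p μ s y yd) (c : ℝ) :
    IsFreeSolution p μ s (fun x => c * y x) (fun x => c * yd x) where
  hasDerivAt x hx := (h.hasDerivAt x hx).const_mul c
  hasDerivAt_signedPow x hx := by
    simpa only [signedPow_mul, mul_left_comm] using
      (h.hasDerivAt_signedPow x hx).const_mul (signedPow p c)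

lemma comp_affine (h : IsFreeSolution p μ s y yd) {k : ℝ} (hk : 0 < k) (d : ℝ) :
    IsFreeSolution p (k ^ p * μ) ((fun x => k * x + d) ⁻¹' s) (fun x => y (k * x + d))
      (fun x => k * yd (k * x + d)) := by
  have haffine (x : ℝ) : HasDerivAt (fun t => k * t + d) k x := by
    simpa using ((hasDerivAt_id x).const_mul k).add_const d
  refine ⟨fun x hx => ((h.hasDerivAt _ hx).comp x (haffine x)).congr_deriv (mul_comm _ _),
    fun x hx => ?_⟩
  have hpow := ((h.hasDerivAt_signedPow _ hx).comp x (haffine x)).const_mul (signedPow p k)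
  simp only [signedPow_mul p k]
  refine hpow.congr_deriv ?_
  rw [signedPow_of_pos hk, Real.rpow_sub_one hk.ne']
  field_simp

lemma continuousAt_deriv (h : IsFreeSolution p μ s y yd) (hp : 1 < p) (hx : x ∈ s) :
    ContinuousAt yd x :=
  continuousAt_of_signedPow hp (h.hasDerivAt_signedPow x hx).continuousAt

lemma eventually_deriv_ne_zero (h : IsFreeSolution p μ s y yd) (hp : 1 < p) (hμ : μ ≠ 0)
    (hx : x ∈ s) (hne : yd x = 0 → y x ≠ 0) : ∀ᶠ t in 𝓝[≠] x, yd t ≠ 0 := by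
  by_cases hyd : yd x = 0
  · have hderiv : -(p - 1) * μ * signedPow p (y x) ≠ 0 :=
      mul_ne_zero (mul_ne_zero (neg_ne_zero.2 (sub_pos.2 hp).ne') hμ)
        (signedPow_eq_zero_iff.not.2 (hne hyd))
    exact ((h.hasDerivAt_signedPow x hx).eventually_ne hderiv).mono fun t ht =>
      signedPow_eq_zero_iff.not.1 ht
  · exact ((h.continuousAt_deriv hp hx).eventually_ne hyd).filter_mono nhdsWithin_le_nhds

lemma hasDerivAt_energy (h : IsFreeSolution p μ s y yd) (hp : 1 < p) (hx : x ∈ s) :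
    HasDerivAt (fun t => |yd t| ^ p + μ * |y t| ^ p) 0 x := by
  have hpq := Real.HolderConjugate.conjExponent hp
  have hkinetic := hasDerivAt_abs_rpow_comp hpq.symm.lt (h.hasDerivAt_signedPow x hx)
  simp only [abs_signedPow_rpow hpq, signedPow_signedPow hpq] at hkinetic
  have hpotential := (hasDerivAt_abs_rpow_comp hp (h.hasDerivAt x hx)).const_mul μ
  refine (hkinetic.add hpotential).congr_deriv ?_
  linear_combination -yd x * μ * signedPow p (y x) * hpq.sub_one_mul_conj

lemma energy_eq (h : IsFreeSolution p μ (Icc a b) y yd) (hp : 1 < p) (hx : x ∈ Icc a b) :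
    |yd x| ^ p + μ * |y x| ^ p = |yd a| ^ p + μ * |y a| ^ p :=
  constant_of_has_deriv_right_zero
    (fun _ ht => (h.hasDerivAt_energy hp ht).continuousAt.continuousWithinAt)
    (fun _ ht => (h.hasDerivAt_energy hp (Ico_subset_Icc_self ht)).hasDerivWithinAt) x hx

lemma eq_zero_of_left (h : IsFreeSolution p μ (Icc a b) y yd) (hp : 1 < p) (hμ : 0 < μ)
    (hya : y a = 0) (hyda : yd a = 0) (hx : x ∈ Icc a b) : y x = 0 := by
  have hp0 : p ≠ 0 := by positivity
  have henergy := h.energy_eq hp hx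
  rw [hya, hyda, abs_zero, Real.zero_rpow hp0, mul_zero, add_zero] at henergy
  have hpot : μ * |y x| ^ p = 0 :=
    ((add_eq_zero_iff_of_nonneg (by positivity) (by positivity)).1 henergy).2
  exact abs_eq_zero.1 ((Real.rpow_eq_zero (abs_nonneg _) hp0).1
    ((mul_eq_zero.1 hpot).resolve_left hμ.ne'))

lemma monotoneOn_signedPow_deriv_mul (h : IsFreeSolution p μ (Icc a b) y yd) (hp : 1 < p)
    (hμ : μ ≤ 0) : MonotoneOn (fun t => signedPow p (yd t) * y t) (Icc a b) := by
  have hp0 : p ≠ 0 := by positivity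
  have hderiv (x) (hx : x ∈ Icc a b) := (h.hasDerivAt_signedPow x hx).mul (h.hasDerivAt x hx)
  refine monotoneOn_of_hasDerivWithinAt_nonneg (convex_Icc a b)
    (fun x hx => (hderiv x hx).continuousAt.continuousWithinAt)
    (fun x hx => (hderiv x (interior_subset hx)).hasDerivWithinAt) fun x _ => ?_
  rw [mul_assoc, signedPow_mul_self hp0, signedPow_mul_self hp0]
  have hcoeff : 0 ≤ -(p - 1) * μ := mul_nonneg_of_nonpos_of_nonpos (by linarith) hμ
  positivity

lemma eq_zero_of_nonpos (h : IsFreeSolution p μ (Icc a b) y yd) (hp : 1 < p) (hμ : μ ≤ 0)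
    (hya : y a = 0) (hyb : y b = 0) (hx : x ∈ Icc a b) : y x = 0 := by
  have hmono := h.monotoneOn_signedPow_deriv_mul hp hμ
  have hprod (t) (ht : t ∈ Icc a b) : yd t * y t = 0 := by
    have hab := ht.1.trans ht.2
    have hlow := hmono (left_mem_Icc.2 hab) ht ht.1
    have hupp := hmono ht (right_mem_Icc.2 hab) ht.2
    simp only [hya, hyb, mul_zero] at hlow hupp
    simpa only [mul_eq_zero, signedPow_eq_zero_iff] using le_antisymm hupp hlow
  have hsq (t) (ht : t ∈ Icc a b) : HasDerivAt (fun t => y t * y t) 0 t :=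
    ((h.hasDerivAt t ht).mul (h.hasDerivAt t ht)).congr_deriv
      (by rw [mul_comm (y t), hprod t ht, add_zero])
  have hconst := constant_of_has_deriv_right_zero
    (fun t ht => (hsq t ht).continuousAt.continuousWithinAt)
    (fun t ht => (hsq t (Ico_subset_Icc_self ht)).hasDerivWithinAt) x hx
  rwa [hya, mul_zero, mul_self_eq_zero] at hconst

end IsFreeSolution

end FreeSolution

section Rotation

/-- The homeomorphism from the curve `|u|^p + |v|^p = 1` to the unit circle that turns the flow
`u' = v` of the equation with `μ = 1` into a uniform rotation. -/
noncomputable def circlePoint (p u v : ℝ) : ℂ :=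
  (SignType.sign v * Real.cos (angle p u) : ℝ) + (Real.sin (angle p u) : ℝ) * Complex.I

variable {p a b x : ℝ} {u v : ℝ → ℝ}

lemma circlePoint_zero_one (p : ℝ) : circlePoint p 0 1 = 1 := by
  simp [circlePoint, angle_zero]

lemma circlePoint_im (p u v : ℝ) : (circlePoint p u v).im = Real.sin (angle p u) := by
  simp only [circlePoint, Complex.add_im, Complex.mul_im, Complex.ofReal_im, Complex.ofReal_re,
    Complex.I_im, Complex.I_re, mul_one, mul_zero, add_zero, zero_add]

lemma continuousAt_circlePoint (hp : 1 < p) (hu : ContinuousAt u x) (hv : ContinuousAt v x)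
    (hnorm : |u x| ^ p + |v x| ^ p = 1) :
    ContinuousAt (fun t => circlePoint p (u t) (v t)) x := by
  have hp0 : p ≠ 0 := by positivity
  have hangle : ContinuousAt (fun t => angle p (u t)) x :=
    (continuous_angle hp).continuousAt.comp hu
  have hre := continuousAt_sign_mul hv (Real.continuous_cos.continuousAt.comp hangle) fun hv0 => by
    rw [hv0, abs_zero, Real.zero_rpow hp0, add_zero] at hnorm
    rw [← Real.one_rpow p, Real.rpow_left_inj (abs_nonneg _) zero_le_one hp0] at hnorm
    exact cos_angle_of_abs_eq_one hp hnorm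
  have him := Real.continuous_sin.continuousAt.comp hangle
  exact (Complex.continuous_ofReal.continuousAt.comp hre).add
    ((Complex.continuous_ofReal.continuousAt.comp him).mul continuousAt_const)

lemma hasDerivAt_angle_comp (hp : 1 < p) (hu : HasDerivAt u (v x) x)
    (hnorm : |u x| ^ p + |v x| ^ p = 1) (hv : v x ≠ 0) :
    HasDerivAt (fun t => angle p (u t)) (π / pip p * SignType.sign (v x)) x := by
  have hp0 : 0 < p := by positivity
  have hvp : 1 - |u x| ^ p = |v x| ^ p := sub_eq_of_eq_add' hnorm.symm
  have hlt : |u x| < 1 := by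
    rw [← Real.rpow_lt_rpow_iff (abs_nonneg _) zero_le_one hp0, Real.one_rpow, ← sub_pos, hvp]
    positivity
  refine ((hasDerivAt_angle hp hlt).comp x hu).congr_deriv ?_
  rw [hvp, ← Real.rpow_mul (abs_nonneg _), mul_neg, mul_inv_cancel₀ hp0.ne', Real.rpow_neg_one,
    mul_assoc, inv_abs_mul_self hv]

lemma hasDerivAt_circlePoint (hp : 1 < p) (hu : HasDerivAt u (v x) x) (hvx : ContinuousAt v x)
    (hnorm : |u x| ^ p + |v x| ^ p = 1) (hv : v x ≠ 0) :
    HasDerivAt (fun t => circlePoint p (u t) (v t))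
      ((π / pip p : ℝ) * Complex.I * circlePoint p (u x) (v x)) x := by
  have hangle := hasDerivAt_angle_comp hp hu hnorm hv
  have hre := (hangle.cos.const_mul (SignType.sign (v x) : ℝ)).ofReal_comp
  have him := hangle.sin.ofReal_comp.mul_const Complex.I
  have hloc : (fun t => circlePoint p (u t) (v t)) =ᶠ[𝓝 x] fun t =>
      ((SignType.sign (v x) * Real.cos (angle p (u t)) : ℝ) : ℂ) +
        (Real.sin (angle p (u t)) : ℝ) * Complex.I := by
    filter_upwards [eventually_sign_eq hvx hv] with t ht
    rw [circlePoint, ht]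
  refine ((hre.add him).congr_of_eventuallyEq hloc).congr_deriv ?_
  have hsign : ((SignType.sign (v x) : ℝ) : ℂ) * (SignType.sign (v x) : ℝ) = 1 :=
    mod_cast sign_mul_sign_self hv
  rw [circlePoint]
  simp only [Complex.ofReal_mul, Complex.ofReal_neg]
  linear_combination
    -((π / pip p : ℝ) * Real.sin (angle p (u x)) : ℂ) * (hsign + Complex.I_mul_I)

namespace IsFreeSolution

lemma hasDerivWithinAt_circlePoint (h : IsFreeSolution p 1 (Icc a b) u v) (hp : 1 < p)
    (hnorm : ∀ t ∈ Icc a b, |u t| ^ p + |v t| ^ p = 1) (hx : x ∈ Ico a b) :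
    HasDerivWithinAt (fun t => circlePoint p (u t) (v t))
      ((π / pip p : ℝ) * Complex.I * circlePoint p (u x) (v x)) (Ici x) x := by
  have hxIcc := Ico_subset_Icc_self hx
  have hp0 : p ≠ 0 := by positivity
  have hcont := continuousAt_circlePoint hp (h.hasDerivAt x hxIcc).continuousAt
    (h.continuousAt_deriv hp hxIcc) (hnorm x hxIcc)
  have hne : v x = 0 → u x ≠ 0 := fun hv hu => by
    simpa [hu, hv, Real.zero_rpow hp0] using hnorm x hxIcc
  refine hasDerivWithinAt_Ici_of_eventually_gt (x := x)
    (g := fun t => (π / pip p : ℝ) * Complex.I * circlePoint p (u t) (v t)) ?_ hcont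
    (continuousAt_const.mul hcont)
  filter_upwards [(h.eventually_deriv_ne_zero hp one_ne_zero hxIcc hne).filter_mono
    (nhdsGT_le_nhdsNE x), Ioo_mem_nhdsGT hx.2] with t hvt ht
  have htIcc : t ∈ Icc a b := ⟨hx.1.trans ht.1.le, ht.2.le⟩
  exact hasDerivAt_circlePoint hp (h.hasDerivAt t htIcc) (h.continuousAt_deriv hp htIcc)
    (hnorm t htIcc) hvt

lemma sin_angle_eq (h : IsFreeSolution p 1 (Icc a b) u v) (hp : 1 < p) (hua : u a = 0)
    (hva : v a = 1) (hx : x ∈ Icc a b) :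
    Real.sin (angle p (u x)) = Real.sin (π / pip p * (x - a)) := by
  have hp0 : p ≠ 0 := by positivity
  have hnorm (t) (ht : t ∈ Icc a b) : |u t| ^ p + |v t| ^ p = 1 := by
    simpa [hua, hva, Real.zero_rpow hp0, add_comm] using h.energy_eq hp ht
  have hexp := eq_exp_mul_of_hasDerivWithinAt
    (fun t ht => (continuousAt_circlePoint hp (h.hasDerivAt t ht).continuousAt
      (h.continuousAt_deriv hp ht) (hnorm t ht)).continuousWithinAt)
    (fun t ht => h.hasDerivWithinAt_circlePoint hp hnorm ht) x hx
  rw [hua, hva, circlePoint_zero_one, mul_one, mul_right_comm, ← Complex.ofReal_sub,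
    ← Complex.ofReal_mul] at hexp
  rw [← circlePoint_im p (u x) (v x), hexp, Complex.exp_ofReal_mul_I_im]

lemma exists_sub_eq_natCast_mul_pip (h : IsFreeSolution p 1 (Icc a b) u v) (hp : 1 < p)
    (hab : a < b) (hua : u a = 0) (hva : v a = 1) (hub : u b = 0) :
    ∃ n : ℕ, 1 ≤ n ∧ b - a = n * pip p := by
  have hpip := pip_pos hp
  have hsin := h.sin_angle_eq hp hua hva (right_mem_Icc.2 hab.le)
  rw [hub, angle_zero, Real.sin_zero, eq_comm, Real.sin_eq_zero_iff] at hsin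
  obtain ⟨m, hm⟩ := hsin
  have hlen : b - a = m * pip p := by
    field_simp at hm
    linarith
  have hmpos : 0 < m := by
    have := pos_of_mul_pos_left (hlen ▸ sub_pos.2 hab) hpip.le
    exact_mod_cast this
  lift m to ℕ using hmpos.le
  exact ⟨m, by exact_mod_cast hmpos, by exact_mod_cast hlen⟩

lemma exists_eq_natCast_mul_pip_div_rpow {μ : ℝ} {y yd : ℝ → ℝ}
    (h : IsFreeSolution p μ (Icc a b) y yd) (hp : 1 < p) (hab : a < b) (hμ : 0 < μ)
    (hya : y a = 0) (hyda : yd a ≠ 0) (hyb : y b = 0) :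
    ∃ n : ℕ, 1 ≤ n ∧ μ = (n * pip p / (b - a)) ^ p := by
  set k := μ ^ p⁻¹
  have hk0 : 0 < k := Real.rpow_pos_of_pos hμ _
  have hkp : k ^ p = μ := Real.rpow_inv_rpow hμ.le (by positivity)
  have hscaled := (h.comp_affine (inv_pos.2 hk0) a).const_mul (k⁻¹ * yd a)⁻¹
  rw [Real.inv_rpow hk0.le, hkp, inv_mul_cancel₀ hμ.ne'] at hscaled
  have hend : k⁻¹ * (k * (b - a)) + a = b := by
    rw [inv_mul_cancel_left₀ hk0.ne', sub_add_cancel]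
  have hsub : Icc 0 (k * (b - a)) ⊆ (fun x => k⁻¹ * x + a) ⁻¹' Icc a b := fun x hx => by
    refine ⟨le_add_of_nonneg_left (mul_nonneg (inv_pos.2 hk0).le hx.1), ?_⟩
    calc k⁻¹ * x + a ≤ k⁻¹ * (k * (b - a)) + a := by gcongr; exact hx.2
      _ = b := hend
  obtain ⟨n, hn, hlen⟩ := (hscaled.mono hsub).exists_sub_eq_natCast_mul_pip hp
    (mul_pos hk0 (sub_pos.2 hab)) (by simp [hya])
    (by rw [mul_zero, zero_add, inv_mul_cancel₀ (by positivity)]) (by simp [hend, hyb])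
  refine ⟨n, hn, ?_⟩
  rw [← hlen, sub_zero, mul_div_cancel_right₀ _ (sub_pos.2 hab).ne', hkp]

end IsFreeSolution

end Rotation

section Eigenvalue

variable {p a b μ : ℝ}

lemma isDirichletEigenvalue_zero_iff : IsDirichletEigenvalue p (fun _ => 0) a b μ ↔
    ∃ y yd, IsFreeSolution p μ (Icc a b) y yd ∧ (∃ x ∈ Icc a b, y x ≠ 0) ∧ y a = 0 ∧ y b = 0 := by
  simp only [IsDirichletEigenvalue, sub_zero]
  exact ⟨fun ⟨y, yd, hne, hy, hyd, hbd⟩ => ⟨y, yd, ⟨hy, hyd⟩, hne, hbd⟩,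
    fun ⟨y, yd, h, hne, hbd⟩ => ⟨y, yd, hne, h.hasDerivAt, h.hasDerivAt_signedPow, hbd⟩⟩

lemma isDirichletEigenvalue_natCast_mul_pip_div_rpow (hp : 1 < p) (hab : a < b) {n : ℕ}
    (hn : 1 ≤ n) : IsDirichletEigenvalue p (fun _ => 0) a b ((n * pip p / (b - a)) ^ p) := by
  have hpip := pip_pos hp
  have hlen : 0 < b - a := sub_pos.2 hab
  have hn_one : (1 : ℝ) ≤ n := by exact_mod_cast hn
  set k := n * pip p / (b - a) with hk
  have hkpos : 0 < k := by positivity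
  have hsol := (isFreeSolution_sinP hp univ).comp_affine hkpos (-(k * a))
  rw [mul_one] at hsol
  have hphase : π / pip p * (k * b + -(k * a)) = n * π := by
    rw [hk]
    field_simp
    ring
  have hcrest : π / pip p * (k * (a + (b - a) / (2 * n)) + -(k * a)) = π / 2 := by
    rw [hk]
    field_simp
    ring
  refine isDirichletEigenvalue_zero_iff.2 ⟨_, _, hsol.mono (subset_univ _),
    ⟨a + (b - a) / (2 * n), ⟨by linarith [show 0 ≤ (b - a) / (2 * n) by positivity], ?_⟩, ?_⟩,
    ?_, ?_⟩
  · linarith [div_le_self hlen.le (show 1 ≤ 2 * (n : ℝ) by linarith)]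
  · rw [Ne, sinP_eq_zero_iff, hcrest, Real.sin_pi_div_two]
    exact one_ne_zero
  · rw [sinP_eq_zero_iff, add_neg_cancel, mul_zero, Real.sin_zero]
  · rw [sinP_eq_zero_iff, hphase, Real.sin_nat_mul_pi]

lemma exists_eq_natCast_mul_pip_div_rpow_of_isDirichletEigenvalue (hp : 1 < p) (hab : a < b)
    (h : IsDirichletEigenvalue p (fun _ => 0) a b μ) :
    ∃ n : ℕ, 1 ≤ n ∧ μ = (n * pip p / (b - a)) ^ p := by
  obtain ⟨y, yd, hsol, ⟨x, hx, hyx⟩, hya, hyb⟩ := isDirichletEigenvalue_zero_iff.1 h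
  have hμ : 0 < μ := not_le.1 fun hμ => hyx (hsol.eq_zero_of_nonpos hp hμ hya hyb hx)
  exact hsol.exists_eq_natCast_mul_pip_div_rpow hp hab hμ hya
    (fun hyda => hyx (hsol.eq_zero_of_left hp hμ hya hyda hx)) hyb

lemma mul_rpow_div_mul_rpow {r s c : ℝ} (hr : 0 ≤ r) (hs : 0 ≤ s) (hc : 0 < c) :
    (r * c) ^ p / (s * c) ^ p = r ^ p / s ^ p := by
  rw [Real.mul_rpow hr hc.le, Real.mul_rpow hs hc.le,
    mul_div_mul_right _ _ (Real.rpow_pos_of_pos hc p).ne']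

end Eigenvalue

end GeneralizedSine

open GeneralizedSine in
theorem eigenvalues_free_problem_general {p a b : ℝ} (hp : 1 < p) (hab : a < b) :
    (∀ μ : ℝ, IsDirichletEigenvalue p (fun _ => 0) a b μ ↔
      ∃ n : ℕ, 1 ≤ n ∧ μ = (n * pip p / (b - a)) ^ p) ∧
    (∀ n m : ℕ, 1 ≤ m →
      (n * pip p / (b - a)) ^ p / (m * pip p / (b - a)) ^ p = (n : ℝ) ^ p / (m : ℝ) ^ p) := by
  refine ⟨fun μ => ⟨exists_eq_natCast_mul_pip_div_rpow_of_isDirichletEigenvalue hp hab, ?_⟩,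
    fun n m _ => ?_⟩
  · rintro ⟨n, hn, rfl⟩
    exact isDirichletEigenvalue_natCast_mul_pip_div_rpow hp hab hn
  · rw [mul_div_assoc, mul_div_assoc]
    exact mul_rpow_div_mul_rpow n.cast_nonneg m.cast_nonneg
      (div_pos (pip_pos hp) (sub_pos.2 hab))

/-- for q ≡ 0 the Dirichlet eigenvalues are exactly (n π_p)^p, n ≥ 1,
and their ratios are n^p/m^p. -/
theorem eigenvalues_free_problem (p : ℝ) (hp : 1 < p) :
    (∀ μ : ℝ, IsDirichletEigenvalue p (fun _ => 0) 0 1 μ ↔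
      ∃ n : ℕ, 1 ≤ n ∧ μ = ((n : ℝ) * pip p) ^ p) ∧
    (∀ n m : ℕ, 1 ≤ n → 1 ≤ m →
      ((n : ℝ) * pip p) ^ p / ((m : ℝ) * pip p) ^ p = (n : ℝ) ^ p / (m : ℝ) ^ p) := by
  obtain ⟨hiff, hratio⟩ := eigenvalues_free_problem_general hp zero_lt_one
  exact ⟨by simpa using hiff, fun n m _ hm => by simpa using hratio n m hm⟩
end
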